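/- arXiv:1606.09052 — 6 statements merged into one kernel-verified Lean document; each statement's English description precedes it below -/
import Mathlib

section
/- Under these hypotheses the generators M_n = M_{1,n} satisfy the quantum current exchange relations: for all n ∈ ℤ and all integers p ≥ 1, [M_n, M_{n+p}]_q + [M_{n+p-1}, M_{n+1}]_q = 0, i.e. M_n·M_{n+p} − q·M_{n+p}·M_n + M_{n+p-1}·M_{n+1} − q·M_{n+1}·M_{n+p-1} = 0. -/
theorem qx_cancel {B : Type*} [Ring B] {F Q T G P : B} (h : F * Q = 1) (h' : P * G = 1)
    (hT : Q * T * P = 0) : T = 0 := by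
  have : T = F * (Q * T * P) * G := by
    calc T = (F * Q) * T * (P * G) := by rw [h, h']; simp
      _ = _ := by noncomm_ring
  rw [this, hT]; simp

theorem qx_core {K B : Type*} [CommRing K] [Ring B] [Algebra K B] (q w : K)
    (m y1 y2 F1 F2 F3 : B)
    (h1 : F1 * (1 - w • (F2 * y1)) = 1) (h1' : (1 - w • (F2 * y1)) * F1 = 1)
    (h2 : F2 * (1 - w • (F3 * y2)) = 1) (h2' : (1 - w • (F3 * y2)) * F2 = 1)
    (c1 : m * F2 = F2 * m) (c2 : m * y1 = q • (y1 * m))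
    (c3 : y1 * F3 = F3 * y1) (c4 : y1 * y2 = q • (y2 * y1)) :
    m * m - m * (F1 * m) - w • (F1 * m * (y1 * m))
      = q • (m * m - F1 * m * m - w • (y1 * m * (F1 * m))) := by
  have I0 : F2 * y1 - q • (y1 * F2) - (1 - q) • (F2 * y1 * F2) = 0 := by
    apply qx_cancel h2 h2'
    generalize hD : (1 - w • (F3 * y2)) = D at *
    have e1 : D * (F2 * y1 - q • (y1 * F2) - (1 - q) • (F2 * y1 * F2)) * D
        = (D * F2) * y1 * D - q • (D * y1 * (F2 * D)) - (1 - q) • ((D * F2) * y1 * (F2 * D)) := by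
      simp only [mul_sub, sub_mul, smul_mul_assoc, mul_smul_comm, mul_assoc]
    rw [e1, h2, h2', ← hD]
    have e2 : y1 * (F3 * y2) = q • (F3 * (y2 * y1)) := by
      rw [← mul_assoc, c3, mul_assoc, c4, mul_smul_comm]
    simp only [mul_sub, sub_mul, smul_mul_assoc, mul_smul_comm, mul_assoc, one_mul, mul_one, e2]
    module
  have hb : m * (F2 * y1) = q • (F2 * y1 * m) := by
    rw [← mul_assoc, c1, mul_assoc, c2, mul_smul_comm, mul_assoc]
  have I1 : (F2 * y1) * y1 = q • (y1 * (F2 * y1)) + (1 - q) • ((F2 * y1) * (F2 * y1)) := by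
    have : (F2 * y1 - q • (y1 * F2) - (1 - q) • (F2 * y1 * F2)) * y1 = 0 := by rw [I0, zero_mul]
    simp only [sub_mul, smul_mul_assoc, mul_assoc] at this
    simp only [mul_assoc]
    rw [← sub_eq_zero, ← this]; module
  generalize hbb : F2 * y1 = b at *
  have T : m - m * F1 - w • (F1 * m * y1) - q • (m - F1 * m - w • (y1 * m * F1)) = 0 := by
    apply qx_cancel h1 h1'
    generalize hQ : (1 - w • b) = Q at *
    have e1 : Q * (m - m * F1 - w • (F1 * m * y1) - q • (m - F1 * m - w • (y1 * m * F1))) * Q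
        = Q * m * Q - Q * m * (F1 * Q) - w • ((Q * F1) * m * y1 * Q)
          - q • (Q * m * Q - (Q * F1) * m * Q - w • (Q * y1 * m * (F1 * Q))) := by
      simp only [mul_sub, sub_mul, smul_mul_assoc, mul_smul_comm, mul_assoc]
    rw [e1, h1, h1', ← hQ]
    have d2 : b * (y1 * m) = q • (y1 * (b * m)) + (1 - q) • (b * (b * m)) := by
      rw [← mul_assoc, I1]; simp only [add_mul, smul_mul_assoc, mul_assoc]
    simp only [mul_sub, sub_mul, smul_mul_assoc, mul_smul_comm, mul_assoc, one_mul, mul_one, hb,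
      c2, d2]
    module
  have : (m - m * F1 - w • (F1 * m * y1) - q • (m - F1 * m - w • (y1 * m * F1))) * m = 0 := by
    rw [T, zero_mul]
  simp only [sub_mul, smul_mul_assoc, mul_assoc] at this
  rw [← sub_eq_zero, ← this]
  simp only [mul_assoc]

/-- inverse commutation -/
theorem qx_inv_right {K B : Type*} [CommRing K] [Ring B] [Algebra K B] {s t : K} (hst : s * t = 1)
    {x y yi : B} (h : x * y = s • (y * x)) (h1 : y * yi = 1) (h2 : yi * y = 1) :
    x * yi = t • (yi * x) := by
  have : yi * (x * y) * yi = s • (yi * (y * x) * yi) := by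
    rw [h]; simp only [smul_mul_assoc, mul_smul_comm]
  rw [mul_assoc, mul_assoc, h1, mul_one, ← mul_assoc yi y, h2, one_mul] at this
  rw [this, smul_smul, mul_comm t s, hst, one_smul]

theorem qx_inv_left {K B : Type*} [CommRing K] [Ring B] [Algebra K B] {s t : K} (hst : s * t = 1)
    {x y xi : B} (h : x * y = s • (y * x)) (h1 : x * xi = 1) (h2 : xi * x = 1) :
    xi * y = t • (y * xi) := by
  have : xi * (x * y) * xi = s • (xi * (y * x) * xi) := by
    rw [h]; simp only [smul_mul_assoc, mul_smul_comm]
  rw [← mul_assoc, h2, one_mul, mul_assoc, mul_assoc, h1, mul_one] at this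
  rw [this, smul_smul, mul_comm t s, hst, one_smul]

theorem qx_qd1 {K B : Type*} [CommRing K] [Ring B] [Algebra K B] (Qa Qai Qb Qbi : K)
    (hQa : Qa * Qai = 1) (hQb : Qb * Qbi = 1)
    (a ai b bi b' c ci c' ci' e g h : B)
    (ha : a * ai = 1) (ha' : ai * a = 1) (hb : b * bi = 1) (hb' : bi * b = 1)
    (hc : c * ci = 1) (hc' : ci * c = 1) (hd : c' * ci' = 1) (hd' : ci' * c' = 1)
    (k1 : c * c' = Qb • (c' * c)) (k2 : a * b = Qa • (b * a)) (k3 : a * c = c * a)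
    (k4 : a * c' = Qb • (c' * a)) (k5 : c' * b = b * c')
    (M1 : Qb • (c' * e) = c * c - a * g) (M2 : Qa • (b' * a) = b * b - h * c') :
    Qbi • (b * ai * ci * e) + -(h * bi * ai * c)
      = -(b * ci' * ci * g) + Qbi • (b' * bi * ci' * c) := by
  have hQb' : Qbi * Qb = 1 := by rw [mul_comm, hQb]
  have A : ai * (ci' * (ci * (c * c))) = ai * (ci * e) + Qb • (ci' * (ci * g)) := by
    have : c * c = Qb • (c' * e) + a * g := by rw [M1]; abel
    rw [this]
    have r1 : ci * c' = Qbi • (c' * ci) := qx_inv_left hQb k1 hc hc'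
    have r2 : a * ci = (1:K) • (ci * a) := qx_inv_right (s := 1) (by simp) (by simpa using k3) hc hc'
    have r3 : a * ci' = Qbi • (ci' * a) := qx_inv_right hQb k4 hd hd'
    have r4 : ci' * (ci * (c' * e)) = Qbi • (ci * e) := by
      rw [← mul_assoc ci, r1]
      simp only [smul_mul_assoc, mul_smul_comm, mul_assoc]
      rw [← mul_assoc ci', hd', one_mul]
    have r5 : ai * (ci' * (ci * (a * g))) = Qb • (ci' * (ci * g)) := by
      rw [one_smul] at r2
      have : ci' * (ci * (a * g)) = a * (Qb • (ci' * (ci * g))) := by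
        rw [mul_smul_comm, ← mul_assoc a, r3, smul_mul_assoc, smul_smul, hQb, one_smul,
          ← mul_assoc ci a, ← r2]
        simp only [mul_assoc]
      rw [this, ← mul_assoc, ha', one_mul]
    simp only [mul_add, mul_smul_comm, r4, r5, smul_smul, hQb, one_smul]
  have A' : ai * (ci' * c) = ai * (ci * e) + Qb • (ci' * (ci * g)) := by
    rw [← A, ← mul_assoc ci c c, hc', one_mul]
  have Bq : (b * b) * (bi * (ai * (ci' * c)))
      = b' * (bi * (ci' * c)) + Qb • (h * (bi * (ai * c))) := by
    have : b * b = Qa • (b' * a) + h * c' := by rw [M2]; abel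
    rw [this]
    have r1 : a * bi = Qai • (bi * a) := qx_inv_right hQa k2 hb hb'
    have r2 : c' * bi = (1:K) • (bi * c') :=
      qx_inv_right (s := 1) (by simp) (by simpa using k5) hb hb'
    have r3 : ai * c' = Qbi • (c' * ai) := qx_inv_left hQb k4 ha ha'
    rw [one_smul] at r2
    have r4 : a * (bi * (ai * (ci' * c))) = Qai • (bi * (ci' * c)) := by
      rw [← mul_assoc a, r1, smul_mul_assoc, mul_assoc, ← mul_assoc a ai, ha, one_mul]
    have r5 : c' * (bi * (ai * (ci' * c))) = Qb • (bi * (ai * c)) := by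
      have : c' * ai = Qb • (ai * c') := by rw [r3, smul_smul, hQb, one_smul]
      rw [← mul_assoc c', r2, mul_assoc, ← mul_assoc c' ai, this, smul_mul_assoc, mul_smul_comm,
        mul_assoc ai c', ← mul_assoc c' ci', hd, one_mul]
    rw [add_mul, smul_mul_assoc, mul_assoc b' a, mul_assoc h c', r4, r5]
    simp only [mul_smul_comm, smul_smul, hQa, one_smul]
  have B' : b * (ai * (ci' * c))
      = b' * (bi * (ci' * c)) + Qb • (h * (bi * (ai * c))) := by
    rw [← Bq, mul_assoc b b, ← mul_assoc b bi, hb, one_mul]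
  rw [A', mul_add, mul_smul_comm] at B'
  have := congrArg (fun x => Qbi • x) B'
  simp only [smul_add, smul_smul, hQb', one_smul] at this
  simp only [mul_assoc]
  rw [← sub_eq_zero] at this ⊢
  rw [← this]; abel

theorem qx_qd2 {K B : Type*} [CommRing K] [Ring B] [Algebra K B] (Qa Qai Qb Qbi q qi : K)
    (hQa : Qa * Qai = 1) (hQb : Qb * Qbi = 1) (hq : q * qi = 1) (hab : Qa = q * Qb)
    (a ai b bi b' bi' c c' ci' h hi BB : B)
    (ha : a * ai = 1) (hb : b * bi = 1) (hb' : bi * b = 1)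
    (he : b' * bi' = 1) (he' : bi' * b' = 1)
    (hd : c' * ci' = 1) (hh : h * hi = 1) (hh' : hi * h = 1)
    (k1 : c' * b' = Qb • (b' * c')) (k2 : a * b = Qa • (b * a)) (k3 : b * b' = Qa • (b' * b))
    (k4 : a * h = Qa • (h * a)) (k5 : c' * b = b * c') (k6 : h * b = b * h) :
    (-(BB * bi' * bi * c')) * (Qbi • (b' * bi * ci' * c))
      = ((qi * Qbi) • (BB * hi * bi * a)) * (-(h * bi * ai * c)) := by
  have r1 : c' * bi = (1:K) • (bi * c') :=
      qx_inv_right (s := 1) (by simp) (by simpa using k5) hb hb'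
  have r2 : bi * b' = Qai • (b' * bi) := qx_inv_left hQa k3 hb hb'
  have r3 : a * bi = Qai • (bi * a) := qx_inv_right hQa k2 hb hb'
  have r4 : h * bi = (1:K) • (bi * h) :=
      qx_inv_right (s := 1) (by simp) (by simpa using k6) hb hb'
  rw [one_smul] at r1 r4
  have L : bi' * (bi * (c' * (b' * (bi * (ci' * c))))) = (Qb * Qai) • (bi * (bi * c)) := by
    rw [← mul_assoc c' b', k1, smul_mul_assoc, mul_assoc b' c', ← mul_assoc c' bi, r1, mul_assoc bi c',
      ← mul_assoc c' ci', hd, one_mul, mul_smul_comm, ← mul_assoc bi b', r2, smul_mul_assoc,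
      mul_assoc b' bi, mul_smul_comm, mul_smul_comm, ← mul_assoc bi' b', he', one_mul, smul_smul]
  have Rr : hi * (bi * (a * (h * (bi * (ai * c))))) = bi * (bi * c) := by
    rw [← mul_assoc a h, k4, smul_mul_assoc, mul_assoc h a, ← mul_assoc a bi, r3, smul_mul_assoc,
      mul_assoc bi a, ← mul_assoc a ai, ha, one_mul]
    simp only [mul_smul_comm, smul_smul, hQa, one_smul]
    rw [← mul_assoc bi h, ← r4, mul_assoc h bi, ← mul_assoc hi h, hh', one_mul]
  have hs : Qb * Qai = qi := by
    have : Qb = qi * Qa := by rw [hab, ← mul_assoc, mul_comm qi q, hq, one_mul]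
    rw [this, mul_assoc, hQa, mul_one]
  simp only [neg_mul, mul_neg, smul_mul_assoc, mul_smul_comm, mul_assoc, L, Rr, hs]
  module

open PowerSeries in
theorem qx_F {R : Type*} [Ring R] (y : ℕ → R) (N : ℕ) : ∃ F : ℕ → PowerSeries R, F N = 1 ∧
    (∀ i < N, F i * (1 - X * (F (i + 1) * C (y i))) = 1 ∧
      (1 - X * (F (i + 1) * C (y i))) * F i = 1) ∧
    ∀ (u : R) (i : ℕ), (∀ j, i ≤ j → j < N → u * y j = y j * u) → C u * F i = F i * C u := by
  let G : ℕ → ℕ → PowerSeries R := fun d => Nat.rec (fun _ => 1)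
    (fun _ g i => invOfUnit (1 - X * (g (i + 1) * C (y i))) 1) d
  have G0 : ∀ i, G 0 i = 1 := fun _ => rfl
  have GS : ∀ d i, G (d + 1) i = invOfUnit (1 - X * (G d (i + 1) * C (y i))) 1 := fun _ _ => rfl
  have L : ∀ d i, G (d + 1) i * (1 - X * (G d (i + 1) * C (y i))) = 1 := fun d i => by
    rw [GS]; apply invOfUnit_mul; simp
  have L' : ∀ d i, (1 - X * (G d (i + 1) * C (y i))) * G (d + 1) i = 1 := fun d i => by
    rw [GS]; apply mul_invOfUnit; simp
  refine ⟨fun i => G (N - i) i, by simp [G0], ?_, ?_⟩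
  · intro i hi
    have : N - i = (N - (i + 1)) + 1 := by omega
    simp only [this]
    exact ⟨L _ _, L' _ _⟩
  · intro u i
    suffices H : ∀ d i, d = N - i → (∀ j, i ≤ j → j < N → u * y j = y j * u) →
        C u * G d i = G d i * C u from H _ i rfl
    intro d
    induction d with
    | zero => intro i _ _; simp [G0]
    | succ d ih =>
      intro i hd hu
      have h1 := ih (i + 1) (by omega) (fun j hj hj' => hu j (by omega) hj')
      have h2 : C u * C (y i) = C (y i) * C u := by
        rw [← map_mul, ← map_mul, hu i le_rfl (by omega)]
      have h3 : C u * (1 - X * (G d (i + 1) * C (y i)))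
          = (1 - X * (G d (i + 1) * C (y i))) * C u := by
        have h4 : C u * (X * (G d (i + 1) * C (y i))) = X * (G d (i + 1) * C (y i)) * C u := by
          rw [← mul_assoc, ← X_mul, mul_assoc X, ← mul_assoc (C u), h1, mul_assoc (G d _), h2]
          simp only [mul_assoc]
        rw [mul_sub, sub_mul, h4]; simp
      calc C u * G (d + 1) i
          = (G (d + 1) i * (1 - X * (G d (i + 1) * C (y i)))) * C u * G (d + 1) i := by
            rw [L, one_mul]
        _ = G (d + 1) i * (C u * (1 - X * (G d (i + 1) * C (y i)))) * G (d + 1) i := by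
            rw [h3, mul_assoc (G (d + 1) i)]
        _ = G (d + 1) i * C u * ((1 - X * (G d (i + 1) * C (y i))) * G (d + 1) i) := by
            simp only [mul_assoc]
        _ = _ := by rw [L', mul_one]

theorem qx_inv_unique {B : Type*} [Ring B] {F Q G P : B} (h : F * Q = 1)
    (h' : P * G = 1) (e : Q = P) : F = G := by
  subst e
  calc F = F * (Q * G) := by rw [h', mul_one]
    _ = G := by rw [← mul_assoc, h, one_mul]

open PowerSeries in
theorem qx_main {R : Type*} [Ring R] (q : R) (hq : ∀ x : R, q * x = x * q) (r : ℕ)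
    (Yo Ye : ℕ → ℤ → R) (m : ℤ → R)
    (e0 : ∀ n, Ye 0 n = 0) (etop : ∀ n, Ye (r + 1) n = 0)
    (qd1 : ∀ j n, j ≤ r → Yo j n + Ye (j + 1) n = Ye j (n + 1) + Yo j (n + 1))
    (qd2 : ∀ j n, j < r → Ye (j + 1) (n + 1) * Yo j (n + 1) = Yo (j + 1) n * Ye (j + 1) n)
    (hm : ∀ n, m (n + 1) = Yo 0 n * m n)
    (c1 : ∀ j n, j < r → m n * Yo (j + 1) n = Yo (j + 1) n * m n)
    (c2 : ∀ j n, j < r → m n * Ye (j + 1) n = Ye (j + 1) n * m n)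
    (c3 : ∀ n, m n * Yo 0 n = q * (Yo 0 n * m n))
    (c4 : ∀ n, Yo 0 n * Ye 1 n = q * (Ye 1 n * Yo 0 n))
    (c5 : ∀ j n, j < r → Yo 0 n * Yo (j + 1) n = Yo (j + 1) n * Yo 0 n)
    (c6 : ∀ j n, j + 1 < r → Yo 0 n * Ye (j + 2) n = Ye (j + 2) n * Yo 0 n)
    (hr : 1 ≤ r) (n : ℤ) (p : ℕ) :
    m n * m (n + (p + 1 : ℕ)) + m (n + p) * m (n + 1)
      = q * (m (n + (p + 1 : ℕ)) * m n + m (n + 1) * m (n + p)) := by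
  have hF := fun n => qx_F (fun i => if i % 2 = 0 then Ye (i / 2) n else Yo (i / 2) n) (2 * r + 2)
  choose F FN Finv Fcom using hF
  have ev : ∀ j : ℕ, (2 * j) % 2 = 0 := by omega
  have ev' : ∀ j : ℕ, (2 * j) / 2 = j := by omega
  have od : ∀ j : ℕ, ¬ (2 * j + 1) % 2 = 0 := by omega
  have od' : ∀ j : ℕ, (2 * j + 1) / 2 = j := by omega
  have E : ∀ n j, j ≤ r → F n (2 * j) * (1 - X * (F n (2 * j + 1) * C (Ye j n))) = 1 ∧
      (1 - X * (F n (2 * j + 1) * C (Ye j n))) * F n (2 * j) = 1 := by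
    intro n j hj
    have := Finv n (2 * j) (by omega)
    simpa only [ev, ev', if_true] using this
  have O : ∀ n j, j ≤ r → F n (2 * j + 1) * (1 - X * (F n (2 * j + 2) * C (Yo j n))) = 1 ∧
      (1 - X * (F n (2 * j + 2) * C (Yo j n))) * F n (2 * j + 1) = 1 := by
    intro n j hj
    have := Finv n (2 * j + 1) (by omega)
    simpa only [od, od', if_false] using this
  have Xc : ∀ (f g : PowerSeries R), f * (X * g) = X * (f * g) := by
    intro f g; rw [← mul_assoc, ← X_mul, mul_assoc]
  -- shift of the continued fraction
  have key : ∀ n d j, j + d = r →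
      F (n + 1) (2 * j) * F (n + 1) (2 * j + 1) = F n (2 * j + 1) * F n (2 * j + 2) := by
    intro n d
    induction d with
    | zero =>
      intro j hj
      have hj : j = r := by omega
      subst hj
      rw [FN, mul_one]
      obtain ⟨o1, o2⟩ := O n j le_rfl
      obtain ⟨o1', o2'⟩ := O (n + 1) j le_rfl
      obtain ⟨e1', e2'⟩ := E (n + 1) j le_rfl
      rw [FN, one_mul] at o1 o2 o1' o2'
      refine (qx_inv_unique o1 (P := 1 - X * C (Yo j (n + 1)) - X * C (Ye j (n + 1))) ?_ ?_).symm
      · have : (1 - X * C (Yo j (n + 1)) - X * C (Ye j (n + 1)))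
            = (1 - X * C (Yo j (n + 1))) *
              (1 - X * (F (n + 1) (2 * j + 1) * C (Ye j (n + 1)))) := by
          rw [mul_sub, mul_one, Xc, ← mul_assoc _ (F (n + 1) (2 * j + 1)), o2', one_mul]
        rw [this, mul_assoc, ← mul_assoc _ (F (n + 1) (2 * j)), e2', one_mul, o2']
      · have := qd1 j n le_rfl
        rw [etop, add_zero] at this
        rw [this, map_add, mul_add]; abel
    | succ d ih =>
      intro j hj
      obtain ⟨o1, o2⟩ := O n j (by omega)
      obtain ⟨o1', o2'⟩ := O (n + 1) j (by omega)
      obtain ⟨e1', e2'⟩ := E (n + 1) j (by omega)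
      obtain ⟨E1, E2⟩ := E n (j + 1) (by omega)
      obtain ⟨E1', E2'⟩ := E (n + 1) (j + 1) (by omega)
      obtain ⟨O1, O2⟩ := O n (j + 1) (by omega)
      have IH := ih (j + 1) (by omega)
      have a2 : 2 * (j + 1) = 2 * j + 2 := by ring
      rw [a2] at IH E1 E2 E1' E2' O1 O2
      symm
      refine qx_inv_unique
        (Q := 1 - X * (F n (2 * j + 2 + 1) * C (Ye (j + 1) n)) - X * C (Yo j n))
        (P := 1 - X * (F (n + 1) (2 * j + 2) * C (Yo j (n + 1))) - X * C (Ye j (n + 1))) ?_ ?_ ?_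
      · have : 1 - X * (F n (2 * j + 2 + 1) * C (Ye (j + 1) n)) - X * C (Yo j n)
            = (1 - X * (F n (2 * j + 2 + 1) * C (Ye (j + 1) n))) *
              (1 - X * (F n (2 * j + 2) * C (Yo j n))) := by
          rw [mul_sub (1 - X * (F n (2 * j + 2 + 1) * C (Ye (j + 1) n))), mul_one, Xc,
            ← mul_assoc _ (F n (2 * j + 2)), E2, one_mul]
        rw [this, mul_assoc, ← mul_assoc (F n (2 * j + 2)), E1, one_mul, o1]
      · have : 1 - X * (F (n + 1) (2 * j + 2) * C (Yo j (n + 1))) - X * C (Ye j (n + 1))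
            = (1 - X * (F (n + 1) (2 * j + 2) * C (Yo j (n + 1)))) *
              (1 - X * (F (n + 1) (2 * j + 1) * C (Ye j (n + 1)))) := by
          rw [mul_sub (1 - X * (F (n + 1) (2 * j + 2) * C (Yo j (n + 1)))), mul_one, Xc,
            ← mul_assoc _ (F (n + 1) (2 * j + 1)), o2', one_mul]
        rw [this, mul_assoc, ← mul_assoc _ (F (n + 1) (2 * j)), e2', one_mul, o2']
      · have x1 : F n (2 * j + 2 + 1) = 1 + X * (F n (2 * j + 2 + 1) * F n (2 * j + 2 + 2)
            * C (Yo (j + 1) n)) := by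
          rw [mul_sub, mul_one, Xc, ← mul_assoc (F n (2 * j + 2 + 1))] at O1
          exact sub_eq_iff_eq_add.mp O1
        have x2 : F (n + 1) (2 * j + 2) = 1 + X * (F (n + 1) (2 * j + 2) *
            F (n + 1) (2 * j + 2 + 1) * C (Ye (j + 1) (n + 1))) := by
          rw [mul_sub, mul_one, Xc, ← mul_assoc (F (n + 1) (2 * j + 2))] at E1'
          exact sub_eq_iff_eq_add.mp E1'
        rw [x1, x2, IH]
        have q1 := congrArg (C (R := R)) (qd1 j n (by omega))
        have q2 := congrArg (C (R := R)) (qd2 j n (by omega))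
        simp only [map_add, map_mul] at q1 q2
        simp only [add_mul, one_mul, mul_assoc, q2, mul_add]
        have q3 := congrArg (fun f => X * f) q1
        simp only [mul_add] at q3
        rw [← sub_eq_zero] at q3 ⊢
        rw [← neg_eq_zero, ← q3]; abel
  have F0 : ∀ n, F n 0 = 1 := by
    intro n
    have := (E n 0 (by omega)).1
    rw [e0] at this
    simpa using this
  have S : ∀ n, F n 1 = 1 + X * (F (n + 1) 1 * C (Yo 0 n)) := by
    intro n
    have h1 := key n r 0 (by omega)
    have h2 := (O n 0 (by omega)).1
    simp only [mul_zero, zero_add] at h1 h2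
    rw [F0, one_mul] at h1
    rw [mul_sub, mul_one, Xc, ← mul_assoc (F n 1), ← h1] at h2
    exact sub_eq_iff_eq_add.mp h2
  have co : ∀ (k : ℕ) (n : ℤ), coeff k (F n 1 * C (m n)) = m (n + k) := by
    intro k
    induction k with
    | zero => intro n; rw [S]; simp
    | succ k ih =>
      intro n
      rw [S, add_mul, one_mul, mul_assoc, mul_assoc, ← map_mul, ← hm, map_add, coeff_succ_X_mul, ih]
      rw [coeff_C, if_neg (by omega), zero_add]
      congr 1; push_cast; ring
  -- the central elements
  have hXc : (X : PowerSeries R) ∈ Subring.center (PowerSeries R) := by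
    rw [Subring.mem_center_iff]; intro g; exact (X_mul).symm
  have hqc : (C q : PowerSeries R) ∈ Subring.center (PowerSeries R) := by
    rw [Subring.mem_center_iff]; intro g
    ext k; rw [coeff_mul_C, coeff_C_mul, hq]
  have sX : ∀ f : PowerSeries R, (⟨X, hXc⟩ : Subring.center (PowerSeries R)) • f = X * f :=
    fun _ => rfl
  have sq : ∀ f : PowerSeries R, (⟨C q, hqc⟩ : Subring.center (PowerSeries R)) • f = C q * f :=
    fun _ => rfl
  have cm : C (m n) * F n 2 = F n 2 * C (m n) := by
    apply Fcom
    intro j hj hj'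
    rcases Nat.even_or_odd' j with ⟨i, rfl | rfl⟩
    · simp only [ev, ev', if_true]
      obtain ⟨i, rfl⟩ : ∃ i', i = i' + 1 := ⟨i - 1, by omega⟩
      exact c2 i n (by omega)
    · simp only [od, od', if_false]
      obtain ⟨i, rfl⟩ : ∃ i', i = i' + 1 := ⟨i - 1, by omega⟩
      exact c1 i n (by omega)
  have cy : C (Yo 0 n) * F n 3 = F n 3 * C (Yo 0 n) := by
    apply Fcom
    intro j hj hj'
    rcases Nat.even_or_odd' j with ⟨i, rfl | rfl⟩
    · simp only [ev, ev', if_true]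
      obtain ⟨i, rfl⟩ : ∃ i', i = i' + 2 := ⟨i - 2, by omega⟩
      exact c6 i n (by omega)
    · simp only [od, od', if_false]
      obtain ⟨i, rfl⟩ : ∃ i', i = i' + 1 := ⟨i - 1, by omega⟩
      exact c5 i n (by omega)
  have fin := qx_core (⟨C q, hqc⟩ : Subring.center (PowerSeries R)) ⟨X, hXc⟩
    (C (m n)) (C (Yo 0 n)) (C (Ye 1 n)) (F n 1) (F n 2) (F n 3)
    (by rw [sX]; exact (O n 0 (by omega)).1) (by rw [sX]; exact (O n 0 (by omega)).2)
    (by rw [sX]; exact (E n 1 (by omega)).1) (by rw [sX]; exact (E n 1 (by omega)).2)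
    cm (by rw [sq]; simp only [← map_mul, c3]) cy (by rw [sq]; simp only [← map_mul, c4])
  simp only [sX, sq, ← map_mul, ← hm] at fin
  have := congrArg (coeff (p + 1)) fin
  simp only [map_sub, coeff_C_mul, coeff_succ_X_mul, coeff_mul_C, co, coeff_C] at this
  rw [if_neg (by omega)] at this
  simp only [co, coeff_mul_C, zero_sub] at this
  rw [← sub_eq_zero] at this ⊢
  rw [← neg_eq_zero, ← this]
  noncomm_ring

def QxW {R : Type*} [Ring R] (q : Rˣ) (u x : R) (w : ℤ) : Prop :=
  u * x = ((q ^ w : Rˣ) : R) * x * u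

theorem qx_zc {R : Type*} [Ring R] {q : Rˣ} (hq : ∀ x : R, (q : R) * x = x * (q : R))
    (w : ℤ) (x : R) : ((q ^ w : Rˣ) : R) * x = x * ((q ^ w : Rˣ) : R) :=
  ((Commute.units_zpow_right (show Commute x (q : R) from (hq x).symm) w).eq).symm

theorem qx_zz {R : Type*} [Ring R] (q : Rˣ) (a b : ℤ) :
    ((q ^ (a + b) : Rˣ) : R) = ((q ^ a : Rˣ) : R) * ((q ^ b : Rˣ) : R) := by
  rw [zpow_add, Units.val_mul]

theorem QxW.mul {R : Type*} [Ring R] {q : Rˣ} (hq : ∀ x : R, (q : R) * x = x * (q : R))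
    {u x y : R} {a b : ℤ} (h1 : QxW q u x a) (h2 : QxW q u y b) : QxW q u (x * y) (a + b) := by
  unfold QxW at *
  rw [← mul_assoc, h1, mul_assoc _ u y, h2, qx_zz, mul_assoc _ x, ← mul_assoc x,
    ← mul_assoc x, ← qx_zc hq b x]
  simp only [mul_assoc]

theorem QxW.mull {R : Type*} [Ring R] {q : Rˣ} (hq : ∀ x : R, (q : R) * x = x * (q : R))
    {u v x : R} {a b : ℤ} (h1 : QxW q u x a) (h2 : QxW q v x b) : QxW q (u * v) x (a + b) := by
  unfold QxW at *
  rw [mul_assoc, h2, ← mul_assoc, ← mul_assoc, ← qx_zc hq b u, mul_assoc _ u x, h1, add_comm a,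
    qx_zz]
  simp only [mul_assoc]

theorem QxW.inv {R : Type*} [Ring R] {q : Rˣ} (hq : ∀ x : R, (q : R) * x = x * (q : R))
    {u x xi : R} {a : ℤ} (h1 : QxW q u x a) (h : x * xi = 1) (h' : xi * x = 1) :
    QxW q u xi (-a) := by
  unfold QxW at *
  have h2 : ((q ^ (-a) : Rˣ) : R) * ((q ^ a : Rˣ) : R) = 1 := by rw [← qx_zz]; simp
  calc u * xi = ((q ^ (-a) : Rˣ) : R) * (xi * (((q ^ a : Rˣ) : R) * x * u)) * xi := by
        rw [qx_zc hq a x]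
        rw [show xi * (x * ((q ^ a : Rˣ) : R) * u) = (xi * x) * ((q ^ a : Rˣ) : R) * u by
          simp only [mul_assoc], h', one_mul, ← mul_assoc, h2, one_mul]
    _ = ((q ^ (-a) : Rˣ) : R) * (xi * (u * x)) * xi := by rw [h1]
    _ = ((q ^ (-a) : Rˣ) : R) * xi * u * (x * xi) := by simp only [mul_assoc]
    _ = _ := by rw [h, mul_one]

theorem QxW.invl {R : Type*} [Ring R] {q : Rˣ} (hq : ∀ x : R, (q : R) * x = x * (q : R))
    {u ui x : R} {a : ℤ} (h1 : QxW q u x a) (h : u * ui = 1) (h' : ui * u = 1) :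
    QxW q ui x (-a) := by
  unfold QxW at *
  have h2 : ((q ^ (-a) : Rˣ) : R) * ((q ^ a : Rˣ) : R) = 1 := by rw [← qx_zz]; simp
  have h3 : x * u = ((q ^ (-a) : Rˣ) : R) * (u * x) := by
    rw [h1, ← mul_assoc, ← mul_assoc, h2, one_mul]
  calc ui * x = ui * (x * u) * ui := by rw [mul_assoc ui, mul_assoc x, h, mul_one]
    _ = ui * ((q ^ (-a) : Rˣ) : R) * u * x * ui := by rw [h3]; simp only [mul_assoc]
    _ = ((q ^ (-a) : Rˣ) : R) * (ui * u) * x * ui := by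
        rw [← qx_zc hq (-a) ui]; simp only [mul_assoc]
    _ = _ := by rw [h', mul_one]

theorem QxW.neg {R : Type*} [Ring R] {q : Rˣ} {u x : R} {a : ℤ} (h1 : QxW q u x a) :
    QxW q u (-x) a := by
  unfold QxW at *
  rw [mul_neg, h1, mul_neg, neg_mul]

theorem QxW.smul {K R : Type*} [CommRing K] [Ring R] [Algebra K R] {q : Rˣ} {u x : R} {a : ℤ}
    (k : K) (h1 : QxW q u x a) : QxW q u (k • x) a := by
  unfold QxW at *
  rw [mul_smul_comm, h1, mul_smul_comm, smul_mul_assoc]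

theorem QxW.zero {R : Type*} [Ring R] {q : Rˣ} {u x : R} {a : ℤ} (h1 : QxW q u x a)
    (ha : a = 0) : u * x = x * u := by
  subst ha; unfold QxW at h1; simpa using h1

theorem QxW.one {R : Type*} [Ring R] {q : Rˣ} {u x : R} {a : ℤ} (h1 : QxW q u x a)
    (ha : a = 1) : u * x = q * (x * u) := by
  subst ha; unfold QxW at h1; simpa [mul_assoc] using h1


theorem quantum_Q_exchange_relations
    {R : Type*} [Ring R] (q A Δ : Rˣ)
    (hq : ∀ x : R, (q : R) * x = x * (q : R))
    (r : ℕ) (hr : 1 ≤ r)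
    (M Mi : ℕ → ℤ → R)
    (hM0 : ∀ n : ℤ, M 0 n = 1)
    (hMtop : ∀ n : ℤ, M (r + 2) n = 0)
    (hMiL : ∀ (α : ℕ) (n : ℤ), α ≤ r + 1 → M α n * Mi α n = 1)
    (hMiR : ∀ (α : ℕ) (n : ℤ), α ≤ r + 1 → Mi α n * M α n = 1)
    (hMsys : ∀ (α : ℕ) (n : ℤ), 1 ≤ α → α ≤ r + 1 →
      (q : R) ^ α * M α (n + 1) * M α (n - 1) = M α n ^ 2 - M (α + 1) n * M (α - 1) n)
    (hcom : ∀ (α β ε : ℕ) (n : ℤ), ε ≤ 1 → α ≤ r + 1 → β ≤ r + 1 →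
      M α n * M β (n + (ε : ℤ)) = (q : R) ^ (ε * min α β) * M β (n + (ε : ℤ)) * M α n)
    (hAΔ : ∀ n : ℤ, M (r + 1) n = ((A ^ n : Rˣ) : R) * (Δ : R))
    (hΔM : ∀ (α : ℕ) (n : ℤ), 1 ≤ α → α ≤ r + 1 →
      (Δ : R) * M α n = ((q ^ ((α : ℤ) * n) : Rˣ) : R) * M α n * (Δ : R))
    (hAM : ∀ (α : ℕ) (n : ℤ), 1 ≤ α → α ≤ r + 1 →
      (A : R) * M α n = ((q ^ (-(α : ℤ)) : Rˣ) : R) * M α n * (A : R))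
    (hΔA : (Δ : R) * (A : R) = (q : R) ^ (r + 1) * (A : R) * (Δ : R))
    (hext : ∀ (α β : ℕ) (n p : ℤ), α ≤ r + 1 → β ≤ r + 1 →
      |p| ≤ |(β : ℤ) - (α : ℤ)| + 1 →
      M α n * M β (n + p) = ((q ^ (p * ((min α β : ℕ) : ℤ)) : Rˣ) : R) * M β (n + p) * M α n) :
    ∀ n p : ℤ, 1 ≤ p →
      M 1 n * M 1 (n + p) - (q : R) * M 1 (n + p) * M 1 n
        + M 1 (n + p - 1) * M 1 (n + 1) - (q : R) * M 1 (n + 1) * M 1 (n + p - 1) = 0 := by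
  have hqc : (q : R) ∈ Subring.center R := by
    rw [Subring.mem_center_iff]; intro g; exact (hq g).symm
  have hqic : ((q⁻¹ : Rˣ) : R) ∈ Subring.center R := by
    rw [Subring.mem_center_iff]; intro g
    have := qx_zc hq (-1) g
    simpa using this.symm
  let kq : Subring.center R := ⟨q, hqc⟩
  let ki : Subring.center R := ⟨((q⁻¹ : Rˣ) : R), hqic⟩
  have hk : kq * ki = 1 := by
    apply Subtype.ext
    change (q : R) * ((q⁻¹ : Rˣ) : R) = 1
    simp
  have hkp : ∀ j : ℕ, kq ^ j * ki ^ j = 1 := fun j => by rw [← mul_pow, hk, one_pow]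
  have sk : ∀ (j : ℕ) (x : R), kq ^ j • x = (q : R) ^ j * x := fun _ _ => rfl
  have hMi0 : ∀ n, Mi 0 n = 1 := fun n => by
    have := hMiL 0 n (by omega)
    rwa [hM0, one_mul] at this
  obtain ⟨Yo, hYo⟩ : ∃ Yo : ℕ → ℤ → R, ∀ (j : ℕ) n t, n + (j : ℤ) = t → Yo j n =
      ki ^ j • (M (j + 1) (t + 1) * Mi (j + 1) t * Mi j t * M j (t - 1)) :=
    ⟨fun j n => ki ^ j • (M (j + 1) (n + j + 1) * Mi (j + 1) (n + j) * Mi j (n + j)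
      * M j (n + j - 1)), by rintro j n t rfl; rfl⟩
  obtain ⟨Ye, hYe0, hYe⟩ : ∃ Ye : ℕ → ℤ → R, (∀ n, Ye 0 n = 0) ∧
      ∀ (j : ℕ) n t, n + (j : ℤ) = t → Ye (j + 1) n =
      -(M (j + 2) (t + 1) * Mi (j + 1) (t + 1) * Mi (j + 1) t * M j t) :=
    ⟨fun j n => match j with
      | 0 => 0
      | j + 1 => -(M (j + 2) (n + j + 1) * Mi (j + 1) (n + j + 1) * Mi (j + 1) (n + j)
        * M j (n + j)), fun _ => rfl, by rintro j n t rfl; rfl⟩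
  have hc0 : ∀ (α β : ℕ) (t : ℤ), α ≤ r + 1 → β ≤ r + 1 → M α t * M β t = M β t * M α t := by
    intro α β t ha hb
    simpa using hcom α β 0 t (by omega) ha hb
  have hc1 : ∀ (α β : ℕ) (t : ℤ), α ≤ r + 1 → β ≤ r + 1 →
      M α t * M β (t + 1) = kq ^ (min α β) • (M β (t + 1) * M α t) := by
    intro α β t ha hb
    simpa [sk, mul_assoc] using hcom α β 1 t (by omega) ha hb
  have hY0 : ∀ n, Yo 0 n = M 1 (n + 1) * Mi 1 n := by
    intro n
    rw [hYo 0 n n (by simp)]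
    simp [hM0, hMi0]
  -- weights
  have wt : ∀ (β : ℕ) (n s : ℤ), 1 ≤ β → β ≤ r + 1 → (-(β : ℤ) ≤ s - n ∧ s - n ≤ β) →
      QxW q (M 1 n) (M β s) (s - n) := by
    intro β n s h1 h2 h3
    have := hext 1 β n (s - n) (by omega) h2 (by
      rw [Nat.cast_one, abs_of_nonneg (show (0 : ℤ) ≤ β - 1 by omega), abs_le]; omega)
    rw [min_eq_left h1, add_sub_cancel] at this
    simpa [QxW] using this
  have wti : ∀ (β : ℕ) (n s : ℤ), 1 ≤ β → β ≤ r + 1 → (-(β : ℤ) ≤ s - n ∧ s - n ≤ β) →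
      QxW q (M 1 n) (Mi β s) (-(s - n)) := by
    intro β n s h1 h2 h3
    exact (wt β n s h1 h2 h3).inv hq (hMiL _ _ h2) (hMiR _ _ h2)
  have wo : ∀ (j : ℕ) (n s t : ℤ), j < r → n + (j + 1 : ℕ) = t → (s = n ∨ s = n + 1) →
      QxW q (M 1 s) (Yo (j + 1) n) 0 := by
    intro j n s t hj ht hs
    rw [hYo (j + 1) n t ht]
    have h := (((wt (j + 1 + 1) s (t + 1) (by omega) (by omega) (by push_cast at *; omega)).mul hq
      (wti (j + 1 + 1) s t (by omega) (by omega) (by push_cast at *; omega))).mul hq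
      (wti (j + 1) s t (by omega) (by omega) (by push_cast at *; omega))).mul hq
      (wt (j + 1) s (t - 1) (by omega) (by omega) (by push_cast at *; omega))
    convert h.smul (ki ^ (j + 1)) using 1
    ring
  have we : ∀ (j : ℕ) (n s t : ℤ), j + 1 < r → n + (j + 1 : ℕ) = t → (s = n ∨ s = n + 1) →
      QxW q (M 1 s) (Ye (j + 2) n) 0 := by
    intro j n s t hj ht hs
    rw [hYe (j + 1) n t ht]
    have h := (((wt (j + 1 + 2) s (t + 1) (by omega) (by omega) (by push_cast at *; omega)).mul hq
      (wti (j + 1 + 1) s (t + 1) (by omega) (by omega) (by push_cast at *; omega))).mul hq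
      (wti (j + 1 + 1) s t (by omega) (by omega) (by push_cast at *; omega))).mul hq
      (wt (j + 1) s t (by omega) (by omega) (by push_cast at *; omega))
    convert h.neg using 1
    ring
  have we1 : ∀ (n s : ℤ), (s = n ∨ s = n + 1) → QxW q (M 1 s) (Ye 1 n) (s - n) := by
    intro n s hs
    rw [hYe 0 n n (by simp), hM0, mul_one]
    have h := ((wt (0 + 2) s (n + 1) (by omega) (by omega) (by push_cast at *; omega)).mul hq
      (wti (0 + 1) s (n + 1) (by omega) (by omega) (by push_cast at *; omega))).mul hq
      (wti (0 + 1) s n (by omega) (by omega) (by push_cast at *; omega))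
    convert h.neg using 1
    ring
  have wY : ∀ (n : ℤ) (x : R) (a b : ℤ), QxW q (M 1 (n + 1)) x a → QxW q (M 1 n) x b →
      QxW q (Yo 0 n) x (a + -b) := by
    intro n x a b h1 h2
    rw [hY0]
    exact h1.mull hq (h2.invl hq (hMiL _ _ (by omega)) (hMiR _ _ (by omega)))
  have main := qx_main (q : R) hq r Yo Ye (M 1) hYe0 ?_ ?_ ?_ ?_ ?_ ?_ ?_ ?_ ?_ ?_ hr
  · intro n p hp
    obtain ⟨k, rfl⟩ : ∃ k : ℕ, p = (k + 1 : ℕ) := ⟨(p - 1).toNat, by omega⟩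
    have h := main n k
    have e : n + ((k + 1 : ℕ) : ℤ) - 1 = n + k := by push_cast; ring
    rw [e]
    rw [← sub_eq_zero] at h
    rw [← h]
    noncomm_ring
  · intro n
    rw [hYe r n _ rfl, hMtop]; simp
  · intro j n hj
    rw [hYo j n _ rfl, hYo j (n + 1) (n + j + 1) (by ring), hYe j n _ rfl]
    generalize ht : n + (j : ℤ) = t
    have key : ∀ g : R, kq ^ j • (M j (t + 1) * M j (t - 1)) = M j t * M j t - M (j + 1) t * g →
        Ye j (n + 1) = -(M (j + 1) (t + 1) * Mi j (t + 1) * Mi j t * g) →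
        ki ^ j • (M (j + 1) (t + 1) * Mi (j + 1) t * Mi j t * M j (t - 1)) +
        -(M (j + 2) (t + 1) * Mi (j + 1) (t + 1) * Mi (j + 1) t * M j t) =
        Ye j (n + 1) + ki ^ j • (M (j + 1) (t + 1 + 1) * Mi (j + 1) (t + 1) * Mi j (t + 1) *
          M j (t + 1 - 1)) := by
      intro g hg hY
      rw [hY, add_sub_cancel_right]
      refine qx_qd1 (kq ^ (j + 1)) (ki ^ (j + 1)) (kq ^ j) (ki ^ j) (hkp _) (hkp _)
        (M (j + 1) t) (Mi (j + 1) t) (M (j + 1) (t + 1)) (Mi (j + 1) (t + 1))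
        (M (j + 1) (t + 1 + 1)) (M j t) (Mi j t) (M j (t + 1)) (Mi j (t + 1)) (M j (t - 1)) g
        (M (j + 2) (t + 1)) (hMiL _ _ (by omega)) (hMiR _ _ (by omega)) (hMiL _ _ (by omega))
        (hMiR _ _ (by omega)) (hMiL _ _ (by omega)) (hMiR _ _ (by omega)) (hMiL _ _ (by omega))
        (hMiR _ _ (by omega)) ?_ ?_ ?_ ?_ ?_ hg ?_
      · simpa using hc1 j j t (by omega) (by omega)
      · simpa using hc1 (j + 1) (j + 1) t (by omega) (by omega)
      · exact hc0 _ _ _ (by omega) (by omega)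
      · simpa using hc1 (j + 1) j t (by omega) (by omega)
      · exact hc0 _ _ _ (by omega) (by omega)
      · have := hMsys (j + 1) (t + 1) (by omega) (by omega)
        rw [add_sub_cancel_right, pow_two, Nat.add_sub_cancel, mul_assoc] at this
        rw [sk]; exact this
    rcases j with _ | j
    · apply key 0
      · simp [hM0]
      · simp [hYe0]
    · apply key (M j t)
      · have := hMsys (j + 1) t (by omega) (by omega)
        rw [pow_two, Nat.add_sub_cancel, mul_assoc] at this
        rw [sk]; exact this
      · have e : n + 1 + (j : ℤ) = t := by push_cast at ht; omega
        rw [hYe j (n + 1) t e]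
  · intro j n hj
    rw [hYe j (n + 1) (n + j + 1) (by ring), hYo j (n + 1) (n + j + 1) (by ring), hYe j n _ rfl,
      hYo (j + 1) n (n + j + 1) (by push_cast; ring)]
    generalize ht : n + (j : ℤ) = t
    rw [add_sub_cancel_right, pow_succ']
    refine qx_qd2 (kq ^ (j + 1)) (ki ^ (j + 1)) (kq ^ j) (ki ^ j) kq ki (hkp _) (hkp _) hk
      (pow_succ' _ _) (M (j + 1) t) (Mi (j + 1) t) (M (j + 1) (t + 1)) (Mi (j + 1) (t + 1))
      (M (j + 1) (t + 1 + 1)) (Mi (j + 1) (t + 1 + 1)) (M j t) (M j (t + 1)) (Mi j (t + 1))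
      (M (j + 2) (t + 1)) (Mi (j + 2) (t + 1)) (M (j + 2) (t + 1 + 1))
      (hMiL _ _ (by omega)) (hMiL _ _ (by omega)) (hMiR _ _ (by omega)) (hMiL _ _ (by omega))
      (hMiR _ _ (by omega)) (hMiL _ _ (by omega)) (hMiL _ _ (by omega)) (hMiR _ _ (by omega))
      ?_ ?_ ?_ ?_ ?_ ?_
    · simpa using hc1 j (j + 1) (t + 1) (by omega) (by omega)
    · simpa using hc1 (j + 1) (j + 1) t (by omega) (by omega)
    · simpa using hc1 (j + 1) (j + 1) (t + 1) (by omega) (by omega)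
    · simpa using hc1 (j + 1) (j + 2) t (by omega) (by omega)
    · exact hc0 _ _ _ (by omega) (by omega)
    · exact hc0 _ _ _ (by omega) (by omega)
  · intro n
    rw [hY0, mul_assoc, hMiR _ _ (by omega), mul_one]
  · intro j n hj
    exact (wo j n n _ hj rfl (Or.inl rfl)).zero rfl
  · intro j n hj
    rcases j with _ | j
    · exact (we1 n n (Or.inl rfl)).zero (by ring)
    · exact (we j n n _ hj rfl (Or.inl rfl)).zero rfl
  · intro n
    rw [hY0]
    exact ((wt 1 n (n + 1) le_rfl (by omega) (by simp)).mul hq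
      (wti 1 n n le_rfl (by omega) (by simp))).one (by ring)
  · intro n
    exact (wY n _ _ _ (we1 n (n + 1) (Or.inr rfl)) (we1 n n (Or.inl rfl))).one (by ring)
  · intro j n hj
    exact (wY n _ _ _ (wo j n (n + 1) _ hj rfl (Or.inr rfl)) (wo j n n _ hj rfl (Or.inl rfl))).zero
      (by ring)
  · intro j n hj
    exact (wY n _ _ _ (we j n (n + 1) _ hj rfl (Or.inr rfl)) (we j n n _ hj rfl (Or.inl rfl))).zero
      (by ring)
end

section
/- Under these hypotheses the generators M_n = M_{1,n} satisfy the symmetrized cubic relation: for all n,p,k ∈ ℤ, the sum over the six permutations (a,b,c) of the triple (n,p,k) of the double commutators [M_a, [M_{b-1}, M_{c+1}]] vanishes, where [x,y] := xy − yx. -/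
open Polynomial

namespace QQ

/-- right action of polynomials (in the shift) on sequences -/
noncomputable def ev {R : Type*} [Ring R] (f : ℤ → R) (m : ℤ) (p : R[X]) : R :=
  p.sum (fun j c => f (m - j) * c)

section ev
variable {R : Type*} [Ring R]

lemma ev_add (f : ℤ → R) (m : ℤ) (p p' : R[X]) : ev f m (p + p') = ev f m p + ev f m p' := by
  unfold ev
  exact Polynomial.sum_add_index p p' _ (by simp) (by intros; rw [mul_add])

lemma ev_monomial (f : ℤ → R) (m : ℤ) (j : ℕ) (c : R) :
    ev f m (monomial j c) = f (m - j) * c := by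
  unfold ev
  exact Polynomial.sum_monomial_index c _ (by simp)

lemma ev_zero (f : ℤ → R) (m : ℤ) : ev f m 0 = 0 := by simp [ev]

lemma ev_neg (f : ℤ → R) (m : ℤ) (p : R[X]) : ev f m (-p) = - ev f m p := by
  have h := ev_add f m p (-p)
  rw [add_neg_cancel, ev_zero] at h
  exact (neg_eq_of_add_eq_zero_right h.symm).symm

lemma ev_sub (f : ℤ → R) (m : ℤ) (p p' : R[X]) : ev f m (p - p') = ev f m p - ev f m p' := by
  rw [sub_eq_add_neg, ev_add, ev_neg, sub_eq_add_neg]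

lemma ev_one (f : ℤ → R) (m : ℤ) : ev f m 1 = f m := by
  have := ev_monomial f m 0 1
  simpa using this

lemma ev_X_mul (f : ℤ → R) (m : ℤ) (p : R[X]) : ev f m (X * p) = ev f (m - 1) p := by
  induction p using Polynomial.induction_on' with
  | add p s hp hs => rw [mul_add, ev_add, ev_add, hp, hs]
  | monomial j c =>
    rw [X_mul_monomial, ev_monomial, ev_monomial]
    congr 2; push_cast; ring

lemma ev_mul_C (f : ℤ → R) (m : ℤ) (p : R[X]) (c : R) : ev f m (p * C c) = ev f m p * c := by
  induction p using Polynomial.induction_on' with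
  | add p s hp hs => rw [add_mul, ev_add, ev_add, hp, hs, add_mul]
  | monomial j d =>
    rw [monomial_mul_C, ev_monomial, ev_monomial, mul_assoc]

lemma ev_C_mul (f : ℤ → R) (m : ℤ) (p : R[X]) (c : R) :
    ev f m (C c * p) = ev (fun i => f i * c) m p := by
  induction p using Polynomial.induction_on' with
  | add p s hp hs => rw [mul_add, ev_add, ev_add, hp, hs]
  | monomial j d =>
    rw [C_mul_monomial, ev_monomial, ev_monomial, mul_assoc]

lemma ev_fsub (f g : ℤ → R) (m : ℤ) (p : R[X]) :
    ev (fun i => f i - g i) m p = ev f m p - ev g m p := by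
  induction p using Polynomial.induction_on' with
  | add p s hp hs => rw [ev_add, ev_add, ev_add, hp, hs]; abel
  | monomial j d => simp only [ev_monomial, sub_mul]

lemma ev_lmul (f : ℤ → R) (x : R) (m : ℤ) (p : R[X]) :
    ev (fun i => x * f i) m p = x * ev f m p := by
  induction p using Polynomial.induction_on' with
  | add p s hp hs => rw [ev_add, ev_add, hp, hs, mul_add]
  | monomial j d => simp only [ev_monomial, mul_assoc]

lemma ev_shift (f : ℤ → R) (m : ℤ) (p : R[X]) :
    ev (fun i => f (i - 1)) m p = ev f (m - 1) p := by
  induction p using Polynomial.induction_on' with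
  | add p s hp hs => rw [ev_add, ev_add, hp, hs]
  | monomial j d => simp only [ev_monomial]; congr 2; ring

lemma ev_head (f : ℤ → R) (m : ℤ) (N : ℕ) (p : R[X]) (hp : ∀ j, N < j → p.coeff j = 0)
    (hf : ∀ i, m - N ≤ i → i < m → f i = 0) : ev f m p = f m * p.coeff 0 := by
  unfold ev
  rw [Polynomial.sum_def]
  have : f m * p.coeff 0 = (fun j : ℕ => f (m - j) * p.coeff j) 0 := by simp
  rw [this]
  apply Finset.sum_eq_single
  · intro j hj hj0
    have hjN : j ≤ N := by
      by_contra h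
      exact (mem_support_iff.mp hj) (hp j (by omega))
    rw [hf _ (by omega) (by omega), zero_mul]
  · intro h
    simp only [notMem_support_iff.mp h, mul_zero]

lemma eq_X_mul (p : R[X]) (h : p.coeff 0 = 0) : ∃ p', p = X * p' := by
  obtain ⟨s, hs⟩ := X_dvd_iff.mpr h
  exact ⟨s, hs⟩

end ev

/-- the quantum M-system data -/
structure Sys {R : Type*} [Ring R] (q : Rˣ) (r : ℕ) (M Mi : ℕ → ℤ → R) : Prop where
  hq : ∀ x : R, (q : R) * x = x * (q : R)
  M0 : ∀ n, M 0 n = 1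
  top : ∀ n, M (r + 2) n = 0
  iL : ∀ α n, α ≤ r + 1 → M α n * Mi α n = 1
  iR : ∀ α n, α ≤ r + 1 → Mi α n * M α n = 1
  sys : ∀ α n, α ≤ r → (q : R) ^ (α + 1) * M (α + 1) (n + 1) * M (α + 1) (n - 1)
    = M (α + 1) n ^ 2 - M (α + 2) n * M α n
  com0 : ∀ α β n, α ≤ r + 2 → β ≤ r + 2 → M α n * M β n = M β n * M α n
  com1 : ∀ α β n, α ≤ r + 2 → β ≤ r + 2 →
    M α n * M β (n + 1) = (q : R) ^ (min α β) * M β (n + 1) * M α n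
  ext : ∀ (α : ℕ) (a n : ℤ), 1 ≤ α → α ≤ r + 2 → (|n - a| ≤ (α : ℤ) ∨ r + 1 ≤ α) →
    M 1 a * M α n = ((q ^ (n - a) : Rˣ) : R) * M α n * M 1 a

section algebra
variable {R : Type*} [Ring R]

lemma pow_c (q : R) (hq : ∀ x, q * x = x * q) (n : ℕ) (x y : R) :
    x * (q ^ n * y) = q ^ n * (x * y) := by
  have : q ^ n * x = x * q ^ n := ((show Commute q x from hq x).pow_left n)
  rw [← mul_assoc, ← this, mul_assoc]

lemma canc (q qi : R) (hq : ∀ x, q * x = x * q) (hqi : qi * q = 1) (n : ℕ) (x y : R)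
    (h : q ^ n * x = q ^ n * y) : x = y := by
  have h1 : qi ^ n * q ^ n = 1 := by
    rw [← Commute.mul_pow (show Commute qi q from (hq qi).symm), hqi, one_pow]
  have := congrArg (fun z => qi ^ n * z) h
  simpa only [← mul_assoc, h1, one_mul] using this

lemma rcanc (u ui : R) (h1 : u * ui = 1) (x y : R) (h : x * u = y * u) : x = y := by
  have := congrArg (fun z => z * ui) h
  simpa only [mul_assoc, h1, mul_one] using this

lemma lcanc (u ui : R) (h1 : ui * u = 1) (x y : R) (h : u * x = u * y) : x = y := by
  have := congrArg (fun z => ui * z) h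
  simpa only [← mul_assoc, h1, one_mul] using this

/-- step for the upper value -/
lemma step_h (q qi k : R) (hq : ∀ x, q * x = x * q) (hqi : qi * q = 1)
    (hk : ∀ x, k * x = x * k) (α : ℕ)
    (B Bp Bm Bmi D Di E Ei T : R) (h1 : Bmi * Bm = 1) (h1' : Bm * Bmi = 1) (h2 : Di * D = 1)
    (h2' : D * Di = 1)
    (h3 : Ei * E = 1) (hsys : q ^ (α + 1) * Bp * Bm = B ^ 2 - T * D)
    (c1 : Bm * B = q ^ (α + 1) * B * Bm) (c2 : Bm * D = q ^ α * D * Bm) :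
    k * Bp * Di - k * B * Ei * (E * Bmi * B * Di) = -qi * k * T * Bmi := by
  have hqi' : q * qi = 1 := by rw [hq, hqi]
  apply rcanc D Di h2'
  apply rcanc Bm Bmi h1'
  apply canc q qi hq hqi (α + 1)
  have e1 : q ^ (α + 1) * ((k * Bp * Di - k * B * Ei * (E * Bmi * B * Di)) * D * Bm)
      = k * (q ^ (α + 1) * Bp * Bm) - k * B * Bmi * (q ^ (α + 1) * B * Bm) := by
    have : (k * Bp * Di - k * B * Ei * (E * Bmi * B * Di)) * D * Bm
        = k * Bp * (Di * D) * Bm - k * B * (Ei * E) * Bmi * B * (Di * D) * Bm := by noncomm_ring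
    rw [this, h2, h3]
    simp only [mul_one, mul_assoc, mul_sub]
    simp only [pow_c q hq]
  have e2 : q ^ (α + 1) * (-qi * k * T * Bmi * D * Bm) = - k * T * Bmi * (q ^ α * D * Bm) := by
    have : q ^ (α + 1) * (-qi * k * T * Bmi * D * Bm)
        = - (q ^ α * (q * qi) * k * T * Bmi * D * Bm) := by rw [pow_succ]; noncomm_ring
    rw [this, hqi', mul_one]
    simp only [mul_assoc]
    simp only [pow_c q hq, neg_mul, mul_neg]
  rw [e1, e2, hsys, ← c1, ← c2]
  have : k * B * Bmi * (Bm * B) = k * B * (Bmi * Bm) * B := by noncomm_ring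
  rw [this, h1]
  have : -k * T * Bmi * (Bm * D) = -k * T * (Bmi * Bm) * D := by noncomm_ring
  rw [this, h1]
  noncomm_ring

/-- step for the lower value -/
lemma step_l (q qi k : R) (hq : ∀ x, q * x = x * q) (hqi : qi * q = 1)
    (hk : ∀ x, k * x = x * k) (α : ℕ)
    (B Bi Bp Bm D Di E Ei T : R) (h1 : Bi * B = 1) (h1' : B * Bi = 1) (h2 : Di * D = 1)
    (h2' : D * Di = 1)
    (h3 : Ei * E = 1)
    (hsys : Bm * Bp = q ^ (α + 1) * B ^ 2 - q ^ α * (T * D))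
    (c1 : Bm * B = q ^ (α + 1) * B * Bm) (c2 : T * B = B * T) :
    k * B * Di - k * Bm * Ei * (E * Bi * Bp * Di) = qi * k * T * Bi := by
  have hqi' : q * qi = 1 := by rw [hq, hqi]
  have hqi2 : ∀ x, qi * x = x * qi := by
    intro x
    calc qi * x = qi * (x * q) * qi := by rw [mul_assoc, mul_assoc, hqi', mul_one]
      _ = x * qi := by rw [← hq, ← mul_assoc, hqi, one_mul]
  apply rcanc D Di h2'
  apply lcanc B Bi h1
  apply canc q qi hq hqi (α + 1)
  have c1' : q ^ (α + 1) * (B * Bm * Bi) = Bm := by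
    have : q ^ (α + 1) * (B * Bm * Bi) = q ^ (α + 1) * B * Bm * Bi := by noncomm_ring
    rw [this, ← c1, mul_assoc, h1', mul_one]
  have e1 : q ^ (α + 1) * (B * ((k * B * Di - k * Bm * Ei * (E * Bi * Bp * Di)) * D))
      = k * (q ^ (α + 1) * B ^ 2 - (q ^ (α + 1) * (B * Bm * Bi)) * Bp) := by
    have : (B * ((k * B * Di - k * Bm * Ei * (E * Bi * Bp * Di)) * D))
        = (B * k) * B * (Di * D) - (B * k) * Bm * (Ei * E) * Bi * Bp * (Di * D) := by noncomm_ring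
    rw [this, h2, h3, ← hk B]
    simp only [mul_one, mul_assoc, mul_sub, pow_two]
    simp only [pow_c q hq]
  have e2 : q ^ (α + 1) * (B * (qi * k * T * Bi * D)) = k * (q ^ α * (T * D)) := by
    have b1 : B * (qi * k * T * Bi * D) = qi * k * (T * D) := by
      have : B * (qi * k * T * Bi * D) = (B * (qi * k)) * T * Bi * D := by noncomm_ring
      rw [this]
      have : B * (qi * k) = qi * k * B := by rw [mul_assoc, hk, ← mul_assoc, ← mul_assoc, hqi2]
      rw [this]
      have : qi * k * B * T * Bi * D = qi * k * (B * T) * Bi * D := by noncomm_ring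
      rw [this, ← c2]
      have : qi * k * (T * B) * Bi * D = qi * k * T * (B * Bi) * D := by noncomm_ring
      rw [this, h1']; noncomm_ring
    rw [b1]
    have : q ^ (α + 1) * (qi * k * (T * D)) = q ^ α * (q * qi) * k * (T * D) := by
      rw [pow_succ]; noncomm_ring
    rw [this, hqi', pow_c q hq]; noncomm_ring
  rw [e1, e2, c1', hsys]
  noncomm_ring

lemma rev_sys (q : R) (hq : ∀ x, q * x = x * q) (α : ℕ) (qi : R) (hqi : qi * q = 1)
    (B Bp Bpi Bm T D : R) (h1 : Bpi * Bp = 1)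
    (hsys : q ^ (α + 1) * Bp * Bm = B ^ 2 - T * D)
    (c1 : B * Bp = q ^ (α + 1) * Bp * B) (c2 : T * Bp = q ^ (α + 1) * Bp * T)
    (c3 : D * Bp = q ^ α * Bp * D) :
    Bm * Bp = q ^ (α + 1) * B ^ 2 - q ^ α * (T * D) := by
  apply lcanc Bp Bpi h1
  apply canc q qi hq hqi (α + 1)
  have : q ^ (α + 1) * (Bp * (Bm * Bp)) = (q ^ (α + 1) * Bp * Bm) * Bp := by noncomm_ring
  rw [this, hsys, sub_mul]
  have e1 : B ^ 2 * Bp = q ^ (α + 1) * (Bp * (q ^ (α + 1) * B ^ 2)) := by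
    rw [pow_two, mul_assoc, c1, mul_assoc, pow_c q hq, ← mul_assoc B, c1, pow_c q hq _ Bp]
    simp only [mul_assoc]
  have e2 : T * D * Bp = q ^ (α + 1) * (Bp * (q ^ α * (T * D))) := by
    rw [mul_assoc, c3, mul_assoc, pow_c q hq, ← mul_assoc T, c2, pow_c q hq _ Bp,
      mul_assoc, mul_assoc, pow_c q hq (α + 1)]
  rw [e1, e2]; noncomm_ring

/-- step for the last coefficient -/
lemma step_c (q qi k : R) (hq : ∀ x, q * x = x * q) (hqi : qi * q = 1)
    (hk : ∀ x, k * x = x * k) (α : ℕ)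
    (B Bm Bmi D Di E Ei : R) (h1 : Bmi * Bm = 1) (h1' : Bm * Bmi = 1) (h2 : Di * D = 1)
    (h2' : D * Di = 1)
    (h3 : Ei * E = 1)
    (c1 : Bm * B = q ^ (α + 1) * B * Bm) (c2 : Bm * D = q ^ α * D * Bm) (c3 : B * D = D * B) :
    - (k * D * Ei * (E * Bmi * B * Di)) = -qi * k * B * Bmi := by
  have hqi' : q * qi = 1 := by rw [hq, hqi]
  apply rcanc D Di h2'
  apply rcanc Bm Bmi h1'
  apply canc q qi hq hqi (α + 1)
  have e1 : q ^ (α + 1) * (- (k * D * Ei * (E * Bmi * B * Di)) * D * Bm)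
      = - (k * D * Bmi * (q ^ (α + 1) * B * Bm)) := by
    have : - (k * D * Ei * (E * Bmi * B * Di)) * D * Bm
        = - (k * D * (Ei * E) * Bmi * B * (Di * D) * Bm) := by noncomm_ring
    rw [this, h2, h3]
    simp only [mul_one, mul_assoc, mul_neg]
    simp only [pow_c q hq]
  have e2 : q ^ (α + 1) * (-qi * k * B * Bmi * D * Bm) = - k * B * Bmi * (q ^ α * D * Bm) := by
    have : q ^ (α + 1) * (-qi * k * B * Bmi * D * Bm)
        = - (q ^ α * (q * qi) * k * B * Bmi * D * Bm) := by rw [pow_succ]; noncomm_ring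
    rw [this, hqi', mul_one]
    simp only [mul_assoc]
    simp only [pow_c q hq, neg_mul, mul_neg]
  rw [e1, e2, ← c1, ← c2]
  have : k * D * Bmi * (Bm * B) = k * D * (Bmi * Bm) * B := by noncomm_ring
  rw [this, h1]
  have : -k * B * Bmi * (Bm * D) = -k * B * (Bmi * Bm) * D := by noncomm_ring
  rw [this, h1, mul_one, mul_one, mul_assoc, ← c3]
  noncomm_ring

lemma qc_inv (x y yi : R) (Q : Rˣ) (hQ : ∀ x, (Q : R) * x = x * Q) (h1 : y * yi = 1) (h2 : yi * y = 1)
    (h : x * y = Q * y * x) : x * yi = (Q⁻¹ : Rˣ) * yi * x := by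
  have e : yi * (x * y) * yi = yi * (Q * y * x) * yi := by rw [h]
  have e1 : yi * (x * y) * yi = yi * x := by simp [mul_assoc, h1]
  have e2 : yi * (Q * y * x) * yi = Q * (x * yi) := by
    rw [hQ y]
    rw [mul_assoc y, ← mul_assoc yi y, h2, one_mul, mul_assoc]
  rw [e1, e2] at e
  rw [mul_assoc, e, ← mul_assoc, Units.inv_mul, one_mul]

lemma qc_mul (x y z : R) (Q Q' : Rˣ) (hQ : ∀ x, (Q' : R) * x = x * Q')
    (h : x * y = Q * y * x) (h' : x * z = Q' * z * x) :
    x * (y * z) = ((Q * Q' : Rˣ) : R) * (y * z) * x := by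
  rw [← mul_assoc, h, mul_assoc, h', mul_assoc, Units.val_mul]
  simp only [mul_assoc]
  rw [← mul_assoc y, ← hQ y]
  simp only [mul_assoc]

end algebra

section K
variable {R : Type*} [Ring R]

/-- the partial recursion polynomials -/
noncomputable def K (M Mi : ℕ → ℤ → R) : ℕ → ℤ → R[X]
  | 0, _ => 1
  | α + 1, n => K M Mi α n - X * (K M Mi α (n - 1) *
      C (M α (n - 2) * Mi (α + 1) (n - 1) * M (α + 1) n * Mi α (n - 1)))

structure Pk (q : Rˣ) (M Mi : ℕ → ℤ → R) (α : ℕ) : Prop where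
  deg : ∀ n j, α < j → (K M Mi α n).coeff j = 0
  c0 : ∀ n, (K M Mi α n).coeff 0 = 1
  van : ∀ n m : ℤ, n ≤ m → m < n + α → ev (M 1) m (K M Mi α n) = 0
  hi : ∀ n, ev (M 1) (n + α) (K M Mi α n)
    = (-(↑q⁻¹ : R)) ^ α * M (α + 1) n * Mi α (n - 1)
  lo : ∀ n, ev (M 1) (n - 1) (K M Mi α n)
    = (↑q⁻¹ : R) ^ α * M (α + 1) (n - 1) * Mi α (n - 1)
  lc : ∀ n, (K M Mi α n).coeff α = (-(↑q⁻¹ : R)) ^ α * M α n * Mi α (n - 1)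

def Uq (M : ℕ → ℤ → R) (α : ℕ) : Prop :=
  ∀ (p : R[X]) (s : ℤ), (∀ j, α ≤ j → p.coeff j = 0) →
    (∀ m, s ≤ m → m < s + α → ev (M 1) m p = 0) → p = 0

lemma Pk.ker {q : Rˣ} {M Mi : ℕ → ℤ → R} {α : ℕ} (h : Pk q M Mi α) (u : Uq M α)
    (p : R[X]) (s : ℤ) (hd : ∀ j, α < j → p.coeff j = 0)
    (hv : ∀ m, s ≤ m → m < s + α → ev (M 1) m p = 0) : p = K M Mi α s * C (p.coeff 0) := by
  obtain ⟨p', hp'⟩ := eq_X_mul (p - K M Mi α s * C (p.coeff 0)) (by simp [h.c0])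
  have : p' = 0 := by
    apply u p' (s - 1)
    · intro j hj
      have : (X * p').coeff (j + 1) = p'.coeff j := coeff_X_mul _ _
      rw [← this, ← hp', coeff_sub, coeff_mul_C, hd _ (by omega), h.deg _ _ (by omega)]
      simp
    · intro m h1 h2
      have : ev (M 1) (m + 1) (X * p') = ev (M 1) m p' := by rw [ev_X_mul]; simp
      rw [← this, ← hp', ev_sub, ev_mul_C, hv _ (by omega) (by omega),
        h.van _ _ (by omega) (by omega)]
      simp
  rw [this, mul_zero] at hp'
  exact sub_eq_zero.mp hp'

variable {q : Rˣ} {r : ℕ} {M Mi : ℕ → ℤ → R}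

lemma Sys.qinv (S : Sys q r M Mi) (x : R) : (↑q⁻¹ : R) * x = x * (↑q⁻¹ : R) := by
  have : Commute (q : R) x := S.hq x
  exact this.units_inv_left

lemma Sys.kpow (S : Sys q r M Mi) (α : ℕ) (x : R) :
    (-(↑q⁻¹ : R)) ^ α * x = x * (-(↑q⁻¹ : R)) ^ α := by
  have : Commute (↑q⁻¹ : R) x := S.qinv x
  exact (this.neg_left).pow_left α

lemma Sys.kpow' (S : Sys q r M Mi) (α : ℕ) (x : R) :
    ((↑q⁻¹ : R)) ^ α * x = x * ((↑q⁻¹ : R)) ^ α := by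
  have : Commute (↑q⁻¹ : R) x := S.qinv x
  exact this.pow_left α

lemma Sys.rev (S : Sys q r M Mi) (α : ℕ) (n : ℤ) (hα : α ≤ r) :
    M (α + 1) (n - 1) * M (α + 1) (n + 1)
      = (q : R) ^ (α + 1) * M (α + 1) n ^ 2 - (q : R) ^ α * (M (α + 2) n * M α n) := by
  apply rev_sys (q : R) S.hq α (↑q⁻¹ : R) (by simp) (M (α + 1) n) (M (α + 1) (n + 1))
    (Mi (α + 1) (n + 1)) _ _ _ (S.iR _ _ (by omega)) (S.sys α n hα)
  · have := S.com1 (α + 1) (α + 1) n (by omega) (by omega)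
    simpa using this
  · have := S.com1 (α + 2) (α + 1) n (by omega) (by omega)
    rwa [min_eq_right (by omega)] at this
  · have := S.com1 α (α + 1) n (by omega) (by omega)
    rwa [min_eq_left (by omega)] at this

lemma uq_zero : Uq M 0 := by
  intro p s h _
  ext j
  simpa using h j (by omega)

lemma uq_succ (S : Sys q r M Mi) (α : ℕ) (hα : α ≤ r) (h : Pk q M Mi α) (u : Uq M α) :
    Uq M (α + 1) := by
  intro p s hd hv
  have e := h.ker u p s (fun j hj => hd j hj) (fun m h1 h2 => hv m h1 (by push_cast; omega))
  have e1 := hv (s + α) (by omega) (by push_cast; omega)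
  rw [e, ev_mul_C, h.hi] at e1
  have e2 : p.coeff 0 = 0 := by
    have h1 := S.iR (α + 1) s (by omega)
    have h2 := S.iL α (s - 1) (by omega)
    have h3 : (-(q : R)) ^ α * (-(↑q⁻¹ : R)) ^ α = 1 := by
      rw [← Commute.mul_pow]
      · simp
      · exact (show Commute (-(q : R)) (-(↑q⁻¹ : R)) by
          simp [Commute, SemiconjBy])
    calc p.coeff 0 = M α (s - 1) * (Mi (α + 1) s * (((-(q : R)) ^ α * (-(↑q⁻¹ : R)) ^ α) *
          M (α + 1) s)) * Mi α (s - 1) * p.coeff 0 := by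
            rw [h3, one_mul, h1, mul_one, h2, one_mul]
      _ = M α (s - 1) * Mi (α + 1) s * (-(q : R)) ^ α *
          ((-(↑q⁻¹ : R)) ^ α * M (α + 1) s * Mi α (s - 1) * p.coeff 0) := by
            simp only [mul_assoc]
      _ = 0 := by rw [e1, mul_zero]
  rw [e, e2]; simp

lemma Sys.Mi0 (S : Sys q r M Mi) (n : ℤ) : Mi 0 n = 1 := by
  have := S.iL 0 n (by omega)
  rwa [S.M0, one_mul] at this

lemma pk_zero (S : Sys q r M Mi) : Pk q M Mi 0 where
  deg := by
    intro n j hj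
    simp only [K, coeff_one]
    rw [if_neg (by omega)]
  c0 := by simp [K]
  van := by intro n m h1 h2; push_cast at h2; omega
  hi := by intro n; simp [K, ev_one, S.Mi0]
  lo := by intro n; simp [K, ev_one, S.Mi0]
  lc := by intro n; simp [K, S.M0, S.Mi0]

lemma K_alt (S : Sys q r M Mi) (α : ℕ) (hα : α ≤ r) (h : Pk q M Mi α) (u : Uq M (α + 1)) (n : ℤ)
    (hv : ∀ m : ℤ, n ≤ m → m < n + (α + 1 : ℕ) → ev (M 1) m (K M Mi (α + 1) n) = 0) :
    K M Mi (α + 1) n = K M Mi α (n + 1) - X * (K M Mi α n *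
      C (M α (n - 1) * Mi (α + 1) (n - 1) * M (α + 1) n * Mi α n)) := by
  set L := K M Mi α (n + 1) - X * (K M Mi α n *
      C (M α (n - 1) * Mi (α + 1) (n - 1) * M (α + 1) n * Mi α n)) with hL
  obtain ⟨p', hp'⟩ := eq_X_mul (K M Mi (α + 1) n - L) (by simp [hL, K, h.c0])
  have hp0 : p' = 0 := by
    apply u p' (n - 1)
    · intro j hj
      obtain ⟨i, rfl⟩ : ∃ i, j = i + 1 := ⟨j - 1, by omega⟩
      have : (X * p').coeff (i + 1 + 1) = p'.coeff (i + 1) := coeff_X_mul _ _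
      rw [← this, ← hp', hL, K]
      simp only [coeff_sub, coeff_X_mul, coeff_mul_C]
      rw [h.deg _ _ (by omega), h.deg _ _ (by omega), h.deg _ _ (by omega), h.deg _ _ (by omega)]
      simp
    · intro m h1 h2
      have : ev (M 1) (m + 1) (X * p') = ev (M 1) m p' := by rw [ev_X_mul]; simp
      rw [← this, ← hp', ev_sub, hv _ (by omega) (by omega), hL, ev_sub, ev_X_mul, ev_mul_C,
        add_sub_cancel_right]
      rcases eq_or_lt_of_le h1 with h1 | h1
      · subst h1
        have := h.lo (n + 1)
        rw [add_sub_cancel_right] at this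
        rw [sub_add_cancel, this, h.lo]
        have a1 := S.iR α (n - 1) (by omega)
        have a2 := S.iL (α + 1) (n - 1) (by omega)
        have : (↑q⁻¹ : R) ^ α * M (α + 1) (n - 1) * Mi α (n - 1) *
            (M α (n - 1) * Mi (α + 1) (n - 1) * M (α + 1) n * Mi α n)
            = (↑q⁻¹ : R) ^ α * (M (α + 1) (n - 1) * (Mi α (n - 1) * M α (n - 1))
              * Mi (α + 1) (n - 1)) * M (α + 1) n * Mi α n := by simp only [mul_assoc]
        rw [this, a1, mul_one, a2, mul_one]; simp
      · rw [h.van (n + 1) _ (by omega) (by push_cast at h2; omega),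
          h.van n _ (by omega) (by push_cast at h2; omega)]
        simp
  rw [hp0, mul_zero] at hp'
  exact sub_eq_zero.mp hp'

lemma pk_succ (S : Sys q r M Mi) (α : ℕ) (hα : α ≤ r) (h : Pk q M Mi α) (u : Uq M (α + 1)) :
    Pk q M Mi (α + 1) := by
  have hv : ∀ n m : ℤ, n ≤ m → m < n + (α + 1 : ℕ) → ev (M 1) m (K M Mi (α + 1) n) = 0 := by
    intro n m h1 h2
    rw [K, ev_sub, ev_X_mul, ev_mul_C]
    push_cast at h2
    rcases (show m < n + α ∨ m = n + α by omega) with h3 | h3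
    · rw [h.van _ _ h1 h3, h.van _ _ (by omega) (by omega)]; simp
    · subst h3
      rw [show n + (α : ℤ) - 1 = (n - 1) + α by ring, h.hi, h.hi,
        show n - 1 - 1 = n - 2 by ring]
      have a1 := S.iR α (n - 2) (by omega)
      have a2 := S.iL (α + 1) (n - 1) (by omega)
      have : (-(↑q⁻¹ : R)) ^ α * M (α + 1) (n - 1) * Mi α (n - 2) *
            (M α (n - 2) * Mi (α + 1) (n - 1) * M (α + 1) n * Mi α (n - 1))
            = (-(↑q⁻¹ : R)) ^ α * (M (α + 1) (n - 1) * (Mi α (n - 2) * M α (n - 2))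
              * Mi (α + 1) (n - 1)) * M (α + 1) n * Mi α (n - 1) := by simp only [mul_assoc]
      rw [this, a1, mul_one, a2, mul_one]; simp
  have cBB : ∀ n, M (α + 1) (n - 1) * M (α + 1) n
      = (q : R) ^ (α + 1) * M (α + 1) n * M (α + 1) (n - 1) := by
    intro n
    have := S.com1 (α + 1) (α + 1) (n - 1) (by omega) (by omega)
    rwa [sub_add_cancel, min_self] at this
  have cBD : ∀ n, M (α + 1) (n - 1) * M α n
      = (q : R) ^ α * M α n * M (α + 1) (n - 1) := by
    intro n
    have := S.com1 (α + 1) α (n - 1) (by omega) (by omega)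
    rwa [sub_add_cancel, min_eq_right (by omega)] at this
  have hqi : (↑q⁻¹ : R) * (q : R) = 1 := by simp
  refine ⟨?_, ?_, hv, ?_, ?_, ?_⟩
  · intro n j hj
    obtain ⟨i, rfl⟩ : ∃ i, j = i + 1 := ⟨j - 1, by omega⟩
    rw [K]
    simp only [coeff_sub, coeff_X_mul, coeff_mul_C]
    rw [h.deg _ _ (by omega), h.deg _ _ (by omega)]; simp
  · intro n
    rw [K]; simp [h.c0]
  · intro n
    rw [K_alt S α hα h u n (hv n), ev_sub, ev_X_mul, ev_mul_C]
    have e1 := h.hi (n + 1)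
    rw [add_sub_cancel_right] at e1
    rw [show n + ((α + 1 : ℕ) : ℤ) = n + 1 + α by push_cast; ring, e1,
      show n + 1 + (α : ℤ) - 1 = n + α by ring, h.hi]
    rw [step_h (q : R) (↑q⁻¹ : R) _ S.hq hqi (S.kpow α) α (M (α + 1) n) (M (α + 1) (n + 1))
      (M (α + 1) (n - 1)) (Mi (α + 1) (n - 1)) (M α n) (Mi α n) (M α (n - 1)) (Mi α (n - 1))
      (M (α + 2) n) (S.iR _ _ (by omega)) (S.iL _ _ (by omega)) (S.iR _ _ (by omega))
      (S.iL _ _ (by omega)) (S.iR _ _ (by omega)) (S.sys α n hα) (cBB n) (cBD n)]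
    rw [pow_succ']
  · intro n
    rw [K, ev_sub, ev_X_mul, ev_mul_C, h.lo, h.lo, show n - 1 - 1 = n - 2 by ring]
    have c1 := cBB (n - 1)
    have s1 := S.rev α (n - 1) hα
    rw [show n - 1 - 1 = n - 2 by ring] at c1 s1
    rw [sub_add_cancel] at s1
    rw [step_l (q : R) (↑q⁻¹ : R) _ S.hq hqi (S.kpow' α) α (M (α + 1) (n - 1))
      (Mi (α + 1) (n - 1)) (M (α + 1) n)
      (M (α + 1) (n - 2)) (M α (n - 1)) (Mi α (n - 1)) (M α (n - 2)) (Mi α (n - 2))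
      (M (α + 2) (n - 1)) (S.iR _ _ (by omega)) (S.iL _ _ (by omega)) (S.iR _ _ (by omega))
      (S.iL _ _ (by omega)) (S.iR _ _ (by omega)) s1 c1
      (S.com0 _ _ _ (by omega) (by omega))]
    rw [pow_succ']
  · intro n
    rw [K_alt S α hα h u n (hv n), coeff_sub, coeff_X_mul, coeff_mul_C, h.deg _ _ (by omega), h.lc,
      zero_sub]
    rw [step_c (q : R) (↑q⁻¹ : R) _ S.hq hqi (S.kpow α) α (M (α + 1) n)
      (M (α + 1) (n - 1)) (Mi (α + 1) (n - 1)) (M α n) (Mi α n) (M α (n - 1)) (Mi α (n - 1))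
      (S.iR _ _ (by omega)) (S.iL _ _ (by omega)) (S.iR _ _ (by omega))
      (S.iL _ _ (by omega)) (S.iR _ _ (by omega)) (cBB n) (cBD n)
      (S.com0 _ _ _ (by omega) (by omega))]
    rw [pow_succ']

lemma pk_all (S : Sys q r M Mi) (α : ℕ) (hα : α ≤ r + 1) : Pk q M Mi α ∧ Uq M α := by
  induction α with
  | zero => exact ⟨pk_zero S, uq_zero⟩
  | succ α ih =>
    obtain ⟨h, u⟩ := ih (by omega)
    have u' := uq_succ S α (by omega) h u
    exact ⟨pk_succ S α (by omega) h u', u'⟩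


/-- the quadratic relation -/
def Rf (q : Rˣ) (M : ℕ → ℤ → R) (a b : ℤ) : R :=
  (M 1 a * M 1 b - q * M 1 (a + 1) * M 1 (b - 1)) -
    (M 1 b * (q * M 1 a) - M 1 (b - 1) * M 1 (a + 1))

noncomputable def dl (q : Rˣ) (M : ℕ → ℤ → R) (a : ℤ) (p : R[X]) : R[X] :=
  C (q * M 1 a) * p - X * (C (M 1 (a + 1)) * p) - (p * C (q * M 1 a)
    - X * (p * C (q * M 1 (a + 1))))

lemma ev_dl (a m : ℤ) (p : R[X]) : ev (M 1) m (dl q M a p)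
    = M 1 a * ev (M 1) m p - q * M 1 (a + 1) * ev (M 1) (m - 1) p
      - (ev (M 1) m p * (q * M 1 a) - ev (M 1) (m - 1) p * (q * M 1 (a + 1)))
      - ev (Rf q M a) m p := by
  have e : ev (Rf q M a) m p = (M 1 a * ev (M 1) m p - q * M 1 (a + 1) * ev (M 1) (m - 1) p) -
      (ev (fun i => M 1 i * (q * M 1 a)) m p - ev (fun i => M 1 i * M 1 (a + 1)) (m - 1) p) := by
    rw [← ev_shift (M 1) m p, ← ev_shift (fun i => M 1 i * M 1 (a + 1)) m p, ← ev_lmul, ← ev_lmul,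
      ← ev_fsub, ← ev_fsub, ← ev_fsub]
    rfl
  rw [e, dl]
  simp only [ev_sub, ev_X_mul, ev_mul_C, ev_C_mul]
  abel

lemma Sys.zp (S : Sys q r M Mi) (k : ℤ) (x : R) :
    ((q ^ k : Rˣ) : R) * x = x * ((q ^ k : Rˣ) : R) := by
  have : Commute x (q : R) := (S.hq x).symm
  exact (this.units_zpow_right k).symm

/-- commutation of `M 1 x` with a ratio -/
lemma Sys.ratio (S : Sys q r M Mi) (x n n' : ℤ) (β α : ℕ) (k : R) (hk : ∀ y, k * y = y * k)
    (hβ : 1 ≤ β) (hα : 1 ≤ α)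
    (hβ' : β ≤ r + 2) (hα' : α ≤ r + 1) (h1 : |n - x| ≤ (β : ℤ) ∨ r + 1 ≤ β)
    (h2 : |n' - x| ≤ (α : ℤ) ∨ r + 1 ≤ α) :
    M 1 x * (k * M β n * Mi α n') =
      ((q ^ (n - n') : Rˣ) : R) * ((k * M β n * Mi α n') * M 1 x) := by
  have e1 := S.ext β x n hβ hβ' h1
  have e2 := S.ext α x n' hα (by omega) h2
  have e3 := qc_inv _ _ _ _ (S.zp _) (S.iL α n' hα') (S.iR α n' hα') e2
  have e4 := qc_mul _ _ _ _ _ (by rw [← zpow_neg]; exact S.zp _) e1 e3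
  rw [← zpow_neg, ← zpow_add, show n - x + -(n' - x) = n - n' by ring] at e4
  rw [mul_assoc k, ← mul_assoc (M 1 x), ← hk, mul_assoc k (M 1 x), e4]
  rw [mul_assoc, ← mul_assoc k, hk]
  simp only [mul_assoc]

lemma step_R (S : Sys q r M Mi) (α : ℕ) (a n : ℤ) (h1 : 1 ≤ α) (hα : α ≤ r + 1)
    (hn : n = a + 2 ∨ α = r + 1)
    (hR : ∀ b, n - α ≤ b → b < n + α → Rf q M a b = 0) : Rf q M a (n + α) = 0 := by
  obtain ⟨h, u⟩ := pk_all S α hα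
  set p := K M Mi α n with hp
  have hlo : M 1 (a + 1) * ev (M 1) (n - 1) p = ev (M 1) (n - 1) p * M 1 (a + 1) := by
    rw [hp, h.lo]
    have := S.ratio (a + 1) (n - 1) (n - 1) (α + 1) α _ (S.kpow' α) (by omega) h1 (by omega) hα
      (by rcases hn with hn | hn
          · left; rw [hn]; ring_nf; simp; omega
          · right; omega)
      (by rcases hn with hn | hn
          · left; rw [hn]; ring_nf; simp
          · right; omega)
    rwa [sub_self, zpow_zero, Units.val_one, one_mul] at this
  have hhi : M 1 a * ev (M 1) (n + α) p = q * (ev (M 1) (n + α) p * M 1 a) := by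
    rw [hp, h.hi]
    have := S.ratio a n (n - 1) (α + 1) α _ (S.kpow α) (by omega) h1 (by omega) hα
      (by rcases hn with hn | hn
          · left; rw [hn]; ring_nf; simp; omega
          · right; omega)
      (by rcases hn with hn | hn
          · left; rw [hn]; ring_nf; simp; omega
          · right; omega)
    rwa [sub_sub_cancel, zpow_one] at this
  have hlc : M 1 (a + 1) * p.coeff α = q * (p.coeff α * M 1 (a + 1)) := by
    rw [hp, h.lc]
    have := S.ratio (a + 1) n (n - 1) α α _ (S.kpow α) h1 h1 (by omega) hα
      (by rcases hn with hn | hn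
          · left; rw [hn]; ring_nf; simp; omega
          · right; omega)
      (by rcases hn with hn | hn
          · left; rw [hn]; ring_nf; simp
          · right; omega)
    rwa [sub_sub_cancel, zpow_one] at this
  have hv : ∀ m, n ≤ m → m < n + α → ev (M 1) m (dl q M a p) = 0 := by
    intro m m1 m2
    have r0 : ev (Rf q M a) m p = 0 := by
      rw [ev_head _ m α p (h.deg n) (fun i i1 i2 => hR i (by omega) (by omega)), hR m (by omega) m2,
        zero_mul]
    rw [ev_dl, r0, h.van n m m1 m2]
    rcases eq_or_lt_of_le m1 with m1 | m1
    · subst m1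
      have t : ev (M 1) (n - 1) p * (q * M 1 (a + 1)) = q * (ev (M 1) (n - 1) p * M 1 (a + 1)) := by
        rw [← mul_assoc, ← S.hq, mul_assoc]
      rw [mul_assoc (q : R), hlo, t]
      simp
    · rw [h.van n (m - 1) (by omega) (by omega)]; simp
  have hd0 : dl q M a p = 0 := by
    obtain ⟨p', hp'⟩ := eq_X_mul (dl q M a p) (by
      simp only [dl, coeff_sub, coeff_C_mul, coeff_mul_C, coeff_X_mul_zero]
      rw [hp, h.c0]; simp)
    have hco : ∀ j, p'.coeff j = q * M 1 a * p.coeff (j + 1) - M 1 (a + 1) * p.coeff j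
        - (p.coeff (j + 1) * (q * M 1 a) - p.coeff j * (q * M 1 (a + 1))) := by
      intro j
      rw [← coeff_X_mul p' j, ← hp', dl]
      simp only [coeff_sub, coeff_C_mul, coeff_mul_C, coeff_X_mul]
    have e := h.ker u p' (n - 1) (by
        intro j hj
        rw [hco, hp, h.deg n j hj, h.deg n (j + 1) (by omega)]; simp) (by
        intro m m1 m2
        have : ev (M 1) (m + 1) (X * p') = ev (M 1) m p' := by rw [ev_X_mul]; simp
        rw [← this, ← hp']
        exact hv _ (by omega) (by omega))
    have e1 := hco α
    have hz : p.coeff (α + 1) = 0 := h.deg n (α + 1) (by omega)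
    rw [hz, hlc, ← mul_assoc (p.coeff α) (q : R), ← S.hq] at e1
    have e2 : p'.coeff α = 0 := by rw [e1]; simp [mul_assoc]
    rw [e, coeff_mul_C, h.lc] at e2
    have e3 : p'.coeff 0 = 0 := by
      have i1 := S.iR α (n - 1) hα
      have i2 := S.iL α (n - 1 - 1) hα
      have i3 : (-(q : R)) ^ α * (-(↑q⁻¹ : R)) ^ α = 1 := by
        rw [← Commute.mul_pow]
        · simp
        · exact (show Commute (-(q : R)) (-(↑q⁻¹ : R)) by
            simp [Commute, SemiconjBy])
      calc p'.coeff 0 = M α (n - 1 - 1) * (Mi α (n - 1) * (((-(q : R)) ^ α * (-(↑q⁻¹ : R)) ^ α) *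
            M α (n - 1))) * Mi α (n - 1 - 1) * p'.coeff 0 := by
              rw [i3, one_mul, i1, mul_one, i2, one_mul]
        _ = M α (n - 1 - 1) * Mi α (n - 1) * (-(q : R)) ^ α *
            ((-(↑q⁻¹ : R)) ^ α * M α (n - 1) * Mi α (n - 1 - 1) * p'.coeff 0) := by
              simp only [mul_assoc]
        _ = 0 := by rw [e2, mul_zero]
    rw [hp', e, e3]; simp
  have f := ev_dl (q := q) (M := M) a (n + α) p
  have hc0 : p.coeff 0 = 1 := h.c0 n
  rw [hd0, ev_zero, h.van n (n + α - 1) (by omega) (by omega), hhi,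
    ← mul_assoc _ (q : R), ← S.hq,
    ev_head _ (n + α) α p (h.deg n) (fun i i1 i2 => hR i (by omega) (by omega)), hc0] at f
  simpa [mul_assoc] using f

lemma Rf_symm (S : Sys q r M Mi) (a b : ℤ) : Rf q M a b = Rf q M (b - 1) (a + 1) := by
  unfold Rf
  simp only [sub_add_cancel, add_sub_cancel_right]
  rw [← mul_assoc (M 1 b), ← S.hq, ← mul_assoc (M 1 (a + 1)), ← S.hq]
  abel

lemma Rf_one (S : Sys q r M Mi) (a : ℤ) : Rf q M a (a + 1) = 0 := by
  have := S.com1 1 1 a (by omega) (by omega)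
  simp only [min_self, pow_one] at this
  unfold Rf
  simp only [add_sub_cancel_right]
  rw [← mul_assoc (M 1 (a + 1)) (q : R), ← S.hq, ← this]
  abel

lemma Rf_two (S : Sys q r M Mi) (a : ℤ) : Rf q M a (a + 2) = 0 := by
  have e1 := S.rev 0 (a + 1) (by omega)
  have e2 := S.sys 0 (a + 1) (by omega)
  simp only [zero_add, pow_one, pow_zero, one_mul, S.M0, mul_one, add_sub_cancel_right,
    show a + 1 + 1 = a + 2 by ring] at e1 e2
  unfold Rf
  rw [show a + 2 - 1 = a + 1 by ring, ← mul_assoc (M 1 (a + 2)) (q : R), ← S.hq, e1, e2]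
  simp only [pow_two, mul_assoc]
  abel

lemma Rf_pos (S : Sys q r M Mi) (d : ℕ) (hd : 1 ≤ d) : ∀ a, Rf q M a (a + d) = 0 := by
  induction d using Nat.strong_induction_on with
  | _ d ih =>
    intro a
    rcases (show d = 1 ∨ d = 2 ∨ 3 ≤ d by omega) with h | h | h
    · subst h; simpa using Rf_one S a
    · subst h; simpa using Rf_two S a
    · obtain ⟨α, hα1, hα2, hα3, hα4⟩ : ∃ α : ℕ, 1 ≤ α ∧ α ≤ r + 1 ∧ α ≤ d - 2 ∧
          (α = d - 2 ∨ α = r + 1) :=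
        ⟨min (d - 2) (r + 1), by omega, by omega, by omega, by omega⟩
      have := step_R S α a (a + d - α) hα1 hα2 (by omega) (by
        intro b hb1 hb2
        rcases le_or_gt 1 (b - a) with h5 | h5
        · have := ih (b - a).toNat (by omega) (by omega) a
          rwa [Int.toNat_of_nonneg (by omega), add_sub_cancel] at this
        · rw [Rf_symm S]
          have := ih (a + 2 - b).toNat (by omega) (by omega) (b - 1)
          rwa [Int.toNat_of_nonneg (by omega), show b - 1 + (a + 2 - b) = a + 1 by ring] at this)
      rwa [sub_add_cancel] at this

lemma Rf_all (S : Sys q r M Mi) (a b : ℤ) : Rf q M a b = 0 := by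
  rcases le_or_gt 1 (b - a) with h5 | h5
  · have := Rf_pos S (b - a).toNat (by omega) a
    rwa [Int.toNat_of_nonneg (by omega), add_sub_cancel] at this
  · rw [Rf_symm S]
    have := Rf_pos S (a + 2 - b).toNat (by omega) (b - 1)
    rwa [Int.toNat_of_nonneg (by omega), show b - 1 + (a + 2 - b) = a + 1 by ring] at this

lemma rel (S : Sys q r M Mi) (a b a' b' : ℤ) (ha : a' = a + 1) (hb : b' = b + 1) :
    M 1 a * M 1 b' - q * (M 1 a' * M 1 b) + M 1 b * M 1 a' - q * (M 1 b' * M 1 a) = 0 := by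
  have := Rf_all S a (b + 1)
  subst ha hb
  unfold Rf at this
  rw [add_sub_cancel_right, ← mul_assoc (M 1 (b + 1)) (q : R), ← S.hq] at this
  rw [← this]
  simp only [mul_assoc]
  abel

/-- contribution of a pair `x,y` and third index `c` -/
lemma contrib (q : R) (x x0 x1 y y0 y1 c c0 c1 : R) (hq : ∀ x, q * x = x * q)
    (r11 : x * y1 - q * (x1 * y) + y * x1 - q * (y1 * x) = 0)
    (r10 : x * y - q * (x1 * y0) + y0 * x1 - q * (y * x) = 0)
    (r01 : x0 * y1 - q * (x * y) + y * x - q * (y1 * x0) = 0)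
    (r00 : x0 * y - q * (x * y0) + y0 * x - q * (y * x0) = 0) :
    (q - 1) * ((x * y1 - q * (x1 * y) + y * x1 - q * (y1 * x)) * c0)
    - (x * y - q * (x1 * y0) + y0 * x1 - q * (y * x)
      + (x0 * y1 - q * (x * y) + y * x - q * (y1 * x0))) * c
    + c * (x * y - q * (x1 * y0) + y0 * x1 - q * (y * x)
      + (x0 * y1 - q * (x * y) + y * x - q * (y1 * x0)))
    + (1 - q) * (c1 * (x0 * y - q * (x * y0) + y0 * x - q * (y * x0))) = 0 := by
  rw [r11, r10, r01, r00]; simp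

lemma cubic (q : R) (x x0 x1 y y0 y1 c c0 c1 : R) (hq : ∀ x, q * x = x * q)
    (A : (q - 1) * ((x * y1 - q * (x1 * y) + y * x1 - q * (y1 * x)) * c0)
    - (x * y - q * (x1 * y0) + y0 * x1 - q * (y * x)
      + (x0 * y1 - q * (x * y) + y * x - q * (y1 * x0))) * c
    + c * (x * y - q * (x1 * y0) + y0 * x1 - q * (y * x)
      + (x0 * y1 - q * (x * y) + y * x - q * (y1 * x0)))
    + (1 - q) * (c1 * (x0 * y - q * (x * y0) + y0 * x - q * (y * x0))) = 0)
    (B : (q - 1) * ((x * c1 - q * (x1 * c) + c * x1 - q * (c1 * x)) * y0)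
    - (x * c - q * (x1 * c0) + c0 * x1 - q * (c * x)
      + (x0 * c1 - q * (x * c) + c * x - q * (c1 * x0))) * y
    + y * (x * c - q * (x1 * c0) + c0 * x1 - q * (c * x)
      + (x0 * c1 - q * (x * c) + c * x - q * (c1 * x0)))
    + (1 - q) * (y1 * (x0 * c - q * (x * c0) + c0 * x - q * (c * x0))) = 0)
    (D : (q - 1) * ((y * c1 - q * (y1 * c) + c * y1 - q * (c1 * y)) * x0)
    - (y * c - q * (y1 * c0) + c0 * y1 - q * (c * y)
      + (y0 * c1 - q * (y * c) + c * y - q * (c1 * y0))) * x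
    + x * (y * c - q * (y1 * c0) + c0 * y1 - q * (c * y)
      + (y0 * c1 - q * (y * c) + c * y - q * (c1 * y0)))
    + (1 - q) * (x1 * (y0 * c - q * (y * c0) + c0 * y - q * (c * y0))) = 0) :
    ⁅x, ⁅y0, c1⁆⁆ + ⁅x, ⁅c0, y1⁆⁆ + ⁅y, ⁅x0, c1⁆⁆ + ⁅y, ⁅c0, x1⁆⁆ + ⁅c, ⁅x0, y1⁆⁆ + ⁅c, ⁅y0, x1⁆⁆
      = 0 := by
  have h := congrArg₂ (· + ·) (congrArg₂ (· + ·) A B) D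
  simp only [add_zero] at h
  rw [← h]
  have hx : ∀ z, x * (q * z) = q * (x * z) := fun z => by rw [← mul_assoc, ← hq, mul_assoc]
  have hy : ∀ z, y * (q * z) = q * (y * z) := fun z => by rw [← mul_assoc, ← hq, mul_assoc]
  have hc : ∀ z, c * (q * z) = q * (c * z) := fun z => by rw [← mul_assoc, ← hq, mul_assoc]
  have hx1 : ∀ z, x1 * (q * z) = q * (x1 * z) := fun z => by rw [← mul_assoc, ← hq, mul_assoc]
  have hy1 : ∀ z, y1 * (q * z) = q * (y1 * z) := fun z => by rw [← mul_assoc, ← hq, mul_assoc]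
  have hc1 : ∀ z, c1 * (q * z) = q * (c1 * z) := fun z => by rw [← mul_assoc, ← hq, mul_assoc]
  simp only [Ring.lie_def, mul_sub, sub_mul, mul_add, add_mul, mul_assoc, one_mul, hx, hy, hc,
    hx1, hy1, hc1]
  abel

end K

end QQ



theorem quantum_Q_cubic_relation
    {R : Type*} [Ring R] (q A Δ : Rˣ)
    (hq : ∀ x : R, (q : R) * x = x * (q : R))
    (r : ℕ) (hr : 1 ≤ r)
    (M Mi : ℕ → ℤ → R)
    (hM0 : ∀ n : ℤ, M 0 n = 1)
    (hMtop : ∀ n : ℤ, M (r + 2) n = 0)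
    (hMiL : ∀ (α : ℕ) (n : ℤ), α ≤ r + 1 → M α n * Mi α n = 1)
    (hMiR : ∀ (α : ℕ) (n : ℤ), α ≤ r + 1 → Mi α n * M α n = 1)
    (hMsys : ∀ (α : ℕ) (n : ℤ), 1 ≤ α → α ≤ r + 1 →
      (q : R) ^ α * M α (n + 1) * M α (n - 1) = M α n ^ 2 - M (α + 1) n * M (α - 1) n)
    (hcom : ∀ (α β ε : ℕ) (n : ℤ), ε ≤ 1 → α ≤ r + 1 → β ≤ r + 1 →
      M α n * M β (n + (ε : ℤ)) = (q : R) ^ (ε * min α β) * M β (n + (ε : ℤ)) * M α n)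
    (hAΔ : ∀ n : ℤ, M (r + 1) n = ((A ^ n : Rˣ) : R) * (Δ : R))
    (hΔM : ∀ (α : ℕ) (n : ℤ), 1 ≤ α → α ≤ r + 1 →
      (Δ : R) * M α n = ((q ^ ((α : ℤ) * n) : Rˣ) : R) * M α n * (Δ : R))
    (hAM : ∀ (α : ℕ) (n : ℤ), 1 ≤ α → α ≤ r + 1 →
      (A : R) * M α n = ((q ^ (-(α : ℤ)) : Rˣ) : R) * M α n * (A : R))
    (hΔA : (Δ : R) * (A : R) = (q : R) ^ (r + 1) * (A : R) * (Δ : R))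
    (hext : ∀ (α β : ℕ) (n p : ℤ), α ≤ r + 1 → β ≤ r + 1 →
      |p| ≤ |(β : ℤ) - (α : ℤ)| + 1 →
      M α n * M β (n + p) = ((q ^ (p * ((min α β : ℕ) : ℤ)) : Rˣ) : R) * M β (n + p) * M α n) :
    ∀ n p k : ℤ,
      ⁅M 1 n, ⁅M 1 (p - 1), M 1 (k + 1)⁆⁆ + ⁅M 1 n, ⁅M 1 (k - 1), M 1 (p + 1)⁆⁆
        + ⁅M 1 p, ⁅M 1 (n - 1), M 1 (k + 1)⁆⁆ + ⁅M 1 p, ⁅M 1 (k - 1), M 1 (n + 1)⁆⁆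
        + ⁅M 1 k, ⁅M 1 (n - 1), M 1 (p + 1)⁆⁆ + ⁅M 1 k, ⁅M 1 (p - 1), M 1 (n + 1)⁆⁆ = 0 := by
  have hmin : ∀ β : ℕ, 1 ≤ β → min 1 β = 1 := fun β h => min_eq_left h
  have hzp : ∀ (k : ℤ) (x : R), ((q ^ k : Rˣ) : R) * x = x * ((q ^ k : Rˣ) : R) := by
    intro k x
    have : Commute x (q : R) := (hq x).symm
    exact (this.units_zpow_right k).symm
  have hApow : ∀ (n a : ℤ), ((A ^ n : Rˣ) : R) * M 1 a
      = ((q ^ (-n) : Rˣ) : R) * M 1 a * ((A ^ n : Rˣ) : R) := by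
    intro n a
    have h1 := hAM 1 a le_rfl (by omega)
    have h2 : SemiconjBy (M 1 a) (((q⁻¹ * A : Rˣ)) : R) (A : R) := by
      unfold SemiconjBy
      have h3 := hzp (-1) (M 1 a)
      rw [zpow_neg_one] at h3
      rw [h1, Units.val_mul, ← mul_assoc, ← h3]
      simp
    have h4 := h2.units_zpow_right n
    have h5 : Commute q⁻¹ A := by
      have : Commute q A := Units.ext (hq A)
      exact this.inv_left
    unfold SemiconjBy at h4
    rw [← h4, h5.mul_zpow, inv_zpow', Units.val_mul, ← mul_assoc, ← hzp]
  have S : QQ.Sys q r M Mi := by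
    refine ⟨hq, hM0, hMtop, hMiL, hMiR, ?_, ?_, ?_, ?_⟩
    · intro α n hα
      have := hMsys (α + 1) n (by omega) (by omega)
      simpa using this
    · intro α β n hα hβ
      rcases Nat.lt_or_ge (r + 1) α with h | h
      · obtain rfl : α = r + 2 := by omega
        simp [hMtop]
      rcases Nat.lt_or_ge (r + 1) β with h' | h'
      · obtain rfl : β = r + 2 := by omega
        simp [hMtop]
      have := hcom α β 0 n (by omega) h h'
      simpa using this
    · intro α β n hα hβ
      rcases Nat.lt_or_ge (r + 1) α with h | h
      · obtain rfl : α = r + 2 := by omega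
        simp [hMtop]
      rcases Nat.lt_or_ge (r + 1) β with h' | h'
      · obtain rfl : β = r + 2 := by omega
        simp [hMtop]
      have := hcom α β 1 n (by omega) h h'
      simpa using this
    · intro α a n h1 hα h
      rcases Nat.lt_or_ge (r + 1) α with h2 | h2
      · obtain rfl : α = r + 2 := by omega
        simp [hMtop]
      rcases h with h | h
      · have := hext 1 α a (n - a) (by omega) h2 (by
          rw [abs_of_nonneg (a := (α : ℤ) - ((1 : ℕ) : ℤ)) (by push_cast; omega)]
          push_cast; linarith)
        rw [hmin α h1] at this
        simpa using this
      · obtain rfl : α = r + 1 := by omega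
        rw [hAΔ]
        have e1 := hΔM 1 a le_rfl (by omega)
        have e2 := hApow n a
        have e3 : ((A ^ n : Rˣ) : R) * (Δ : R) * M 1 a
            = ((q ^ (a - n) : Rˣ) : R) * (M 1 a * (((A ^ n : Rˣ) : R) * (Δ : R))) := by
          rw [mul_assoc, e1, mul_assoc (_ : R) (M 1 a), ← mul_assoc ((A ^ n : Rˣ) : R), ← hzp,
            mul_assoc, ← mul_assoc ((A ^ n : Rˣ) : R), e2]
          rw [show a - n = (((1 : ℕ) : ℤ) * a) + (-n) by push_cast; ring, zpow_add, Units.val_mul]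
          simp only [mul_assoc]
        have e4 : ((q ^ (n - a) : Rˣ) : R) * ((q ^ (a - n) : Rˣ) : R) = 1 := by
          rw [← Units.val_mul, ← zpow_add]; simp
        rw [mul_assoc, e3, ← mul_assoc ((q ^ (n - a) : Rˣ) : R), e4, one_mul]
  intro n p k
  have cc : ∀ x y c : ℤ, _ := fun x y c => QQ.contrib (q : R) (M 1 x) (M 1 (x - 1)) (M 1 (x + 1))
    (M 1 y) (M 1 (y - 1)) (M 1 (y + 1)) (M 1 c) (M 1 (c - 1)) (M 1 (c + 1)) hq
    (QQ.rel S x y (x + 1) (y + 1) rfl rfl)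
    (QQ.rel S x (y - 1) (x + 1) y rfl (by ring))
    (QQ.rel S (x - 1) y x (y + 1) (by ring) rfl)
    (QQ.rel S (x - 1) (y - 1) x y (by ring) (by ring))
  exact QQ.cubic (q : R) _ _ _ _ _ _ _ _ _ hq (cc n p k) (cc n k p) (cc p k n)
end

section
/- Under these hypotheses, for all 2 ≤ α ≤ r+2 and all n ∈ ℤ one has the two recursion relations (−1)^α·(q−1)·M_{α,n} = [M_{α-1,n-1}, M_{n+α-1}]_{q^α} and (−1)^α·(q−1)·M_{α,n} = [M_{n-α+1}, M_{α-1,n+1}]_{q^α}, where M_n := M_{1,n}. -/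
theorem step_one {S R : Type*} [CommRing S] [Ring R] [Algebra S R] (q Q Qi c : S)
    (hQ : Qi * Q = 1) (M Z P W Wi X Y : R)
    (h : M * Z = P * P - Q • (W * X))
    (hMY : M * Y = Q • (Y * M)) (hPY : P * Y = Q • (Y * P))
    (hWY : q • (W * Y) = Q • (Y * W)) (hMW : M * W = Q • (W * M))
    (hU : Z * Y - Q • (Y * Z) = c • W) (hW : Wi * W = 1) :
    X * Y - (Q * q) • (Y * X) = - (c • M) := by
  have a1 := congrArg (fun t => t * Y) h
  have a2 := congrArg (fun t => Y * t) h
  have a3 := congrArg (fun t => t * Z) hMY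
  have a4 := congrArg (fun t => P * t) hPY
  have a5 := congrArg (fun t => t * P) hPY
  have a6 := congrArg (fun t => t * X) hWY
  have a7 := congrArg (fun t => M * t) hU
  simp only [mul_sub, sub_mul, smul_mul_assoc, mul_smul_comm, mul_assoc] at a1 a2 a3 a4 a5 a6 a7
  have key : Q • (W * (X * Y - (Q * q) • (Y * X) + c • M)) = 0 := by
    simp only [mul_sub, mul_add, mul_smul_comm]
    linear_combination (norm := module) a1 - (Q * Q) • a2 - Q • a3 + a4 + Q • a5 - (Q * Q) • a6 - a7 - c • hMW
  have k2 : X * Y - (Q * q) • (Y * X) + c • M = 0 := by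
    have := congrArg (fun t => Wi * (Qi • t)) key
    simpa [smul_smul, hQ, ← mul_assoc, hW] using this
  exact eq_neg_of_add_eq_zero_left k2

theorem step_two {S R : Type*} [CommRing S] [Ring R] [Algebra S R] (q Q Qi c : S)
    (hQ : Qi * Q = 1) (M Z P W Wi X Y : R)
    (h : Z * M = P * P - Q • (X * W))
    (hMY : Y * M = Q • (M * Y)) (hPY : Y * P = Q • (P * Y))
    (hWY : q • (Y * W) = Q • (W * Y)) (hMW : W * M = Q • (M * W))
    (hU : Y * Z - Q • (Z * Y) = c • W) (hW : W * Wi = 1) :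
    Y * X - (Q * q) • (X * Y) = - (c • M) := by
  have key := step_one (R := Rᵐᵒᵖ) q Q Qi c hQ (.op M) (.op Z) (.op P) (.op W) (.op Wi) (.op X) (.op Y)
    (congrArg MulOpposite.op h) (congrArg MulOpposite.op hMY) (congrArg MulOpposite.op hPY)
    (congrArg MulOpposite.op hWY) (congrArg MulOpposite.op hMW) (congrArg MulOpposite.op hU)
    (congrArg MulOpposite.op hW)
  exact congrArg MulOpposite.unop key

theorem quantum_Q_recursion_relations
    {R : Type*} [Ring R] (q A Δ : Rˣ)
    (hq : ∀ x : R, (q : R) * x = x * (q : R))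
    (r : ℕ) (hr : 1 ≤ r)
    (M Mi : ℕ → ℤ → R)
    (hM0 : ∀ n : ℤ, M 0 n = 1)
    (hMtop : ∀ n : ℤ, M (r + 2) n = 0)
    (hMiL : ∀ (α : ℕ) (n : ℤ), α ≤ r + 1 → M α n * Mi α n = 1)
    (hMiR : ∀ (α : ℕ) (n : ℤ), α ≤ r + 1 → Mi α n * M α n = 1)
    (hMsys : ∀ (α : ℕ) (n : ℤ), 1 ≤ α → α ≤ r + 1 →
      (q : R) ^ α * M α (n + 1) * M α (n - 1) = M α n ^ 2 - M (α + 1) n * M (α - 1) n)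
    (hcom : ∀ (α β ε : ℕ) (n : ℤ), ε ≤ 1 → α ≤ r + 1 → β ≤ r + 1 →
      M α n * M β (n + (ε : ℤ)) = (q : R) ^ (ε * min α β) * M β (n + (ε : ℤ)) * M α n)
    (hAΔ : ∀ n : ℤ, M (r + 1) n = ((A ^ n : Rˣ) : R) * (Δ : R))
    (hΔM : ∀ (α : ℕ) (n : ℤ), 1 ≤ α → α ≤ r + 1 →
      (Δ : R) * M α n = ((q ^ ((α : ℤ) * n) : Rˣ) : R) * M α n * (Δ : R))
    (hAM : ∀ (α : ℕ) (n : ℤ), 1 ≤ α → α ≤ r + 1 →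
      (A : R) * M α n = ((q ^ (-(α : ℤ)) : Rˣ) : R) * M α n * (A : R))
    (hΔA : (Δ : R) * (A : R) = (q : R) ^ (r + 1) * (A : R) * (Δ : R))
    (hext : ∀ (α β : ℕ) (n p : ℤ), α ≤ r + 1 → β ≤ r + 1 →
      |p| ≤ |(β : ℤ) - (α : ℤ)| + 1 →
      M α n * M β (n + p) = ((q ^ (p * ((min α β : ℕ) : ℤ)) : Rˣ) : R) * M β (n + p) * M α n) :
    ∀ (α : ℕ) (n : ℤ), 2 ≤ α → α ≤ r + 2 →
      ((-1 : R) ^ α * ((q : R) - 1) * M α n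
          = M (α - 1) (n - 1) * M 1 (n + (α : ℤ) - 1)
            - (q : R) ^ α * M 1 (n + (α : ℤ) - 1) * M (α - 1) (n - 1))
        ∧ ((-1 : R) ^ α * ((q : R) - 1) * M α n
          = M 1 (n - (α : ℤ) + 1) * M (α - 1) (n + 1)
            - (q : R) ^ α * M (α - 1) (n + 1) * M 1 (n - (α : ℤ) + 1)) := by
  have hqi : ∀ x : R, ((q⁻¹ : Rˣ) : R) * x = x * ((q⁻¹ : Rˣ) : R) := by
    intro x
    have : Commute (q : R) x := hq x
    exact this.units_inv_left
  let S := Subring.center R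
  let s : S := ⟨(q : R), Subring.mem_center_iff.2 fun g => (hq g).symm⟩
  let t : S := ⟨((q⁻¹ : Rˣ) : R), Subring.mem_center_iff.2 fun g => (hqi g).symm⟩
  have hts : t * s = 1 := Subtype.ext (by simp [s, t])
  have hs : ∀ (k : ℕ) (x : R), (s ^ k) • x = (q : R) ^ k * x := fun k x => rfl
  have hs1 : ∀ (x : R), s • x = (q : R) * x := fun x => rfl
  have ext : ∀ (α β : ℕ) (n m : ℤ) (k : ℕ), α ≤ r + 1 → β ≤ r + 1 →
      |m - n| ≤ |(β : ℤ) - (α : ℤ)| + 1 → (m - n) * ((min α β : ℕ) : ℤ) = k →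
      M α n * M β m = (s ^ k) • (M β m * M α n) := by
    intro α β n m k h1 h2 h3 h4
    have := hext α β n (m - n) h1 h2 h3
    rw [h4] at this
    simpa [hs, mul_assoc] using this
  have extz : ∀ (α β : ℕ) (n m : ℤ) (k : ℕ), α ≤ r + 2 → β ≤ r + 2 →
      ((m - n ≤ (β : ℤ) - α + 1 ∧ (α : ℤ) - β - 1 ≤ m - n) ∨
        (m - n ≤ (α : ℤ) - β + 1 ∧ (β : ℤ) - α - 1 ≤ m - n)) → (m - n) * ((min α β : ℕ) : ℤ) = k →
      M α n * M β m = (s ^ k) • (M β m * M α n) := by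
    intro α β n m k h1 h2 h3 h4
    by_cases ha : α = r + 2
    · subst ha; simp [hMtop]
    by_cases hb : β = r + 2
    · subst hb; simp [hMtop]
    refine ext α β n m k (by omega) (by omega) ?_ h4
    have e1 := le_abs_self ((β : ℤ) - α)
    have e2 := neg_le_abs ((β : ℤ) - α)
    rw [abs_le]
    omega
  have main : ∀ k : ℕ, k ≤ r + 1 → ∀ n : ℤ,
      (M k (n - 1) * M 1 (n + k) - (s ^ (k + 1)) • (M 1 (n + k) * M k (n - 1))
        = ((-1) ^ (k + 1) * (s - 1)) • M (k + 1) n) ∧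
      (M 1 (n - k) * M k (n + 1) - (s ^ (k + 1)) • (M k (n + 1) * M 1 (n - k))
        = ((-1) ^ (k + 1) * (s - 1)) • M (k + 1) n) := by
    intro k
    induction k with
    | zero =>
      intro _ n
      simp [hM0, sub_smul]
    | succ k ih =>
      intro hk n
      have hQ : t ^ (k + 1) * s ^ (k + 1) = 1 := by rw [← mul_pow, hts, one_pow]
      have hsys := hMsys (k + 1) n (by omega) hk
      have hsys' : M (k + 1 + 1) n * M k n = M (k + 1) n * M (k + 1) n
          - (s ^ (k + 1)) • (M (k + 1) (n + 1) * M (k + 1) (n - 1)) := by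
        rw [hs, ← mul_assoc, hsys, pow_two]; simp
      have hZM : M k n * M (k + 1 + 1) n = M (k + 1 + 1) n * M k n := by
        have := extz k (k + 1 + 1) n n 0 (by omega) (by omega) (by push_cast; omega) (by simp)
        simpa using this
      have hc : ((-1) ^ (k + 1 + 1) * (s - 1) : S) = -((-1) ^ (k + 1) * (s - 1)) := by ring
      rw [hc, neg_smul, pow_succ s (k + 1)]
      have habs : ∀ a b : ℕ, |(a : ℤ) - b| = |(b : ℤ) - a| := fun a b => abs_sub_comm _ _
      constructor
      · have hU := (ih (by omega) (n + 1)).1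
        have e : n + 1 + (k : ℤ) = n + ((k + 1 : ℕ) : ℤ) := by push_cast; ring
        rw [e, add_sub_cancel_right] at hU
        refine step_one s (s ^ (k + 1)) (t ^ (k + 1)) _ hQ (M (k + 1 + 1) n) (M k n) (M (k + 1) n)
          (M (k + 1) (n + 1)) (Mi (k + 1) (n + 1)) _ _ hsys' ?_ ?_ ?_ ?_ hU (hMiR _ _ hk)
        · exact extz _ _ _ _ _ (by omega) (by omega) (by push_cast; omega) (by simp)
        · exact extz _ _ _ _ _ (by omega) (by omega) (by push_cast; omega) (by simp)
        · have := extz (k + 1) 1 (n + 1) (n + ((k + 1 : ℕ) : ℤ)) k (by omega) (by omega)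
            (by push_cast; omega) (by simp)
          rw [this, smul_smul, pow_succ']
        · exact extz _ _ _ _ _ (by omega) (by omega) (by push_cast; omega) (by simp)
      · have hU := (ih (by omega) (n - 1)).2
        have e : n - 1 - (k : ℤ) = n - ((k + 1 : ℕ) : ℤ) := by push_cast; ring
        rw [e, sub_add_cancel] at hU
        refine step_two s (s ^ (k + 1)) (t ^ (k + 1)) _ hQ (M (k + 1 + 1) n) (M k n) (M (k + 1) n)
          (M (k + 1) (n - 1)) (Mi (k + 1) (n - 1)) _ _ (hZM.trans hsys') ?_ ?_ ?_ ?_ hU (hMiL _ _ hk)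
        · exact extz _ _ _ _ _ (by omega) (by omega) (by push_cast; omega) (by simp)
        · exact extz _ _ _ _ _ (by omega) (by omega) (by push_cast; omega) (by simp)
        · have := extz 1 (k + 1) (n - ((k + 1 : ℕ) : ℤ)) (n - 1) k (by omega) (by omega)
            (by push_cast; omega) (by simp)
          rw [this, smul_smul, pow_succ']
        · exact extz _ _ _ _ _ (by omega) (by omega) (by push_cast; omega) (by simp)
  intro α n h2 hα
  obtain ⟨k, rfl⟩ : ∃ k, α = k + 1 := ⟨α - 1, by omega⟩
  have hm := main k (by omega) n
  have e1 : n + ((k + 1 : ℕ) : ℤ) - 1 = n + k := by push_cast; ring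
  have e2 : n - ((k + 1 : ℕ) : ℤ) + 1 = n - k := by push_cast; ring
  have hsm : ((-1) ^ (k + 1) * (s - 1)) • M (k + 1) n
      = (-1 : R) ^ (k + 1) * ((q : R) - 1) * M (k + 1) n := rfl
  rw [e1, e2, ← hsm]
  simp only [Nat.add_sub_cancel, ← hs, smul_mul_assoc] at hm ⊢
  exact ⟨hm.1.symm, hm.2.symm⟩
end

section
/- Quantum determinant formula: under these hypotheses, for every 1 ≤ α ≤ r+1 and n ∈ ℤ one has M_{α,n} = R_{α,n}, i.e. M_{α,n} = Σ_{v} c_v(q)·M_{n-v_1}·M_{n-v_2}⋯M_{n-v_α}, where the finite sum runs over the exponent vectors v ∈ ℤ^α in the support of the Laurent polynomial Δ_q(u_1,…,u_α) = ∏_{1≤a<b≤α}(1 − q·u_b·u_a^{−1}) and c_v ∈ ℤ[q] is the corresponding coefficient. In particular each M_{α,n} is a polynomial in the M_{1,m} with coefficients in ℤ[q]. -/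
/-- The set of pairs (a,b) with 1 ≤ a < b ≤ α (0-indexed as Fin α). -/
def qvPairs (α : ℕ) : Finset (Fin α × Fin α) :=
  Finset.univ.filter fun p => p.1 < p.2

/-- The exponent of u_i in the monomial of Δ_q(u₁,…,u_α) = ∏_{a<b} (1 - q·u_b·u_a⁻¹)
obtained by choosing the term -q·u_b·u_a⁻¹ exactly for the pairs (a,b) ∈ S. -/
def qvExp (α : ℕ) (S : Finset (Fin α × Fin α)) (i : Fin α) : ℤ :=
  ((S.filter fun p => p.2 = i).card : ℤ) - ((S.filter fun p => p.1 = i).card : ℤ)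

/-- The quantum determinant R_{α,n} = Σ_v c_v(q)·M_{n-v₁}⋯M_{n-v_α},
where Δ_q(u₁,…,u_α) = Σ_v c_v·u₁^{v₁}⋯u_α^{v_α}; here the sum over exponent vectors v
in the support of Δ_q with central coefficients c_v(q) ∈ ℤ[q] is written out as the
expansion of the product ∏_{a<b} (1 - q·u_b·u_a⁻¹) over subsets S of the pair set. -/
def qDet {R : Type*} [Ring R] (q : R) (f : ℤ → R) (α : ℕ) (n : ℤ) : R :=
  ∑ S ∈ (qvPairs α).powerset,
    (-q) ^ S.card * (List.ofFn fun i : Fin α => f (n - qvExp α S i)).prod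


set_option linter.unusedSimpArgs false

section Words
variable {K R : Type*} [CommRing K] [Ring R] [Algebra K R]

theorem qd_cancel {z d : R} (hd : IsUnit d) (h : z * d = 0) : z = 0 := by
  simpa [hd.mul_left_eq_zero] using h

theorem qd_scancel {k : K} {z : R} (hk : IsUnit k) (h : k • z = 0) : z = 0 :=
  (hk.smul_eq_zero).1 h

theorem qd_T3 {q Q t : K} {P P1 L L1 x xp xm d u : R} (hd : IsUnit d)
    (LII : P * d = L * x - (t * Q) • (L1 * xm))
    (LI : Q • (P1 * d) = L * xp - (Q * t) • (L1 * x))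
    (c1 : x * d = d * x) (c2 : xm * d = Q • (d * xm)) (c4 : xm * x = (q * Q) • (x * xm))
    (sys : (q * Q) • (xp * xm) = x * x - u * d) :
    P * x - L * u = (q * Q) • (P1 * xm) := by
  rw [← sub_eq_zero]
  apply qd_cancel hd
  have e1 := congrArg (P * ·) c1
  have e2 := congrArg (· * x) LII
  have e3 := congrArg (P1 * ·) c2
  have e4 := congrArg (· * xm) LI
  have e5 := congrArg (L * ·) sys
  have e6 := congrArg (L1 * ·) c4
  simp only [mul_sub, sub_mul, smul_mul_assoc, mul_smul_comm, smul_sub, mul_assoc] at *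
  linear_combination (norm := module) e1 + e2 - (q * Q) • e3 - (q * Q) • e4 - e5 - (t * Q) • e6

theorem qd_T4 {q Q t : K} {P P1 L L1 x xp xm d u : R} (hd : IsUnit d) (hQ : IsUnit Q)
    (LII : P * d = L * x - (t * Q) • (L1 * xm))
    (LI : Q • (P1 * d) = L * xp - (Q * t) • (L1 * x))
    (c1 : x * d = d * x) (c3 : d * xp = Q • (xp * d)) (c4 : x * xp = (q * Q) • (xp * x))
    (sys : xm * xp = (q * Q) • (x * x) - Q • (u * d)) :
    P * xp - (Q * t) • (L1 * u) = (q * Q) • (P1 * x) := by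
  rw [← sub_eq_zero]
  apply qd_cancel hd
  apply qd_scancel hQ
  have e1 := congrArg (P * ·) c3
  have e2 := congrArg (· * xp) LII
  have e3 := congrArg (P1 * ·) c1
  have e4 := congrArg (· * x) LI
  have e5 := congrArg (L * ·) c4
  have e6 := congrArg (L1 * ·) sys
  simp only [mul_sub, sub_mul, smul_mul_assoc, mul_smul_comm, smul_sub, mul_assoc] at *
  linear_combination (norm := module) -e1 + e2 - (q * Q * Q) • e3 - (q * Q) • e4 + e5 - (t * Q) • e6

theorem qd_sysrev {q Q : K} {x xp xm d u : R} (hm : IsUnit xm) (hQ : IsUnit Q) (hq : IsUnit q)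
    (c2 : xm * d = Q • (d * xm)) (c4 : xm * x = (q * Q) • (x * xm))
    (c5 : xm * u = (q * Q) • (u * xm))
    (sys : (q * Q) • (xp * xm) = x * x - u * d) :
    xm * xp = (q * Q) • (x * x) - Q • (u * d) := by
  rw [← sub_eq_zero]
  apply qd_cancel hm
  apply qd_scancel (hq.mul hQ)
  have e1 := congrArg (xm * ·) sys
  have e2 := congrArg (· * x) c4
  have e3 := congrArg (x * ·) c4
  have e4 := congrArg (· * d) c5
  have e5 := congrArg (u * ·) c2
  simp only [mul_sub, sub_mul, smul_mul_assoc, mul_smul_comm, smul_sub, mul_assoc] at *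
  linear_combination (norm := module) e1 + e2 + (q * Q) • e3 - e4 - (q * Q) • e5

theorem qd_LI {q Q t W : K} {V P P0 P1 L x xm u um : R} (hx : IsUnit x) (hW : W = q * Q)
    (LII : V * x = P * u - (t * W) • (P1 * um))
    (T3 : P * x - L * u = W • (P1 * xm))
    (T4 : P0 * x - (Q * t) • (L * um) = W • (P * xm))
    (c1 : xm * x = W • (x * xm)) (c2 : um * x = W • (x * um)) (c3 : xm * u = W • (u * xm))
    (c4 : um * u = (q * W) • (u * um)) (c5 : u * x = x * u) (c6 : um * xm = xm * um) :
    W • (V * xm) = P0 * u - (W * t) • (P * um) := by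
  subst hW
  rw [← sub_eq_zero]
  apply qd_cancel hx
  have e1 := congrArg (V * ·) c1
  have e2 := congrArg (· * xm) LII
  have e3 := congrArg (P * ·) c3
  have e4 := congrArg (P1 * ·) c6
  have e5 := congrArg (P0 * ·) c5
  have e6 := congrArg (P * ·) c2
  have e7 := congrArg (· * u) T4
  have e8 := congrArg (· * um) T3
  have e9 := congrArg (L * ·) c4
  simp only [mul_sub, sub_mul, smul_mul_assoc, mul_smul_comm, smul_sub, mul_assoc] at *
  linear_combination (norm := module) (q * Q) • e1 + (q * Q) ^ 2 • e2 - (q * Q) • e3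
    - (t * (q * Q) ^ 3) • e4 - e5 + (q * Q * t) • e6 - e7 + ((q * Q) ^ 2 * t) • e8 - (Q * t) • e9

theorem qd_adj {q Q t : K} {P P1 L L1 x xp xm d u : R} (hd : IsUnit d) (hQ : IsUnit Q)
    (LII : P * d = L * x - (t * Q) • (L1 * xm))
    (LI : Q • (P1 * d) = L * xp - (Q * t) • (L1 * x))
    (T3 : P * x - L * u = (q * Q) • (P1 * xm))
    (T4 : P * xp - (Q * t) • (L1 * u) = (q * Q) • (P1 * x))
    (c1 : P * L = L * P) (c2 : P * L1 = Q • (L1 * P)) (c3 : L * P1 = Q • (P1 * L))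
    (c4 : P1 * L1 = L1 * P1) (c5 : L * L1 = Q • (L1 * L)) :
    P * P1 = (q * Q) • (P1 * P) := by
  rw [← sub_eq_zero]
  apply qd_cancel hd
  apply qd_scancel hQ
  have e1 := congrArg (P * ·) LI
  have e2 := congrArg (P1 * ·) LII
  have e3 := congrArg (· * xp) c1
  have e4 := congrArg (· * x) c2
  have e5 := congrArg (· * x) c3
  have e6 := congrArg (· * xm) c4
  have e7 := congrArg (L * ·) T4
  have e8 := congrArg (L1 * ·) T3
  have e9 := congrArg (· * u) c5
  simp only [mul_sub, sub_mul, smul_mul_assoc, mul_smul_comm, smul_sub, mul_assoc] at *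
  linear_combination (norm := module) e1 - (q * Q ^ 2) • e2 + e3 - (Q * t) • e4 + (q * Q) • e5
    + (q * Q ^ 3 * t) • e6 + e7 - (Q ^ 2 * t) • e8 + (Q * t) • e9

theorem qd_sys {q Q t W : K} {V P P0 P1 L x xm u um : R} (hx : IsUnit x) (hW : W = q * Q)
    (LII : V * x = P * u - (t * W) • (P1 * um))
    (T3 : P * x - L * u = W • (P1 * xm))
    (T4 : P0 * x - (Q * t) • (L * um) = W • (P * xm))
    (c1 : V * L = L * V) (c2 : P * L = L * P) (c3 : P * P1 = W • (P1 * P))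
    (c4 : L * P1 = Q • (P1 * L)) :
    W • (P1 * P0) = P * P - V * L := by
  subst hW
  rw [← sub_eq_zero]
  apply qd_cancel hx
  have e1 := congrArg (P1 * ·) T4
  have e2 := congrArg (P * ·) T3
  have e3 := congrArg (· * x) c1
  have e4 := congrArg (L * ·) LII
  have e5 := congrArg (· * u) c2
  have e6 := congrArg (· * xm) c3
  have e7 := congrArg (· * um) c4
  simp only [mul_sub, sub_mul, smul_mul_assoc, mul_smul_comm, smul_sub, mul_assoc] at *
  linear_combination (norm := module) (q * Q) • e1 - e2 + e3 + e4 - e5 - (q * Q) • e6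
    - (t * (q * Q)) • e7

end Words

section Sys
variable {K R : Type*} [CommRing K] [Ring R] [Algebra K R]

/-- `x` and `y` commute up to `q ^ c`. -/
def QC (q : Kˣ) (x y : R) (c : ℤ) : Prop := x * y = ((q ^ c : Kˣ) : K) • (y * x)

theorem QC.mul {q : Kˣ} {x y z : R} {c d : ℤ} (h : QC q x y c) (h' : QC q x z d) :
    QC q x (y * z) (c + d) := by
  unfold QC at *
  rw [← mul_assoc, h, smul_mul_assoc, mul_assoc, h', mul_smul_comm, smul_smul, zpow_add,
    Units.val_mul, mul_assoc]

theorem QC.sub {q : Kˣ} {x y z : R} {c : ℤ} (h : QC q x y c) (h' : QC q x z c) :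
    QC q x (y - z) c := by
  unfold QC at *
  rw [mul_sub, h, h', sub_mul, smul_sub]

theorem QC.smul {q : Kˣ} {x y : R} {c : ℤ} (h : QC q x y c) (t : K) :
    QC q x (t • y) c := by
  unfold QC at *
  rw [mul_smul_comm, h, smul_mul_assoc, smul_comm]

theorem QC.symm {q : Kˣ} {x y : R} {c : ℤ} (h : QC q x y c) : QC q y x (-c) := by
  unfold QC at *
  rw [h, smul_smul, ← Units.val_mul, ← zpow_add]
  simp

theorem QC.one (q : Kˣ) (x : R) : QC q x 1 0 := by simp [QC]

theorem QC.cast {q : Kˣ} {x y : R} {c d : ℤ} (h : QC q x y c) (e : c = d) : QC q x y d := e ▸ h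

theorem QC.inv {q : Kˣ} {x y : R} {c : ℤ} (h : QC q x y c) (hy : IsUnit y) :
    QC q x (Ring.inverse y) (-c) := by
  have h' := h.symm
  unfold QC at *
  have e : Ring.inverse y * (y * x) * Ring.inverse y
      = ((q ^ (-c) : Kˣ) : K) • (Ring.inverse y * (x * y) * Ring.inverse y) := by
    rw [h', mul_smul_comm, smul_mul_assoc]
  rw [← mul_assoc, Ring.inverse_mul_cancel _ hy, one_mul, mul_assoc (Ring.inverse y),
    mul_assoc x, Ring.mul_inverse_cancel _ hy, mul_one] at e
  exact e

theorem QC.zero {q : Kˣ} {x y : R} (h : QC q x y 0) : x * y = y * x := by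
  simpa [QC] using h

theorem QC.pow {q : Kˣ} {x y : R} {c : ℤ} (k : ℕ) (h : QC q x y c) (e : c = k) :
    x * y = (q : K) ^ k • (y * x) := by
  subst e; simpa [QC] using h

/-- The system hypotheses up to level `N`. -/
structure QSys (q : Kˣ) (N : ℕ) (M : ℕ → ℤ → R) : Prop where
  zero : ∀ n, M 0 n = 1
  unit : ∀ a n, a ≤ N → IsUnit (M a n)
  com : ∀ (a b : ℕ) (m n : ℤ), a ≤ b → b ≤ N → |n - m| ≤ 1 → QC q (M a m) (M b n) ((n - m) * a)
  sys : ∀ (a : ℕ) (n : ℤ), a + 2 ≤ N → (q : K) ^ (a + 1) • (M (a + 1) (n + 1) * M (a + 1) (n - 1))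
    = M (a + 1) n * M (a + 1) n - M (a + 2) n * M a n

theorem qd_left {q : Kˣ} {k : ℕ} {u v w : R} (hw : IsUnit w) (h : (q : K) ^ k • (u * w) = v) :
    u = ((q ^ (-(k : ℤ)) : Kˣ) : K) • (v * Ring.inverse w) := by
  rw [← h, smul_mul_assoc, mul_assoc, Ring.mul_inverse_cancel _ hw, mul_one, smul_smul]
  have : ((q ^ (-(k : ℤ)) : Kˣ) : K) * (q : K) ^ k = 1 := by
    rw [← Units.val_pow_eq_pow_val, ← Units.val_mul, ← zpow_natCast, ← zpow_add]; simp
  rw [this, one_smul]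

theorem qd_right {q : Kˣ} {k : ℕ} {u v w : R} (hw : IsUnit w) (h : (q : K) ^ k • (w * u) = v) :
    u = ((q ^ (-(k : ℤ)) : Kˣ) : K) • (Ring.inverse w * v) := by
  rw [← h, mul_smul_comm, ← mul_assoc, Ring.inverse_mul_cancel _ hw, one_mul, smul_smul]
  have : ((q ^ (-(k : ℤ)) : Kˣ) : K) * (q : K) ^ k = 1 := by
    rw [← Units.val_pow_eq_pow_val, ← Units.val_mul, ← zpow_natCast, ← zpow_add]; simp
  rw [this, one_smul]

variable {q : Kˣ} {N : ℕ} {M : ℕ → ℤ → R}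

theorem QSys.ext (H : QSys q N M) : ∀ (k : ℕ) (a b : ℕ) (m n : ℤ), a ≤ b → b ≤ N →
    |n - m| ≤ k → (k : ℤ) ≤ b - a + 1 → QC q (M b n) (M a m) ((m - n) * a) := by
  intro k
  induction k using Nat.strong_induction_on with
  | _ k ih =>
  intro a b m n hab hb hk hk'
  by_cases h1 : |n - m| ≤ 1
  · exact (H.com a b m n hab hb h1).symm.cast (by ring)
  have hlt : a + 1 ≤ b := by omega
  rcases a with _ | a
  · rw [H.zero]; exact (QC.one q _).cast (by simp)
  have hs : ∀ j : ℤ, |n - j| ≤ (k : ℤ) - 1 →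
      QC q (M b n) (M (a+1) j * M (a+1) j - M (a+2) j * M a j) ((j - n) * (2 * a + 2)) := by
    intro j hj
    have k1 : |n - j| ≤ ((k - 1 : ℕ) : ℤ) := by omega
    have h1 := ih (k-1) (by omega) (a+1) b j n (by omega) hb k1 (by push_cast at *; omega)
    have h2 := ih (k-1) (by omega) (a+2) b j n (by omega) hb k1 (by push_cast at *; omega)
    have h3 := ih (k-1) (by omega) a b j n (by omega) hb k1 (by push_cast at *; omega)
    exact ((h1.mul h1).cast (by push_cast; ring)).sub ((h2.mul h3).cast (by push_cast; ring))
  by_cases hpos : n < m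
  · have e := H.sys a (m-1) (by omega)
    rw [show m - 1 + 1 = m by ring, show m - 1 - 1 = m - 2 by ring] at e
    rw [qd_left (H.unit (a+1) (m-2) (by omega)) e]
    have h4 := ih (k-2) (by omega) (a+1) b (m-2) n (by omega) hb (by simp only [abs_le] at *; omega)
      (by push_cast at *; omega)
    refine (((hs (m-1) (by simp only [abs_le] at *; omega)).mul (h4.inv (H.unit _ _ (by omega)))).cast ?_).smul _
    push_cast; ring
  · have e := H.sys a (m+1) (by omega)
    rw [show m + 1 + 1 = m + 2 by ring, show m + 1 - 1 = m by ring] at e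
    rw [qd_right (H.unit (a+1) (m+2) (by omega)) e]
    have h4 := ih (k-2) (by omega) (a+1) b (m+2) n (by omega) hb (by simp only [abs_le] at *; omega)
      (by push_cast at *; omega)
    refine (((h4.inv (H.unit _ _ (by omega))).mul (hs (m+1) (by simp only [abs_le] at *; omega))).cast ?_).smul _
    push_cast; ring

theorem QSys.ext' (H : QSys q N M) (a b : ℕ) (m n : ℤ) (hab : a ≤ b) (hb : b ≤ N)
    (h : |n - m| ≤ (b : ℤ) - a + 1) : QC q (M b n) (M a m) ((m - n) * a) :=
  H.ext (b - a + 1) a b m n hab hb (by omega) (by omega)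

/-- Darboux transform of a system. -/
noncomputable def dar (t : K) (M : ℕ → ℤ → R) : ℕ → ℤ → R
  | 0, _ => 1
  | a + 1, n => dar t M a n * (Ring.inverse (M a n) * M (a + 1) n)
      - t • (dar t M a (n + 1) * (Ring.inverse (M a n) * M (a + 1) (n - 1)))

theorem dar_QC (H : QSys q N M) (t : K) (g : R) (c : ℤ) : ∀ (b : ℕ) (m : ℤ), b ≤ N →
    (∀ (a : ℕ) (k : ℤ), a ≤ b → m - 1 ≤ k → k ≤ m + (b - a) → QC q g (M a k) (c * a)) →
    QC q g (dar t M b m) (c * b) := by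
  intro b
  induction b with
  | zero => intro m _ _; exact (QC.one q g).cast (by simp)
  | succ b ih =>
    intro m hb h
    rw [dar]
    have i := (h b m (by omega) (by omega) (by push_cast; omega)).inv (H.unit b m (by omega))
    have h1 := ih m (by omega) fun a k h1 h2 h3 => h a k (by omega) h2 (by push_cast; omega)
    have h2 := ih (m+1) (by omega) fun a k h1 h2 h3 =>
      h a k (by omega) (by omega) (by push_cast; omega)
    have j1 := h (b+1) m (by omega) (by omega) (by omega)
    have j2 := h (b+1) (m-1) (by omega) (by omega) (by omega)
    exact ((h1.mul (i.mul j1)).cast (by ring)).sub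
      (((h2.mul (i.mul j2)).cast (by ring)).smul t)

theorem dar_LII (H : QSys q N M) (t : K) (a : ℕ) (n : ℤ) (ha : a + 1 ≤ N) :
    dar t M (a + 1) n * M a n = dar t M a n * M (a + 1) n
      - (t * (q : K) ^ a) • (dar t M a (n + 1) * M (a + 1) (n - 1)) := by
  have c1 : QC q (M a n) (M (a+1) n) 0 :=
    (H.com a (a+1) n n (by omega) ha (by simp)).cast (by ring)
  have c2 := (H.com a (a+1) n (n-1) (by omega) ha (by simp)).symm.pow a (by ring)
  have i1 := Ring.inverse_mul_cancel _ (H.unit a n (by omega))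
  rw [dar, sub_mul, smul_mul_assoc, mul_assoc, mul_assoc, ← c1.zero, mul_assoc, mul_assoc, c2,
    ← mul_assoc _ (M a n), i1, one_mul, mul_smul_comm, ← mul_assoc _ (M a n), i1, one_mul,
    mul_smul_comm, smul_smul]

theorem QSys.words (H : QSys q N M) (a : ℕ) (n : ℤ) (ha : a + 1 ≤ N) :
    M (a+1) n * M a n = M a n * M (a+1) n ∧
    M (a+1) (n-1) * M a n = (q : K) ^ a • (M a n * M (a+1) (n-1)) ∧
    M a n * M (a+1) (n+1) = (q : K) ^ a • (M (a+1) (n+1) * M a n) ∧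
    M a (n-1) * M (a+1) n = (q : K) ^ a • (M (a+1) n * M a (n-1)) ∧
    M (a+1) (n-1) * M (a+1) n = ((q : K) * (q : K) ^ a) • (M (a+1) n * M (a+1) (n-1)) ∧
    M (a+1) n * M (a+1) (n+1) = ((q : K) * (q : K) ^ a) • (M (a+1) (n+1) * M (a+1) n) := by
  rw [← pow_succ']
  refine ⟨?_, ?_, ?_, ?_, ?_, ?_⟩
  · exact (((H.com a (a+1) n n (by omega) ha (by simp)).cast (by ring) : QC q _ _ 0).zero).symm
  · exact (H.com a (a+1) n (n-1) (by omega) ha (by simp)).symm.pow a (by ring)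
  · exact (H.com a (a+1) n (n+1) (by omega) ha (by simp)).pow a (by ring)
  · exact (H.com a (a+1) (n-1) n (by omega) ha (by simp)).pow a (by ring)
  · exact (H.com (a+1) (a+1) (n-1) n (by omega) ha (by simp)).pow (a+1) (by ring)
  · exact (H.com (a+1) (a+1) n (n+1) (by omega) ha (by simp)).pow (a+1) (by ring)

theorem QSys.sysrev (H : QSys q N M) (a : ℕ) (n : ℤ) (ha : a + 2 ≤ N) :
    M (a+1) (n-1) * M (a+1) (n+1) = ((q : K) * (q : K) ^ a) • (M (a+1) n * M (a+1) n)
      - (q : K) ^ a • (M (a+2) n * M a n) := by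
  obtain ⟨w1, w2, w3, w4, w5, w6⟩ := H.words a n (by omega)
  obtain ⟨v1, v2, v3, v4, v5, v6⟩ := H.words (a+1) n (by omega)
  refine qd_sysrev (H.unit _ _ (by omega)) (q.isUnit.pow a) q.isUnit w2 w5 ?_ ?_
  · rw [← pow_succ']; exact v4
  · rw [← pow_succ']; exact H.sys a n ha

theorem dar_T34 (H : QSys q N M) (t : K) (a : ℕ) (n : ℤ) (ha : a + 2 ≤ N)
    (LI : (q : K) ^ a • (dar t M (a+1) (n+1) * M a n) = dar t M a n * M (a+1) (n+1)
      - ((q : K) ^ a * t) • (dar t M a (n+1) * M (a+1) n)) :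
    dar t M (a+1) n * M (a+1) n - dar t M a n * M (a+2) n
      = ((q : K) * (q : K) ^ a) • (dar t M (a+1) (n+1) * M (a+1) (n-1)) ∧
    dar t M (a+1) n * M (a+1) (n+1) - ((q : K) ^ a * t) • (dar t M a (n+1) * M (a+2) n)
      = ((q : K) * (q : K) ^ a) • (dar t M (a+1) (n+1) * M (a+1) n) := by
  obtain ⟨w1, w2, w3, w4, w5, w6⟩ := H.words a n (by omega)
  have s := H.sys a n ha
  rw [pow_succ'] at s
  exact ⟨qd_T3 (H.unit _ _ (by omega)) (dar_LII H t a n (by omega)) LI w1 w2 w5 s,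
    qd_T4 (H.unit _ _ (by omega)) (q.isUnit.pow a) (dar_LII H t a n (by omega)) LI w1 w3 w6
      (H.sysrev a n ha)⟩

theorem dar_LI (H : QSys q N M) (t : K) : ∀ (a : ℕ) (n : ℤ), a + 1 ≤ N →
    (q : K) ^ a • (dar t M (a+1) n * M a (n-1)) = dar t M a (n-1) * M (a+1) n
      - ((q : K) ^ a * t) • (dar t M a n * M (a+1) (n-1)) := by
  intro a
  induction a with
  | zero => intro n _; simp [dar, H.zero]
  | succ a ih =>
    intro n ha
    have T := (dar_T34 H t a n (by omega) (by simpa using ih (n+1) (by omega))).1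
    have T' := (dar_T34 H t a (n-1) (by omega) (by simpa using ih n (by omega))).2
    obtain ⟨w1, w2, w3, w4, w5, w6⟩ := H.words a n (by omega)
    obtain ⟨v1, v2, v3, v4, v5, v6⟩ := H.words (a+1) n (by omega)
    rw [sub_add_cancel] at T'
    rw [← pow_succ'] at T T' w5
    have c := (H.words (a+1) (n-1) (by omega)).1
    exact qd_LI (H.unit _ _ (by omega)) (pow_succ' _ _) (dar_LII H t (a+1) n (by omega)) T T'
      w5 v2 v4 v5 v1 c

theorem dar_T3 (H : QSys q N M) (t : K) (a : ℕ) (n : ℤ) (ha : a + 2 ≤ N) :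
    dar t M (a+1) n * M (a+1) n - dar t M a n * M (a+2) n
      = ((q : K) * (q : K) ^ a) • (dar t M (a+1) (n+1) * M (a+1) (n-1)) :=
  (dar_T34 H t a n ha (by simpa using dar_LI H t a (n+1) (by omega))).1

theorem dar_T4 (H : QSys q N M) (t : K) (a : ℕ) (n : ℤ) (ha : a + 2 ≤ N) :
    dar t M (a+1) n * M (a+1) (n+1) - ((q : K) ^ a * t) • (dar t M a (n+1) * M (a+2) n)
      = ((q : K) * (q : K) ^ a) • (dar t M (a+1) (n+1) * M (a+1) n) :=
  (dar_T34 H t a n ha (by simpa using dar_LI H t a (n+1) (by omega))).2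

/-- the second recursion, solved for the transform -/
theorem dar_I (H : QSys q N M) (t : K) (a : ℕ) (n : ℤ) (ha : a + 1 ≤ N) :
    dar t M (a+1) n = dar t M a (n-1) * (Ring.inverse (M a (n-1)) * M (a+1) n)
      - t • (dar t M a n * (Ring.inverse (M a (n-1)) * M (a+1) (n-1))) := by
  have hu := H.unit a (n-1) (by omega)
  obtain ⟨w1, w2, w3, w4, w5, w6⟩ := H.words a n ha
  have c := (H.words a (n-1) ha).1
  have i1 := Ring.inverse_mul_cancel _ hu
  rw [← sub_eq_zero]
  apply qd_cancel hu
  apply qd_scancel (q.isUnit.pow a)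
  have e : (q : K) ^ a • (Ring.inverse (M a (n-1)) * (M (a+1) n * M a (n-1))) = M (a+1) n := by
    rw [← mul_smul_comm, ← w4, ← mul_assoc, i1, one_mul]
  have e' : Ring.inverse (M a (n-1)) * (M (a+1) (n-1) * M a (n-1)) = M (a+1) (n-1) := by
    rw [c, ← mul_assoc, i1, one_mul]
  have l := dar_LI H t a n ha
  have f := congrArg (dar t M a (n-1) * ·) e
  have f' := congrArg (dar t M a n * ·) e'
  simp only [mul_sub, sub_mul, smul_mul_assoc, mul_smul_comm, smul_sub, mul_assoc] at *
  linear_combination (norm := module) l - f + ((q : K) ^ a * t) • f'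

/-- commutation of the transform with lower levels and with neighbours -/
theorem dar_com (H : QSys q (N + 1) M) (t : K) : ∀ (b a : ℕ) (m n : ℤ), a ≤ b → b ≤ N →
    |n - m| ≤ 1 → QC q (dar t M a m) (dar t M b n) ((n - m) * a) := by
  intro b
  induction b with
  | zero =>
    intro a m n ha _ _
    obtain rfl : a = 0 := by omega
    simp [dar, QC]
  | succ b ih =>
    have low : ∀ (a : ℕ) (m n : ℤ), a ≤ b → b + 1 ≤ N → |n - m| ≤ 1 →
        QC q (dar t M a m) (dar t M (b+1) n) ((n - m) * a) := by
      intro a m n hab hb hmn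
      -- ratio `M (b+1) x / M b y`
      have key : ∀ x y : ℤ, |x - y| ≤ 1 → (∀ (a' : ℕ) (k : ℤ), a' ≤ a → m - 1 ≤ k →
          k ≤ m + (a - a') → |x - k| ≤ (b : ℤ) - a' + 2 ∧ |y - k| ≤ (b : ℤ) - a' + 1) →
          QC q (dar t M a m) (Ring.inverse (M b y) * M (b+1) x) ((x - y) * a) := by
        intro x y hxy hr
        refine (dar_QC H t _ (y - x) a m (by omega) ?_).symm.cast (by ring)
        intro a' k h1 h2 h3
        obtain ⟨r1, r2⟩ := hr a' k h1 h2 h3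
        have g1 := H.ext' a' b k y (by omega) (by omega) r2
        have g2 := H.ext' a' (b+1) k x (by omega) (by omega) (by push_cast; omega)
        exact ((g1.symm.inv (H.unit _ _ (by omega))).mul g2.symm).symm.cast (by ring)
      by_cases hc : n = m + 1
      · rw [dar_I H t b n (by omega)]
        refine QC.sub (((ih a m (n-1) hab (by omega) (by simp only [abs_le] at *; omega)).mul
          (key n (n-1) (by simp) ?_)).cast (by ring)) (QC.smul
          (((ih a m n hab (by omega) (by simp only [abs_le] at *; omega)).mul (key (n-1) (n-1) (by simp) ?_)).cast
            (by ring)) t)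
        · intro a' k h1 h2 h3; constructor <;> (simp only [abs_le] at *; omega)
        · intro a' k h1 h2 h3; constructor <;> (simp only [abs_le] at *; omega)
      · rw [dar]
        refine QC.sub (((ih a m n hab (by omega) (by simp only [abs_le] at *; omega)).mul
          (key n n (by simp) ?_)).cast (by ring)) (QC.smul
          (((ih a m (n+1) hab (by omega) (by simp only [abs_le] at *; omega)).mul (key (n-1) n (by simp) ?_)).cast
            (by ring)) t)
        · intro a' k h1 h2 h3; constructor <;> (simp only [abs_le] at *; omega)
        · intro a' k h1 h2 h3; constructor <;> (simp only [abs_le] at *; omega)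
    intro a m n ha hb hmn
    by_cases hab : a ≤ b
    · exact low a m n hab hb hmn
    obtain rfl : a = b + 1 := by omega
    have adj : ∀ n, QC q (dar t M (b+1) n) (dar t M (b+1) (n+1)) ((b+1 : ℕ) : ℤ) := by
      intro n
      have h1 := dar_LII H t b n (by omega)
      have h2 := dar_LI H t b (n+1) (by omega)
      rw [add_sub_cancel_right] at h2
      have := qd_adj (H.unit b n (by omega)) (q.isUnit.pow b) h1 h2
        (dar_T3 H t b n (by omega)) (dar_T4 H t b n (by omega))
        ((low b n n le_rfl hb (by simp)).symm.cast (by ring) : QC q _ _ 0).zero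
        ((low b (n+1) n le_rfl hb (by simp)).symm.pow b (by ring))
        ((low b n (n+1) le_rfl hb (by simp)).pow b (by ring))
        ((low b (n+1) (n+1) le_rfl hb (by simp)).symm.cast (by ring) : QC q _ _ 0).zero
        ((ih b n (n+1) le_rfl (by omega) (by simp)).pow b (by ring))
      rw [QC, zpow_natCast, Units.val_pow_eq_pow_val, pow_succ']
      exact this
    rcases (show n = m ∨ n = m + 1 ∨ m = n + 1 by rw [abs_le] at hmn; omega) with rfl | rfl | rfl
    · simp [QC]
    · exact (adj m).cast (by ring)
    · exact (adj n).symm.cast (by ring)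

theorem dar_sys (H : QSys q (N + 1) M) (t : K)
    (hu : ∀ a n, a ≤ N → IsUnit (dar t M a n)) : QSys q N (dar t M) where
  zero n := rfl
  unit := hu
  com a b m n hab hb h := dar_com H t b a m n hab hb h
  sys a n ha := by
    have T4 := dar_T4 H t a (n-1) (by omega)
    have T3 := dar_T3 H t a n (by omega)
    rw [sub_add_cancel] at T4
    rw [← pow_succ'] at T3 T4
    exact qd_sys (H.unit _ _ (by omega)) (pow_succ' _ _) (dar_LII H t (a+1) n (by omega)) T3 T4
      ((dar_com H t (a+2) a n n (by omega) (by omega) (by simp)).symm.cast (by ring) :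
        QC q _ _ 0).zero
      ((dar_com H t (a+1) a n n (by omega) (by omega) (by simp)).symm.cast (by ring) :
        QC q _ _ 0).zero
      ((dar_com H t (a+1) (a+1) n (n+1) (by omega) (by omega) (by simp)).pow (a+1)
        (by push_cast; ring))
      ((dar_com H t (a+1) a n (n+1) (by omega) (by omega) (by simp)).pow a (by ring))

end Sys

section Comb
variable {R : Type*} [Ring R]

theorem qd_sum_finset_succ {A : Type*} [AddCommMonoid A] (α : ℕ) (F : Finset (Fin (α+1)) → A) :
    ∑ T, F T = ∑ T : Finset (Fin α), (F (T.map (Fin.succEmb α))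
      + F (insert 0 (T.map (Fin.succEmb α)))) := by
  rw [← Finset.powerset_univ, Fin.univ_succ, Finset.cons_eq_insert, Finset.sum_powerset_insert (by simp),
    Finset.sum_add_distrib]
  congr 1
  all_goals
    refine (Finset.sum_bij (fun T _ => T.map (Fin.succEmb α)) ?_ ?_ ?_ ?_).symm
    · intro T _
      rw [Finset.mem_powerset]
      exact Finset.map_subset_map.2 (Finset.subset_univ T)
    · intro T _ T' _ h
      exact Finset.map_injective _ h
    · intro U hU
      rw [Finset.mem_powerset, Finset.subset_map_iff] at hU
      obtain ⟨T, _, rfl⟩ := hU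
      exact ⟨T, Finset.mem_univ _, rfl⟩
    · intro T _
      rfl

open PowerSeries in
theorem qd_prod_expand (α : ℕ) (f g : Fin α → R) :
    (List.ofFn fun i => (C (f i) - X * C (g i) : PowerSeries R)).prod
      = ∑ T : Finset (Fin α), (-X) ^ T.card *
        C (List.ofFn fun i => if i ∈ T then g i else f i).prod := by
  induction α with
  | zero =>
    rw [show (Finset.univ : Finset (Finset (Fin 0))) = {∅} from rfl]
    simp
  | succ α ih =>
    rw [qd_sum_finset_succ, List.ofFn_succ, List.prod_cons, ih, Finset.mul_sum]
    refine Finset.sum_congr rfl fun T _ => ?_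
    rw [Finset.card_insert_of_notMem (by simp), Finset.card_map]
    simp only [List.ofFn_succ, List.prod_cons, Finset.mem_map, Finset.mem_insert, Fin.succ_ne_zero,
      Fin.coe_succEmb, Fin.succ_inj, exists_eq_right, true_or, if_true, false_or, and_false,
      exists_false, if_false]
    have hc : ∀ (k : ℕ) (P : PowerSeries R), P * (-X) ^ k = (-X) ^ k * P := fun k P =>
      (((PowerSeries.commute_X P).neg_right).pow_right k).eq
    rw [map_mul, map_mul, sub_mul, ← mul_assoc, hc, pow_succ, mul_assoc, mul_assoc X,
      ← mul_assoc (C _) (_ ^ _), hc]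
    have hx := hc T.card X
    simp only [← mul_assoc, hx]
    noncomm_ring

/-- the functional extracting the next level -/
noncomputable def qdL (q : R) (f : ℤ → R) (n : ℤ) (k : ℕ) (P : PowerSeries R) : R :=
  ∑ i ∈ Finset.range k, q ^ i * (f (n + i) * PowerSeries.coeff i P)

theorem qdL_sub (q : R) (f : ℤ → R) (n : ℤ) (k : ℕ) (P Q : PowerSeries R) :
    qdL q f n k (P - Q) = qdL q f n k P - qdL q f n k Q := by
  simp [qdL, mul_sub]

theorem qdL_sum {ι : Type*} (s : Finset ι) (q : R) (f : ℤ → R) (n : ℤ) (k : ℕ)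
    (P : ι → PowerSeries R) :
    qdL q f n k (∑ i ∈ s, P i) = ∑ i ∈ s, qdL q f n k (P i) := by
  simp only [qdL, map_sum, Finset.mul_sum]
  exact Finset.sum_comm

theorem qdL_C (q : R) (f : ℤ → R) (n : ℤ) (k : ℕ) (P : PowerSeries R) (y : R) :
    qdL q f n k (P * PowerSeries.C y) = qdL q f n k P * y := by
  simp [qdL, Finset.sum_mul, mul_assoc]

theorem qdL_X (q : R) (f : ℤ → R) (n : ℤ) (k : ℕ) (P : PowerSeries R) :
    qdL q f n (k+1) (PowerSeries.X * P) = q * qdL q f (n+1) k P := by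
  rw [qdL, Finset.sum_range_succ']
  simp only [PowerSeries.coeff_succ_X_mul, PowerSeries.coeff_zero_X_mul, mul_zero, add_zero, qdL,
    Finset.mul_sum]
  refine Finset.sum_congr rfl fun i _ => ?_
  rw [pow_succ', mul_assoc]; push_cast; rw [show n + (i + 1 : ℤ) = n + 1 + i by ring]

theorem qdL_one (q : R) (f : ℤ → R) (n : ℤ) (k : ℕ) : qdL q f n (k+1) 1 = f n := by
  rw [qdL, Finset.sum_range_succ']
  simp [PowerSeries.coeff_one]

theorem qdL_Xpow (q : R) (f : ℤ → R) (j : ℕ) : ∀ (n : ℤ) (k : ℕ), j < k →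
    qdL q f n k ((-PowerSeries.X) ^ j) = (-q) ^ j * f (n + j) := by
  induction j with
  | zero =>
    intro n k hk
    obtain ⟨k, rfl⟩ : ∃ k', k = k' + 1 := ⟨k - 1, by omega⟩
    simp [qdL_one]
  | succ j ih =>
    intro n k hk
    obtain ⟨k, rfl⟩ : ∃ k', k = k' + 1 := ⟨k - 1, by omega⟩
    rw [pow_succ', neg_mul, ← zero_sub, qdL_sub, qdL_X, ih _ _ (by omega), pow_succ']
    rw [show n + 1 + (j : ℤ) = n + ((j + 1 : ℕ) : ℤ) by push_cast; ring]
    simp [qdL, mul_assoc]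

theorem qdL_Cq (q : R) (hq : ∀ x : R, q * x = x * q) (f : ℤ → R) (n : ℤ) (k j : ℕ)
    (P : PowerSeries R) :
    qdL q f n k ((-PowerSeries.C q) ^ j * P) = (-q) ^ j * qdL q f n k P := by
  have hc : ∀ x : R, x * (-q) ^ j = (-q) ^ j * x := fun x =>
    (((show Commute q x from hq x).symm.neg_right).pow_right j).eq
  have hc' : (-PowerSeries.C q) ^ j = PowerSeries.C ((-q) ^ j) := by simp
  rw [hc']
  simp only [qdL, PowerSeries.coeff_C_mul, Finset.mul_sum]
  refine Finset.sum_congr rfl fun i _ => ?_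
  simp only [← mul_assoc, mul_assoc _ (f _) ((-q) ^ j), hc]

/-- embedding of pairs -/
def qdE1 (α : ℕ) : Fin α × Fin α ↪ Fin (α+1) × Fin (α+1) :=
  (Fin.succEmb α).prodMap (Fin.succEmb α)

/-- embedding of first-row pairs -/
def qdE2 (α : ℕ) : Fin α ↪ Fin (α+1) × Fin (α+1) :=
  ⟨fun b => (0, b.succ), fun a b h => by simpa using h⟩

theorem qdE1_apply (α : ℕ) (p : Fin α × Fin α) : qdE1 α p = (p.1.succ, p.2.succ) := rfl

theorem qdE2_apply (α : ℕ) (b : Fin α) : qdE2 α b = (0, b.succ) := rfl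

/-- join a pair set and a first row -/
def qdJ (α : ℕ) (S : Finset (Fin α × Fin α)) (T : Finset (Fin α)) :
    Finset (Fin (α+1) × Fin (α+1)) := S.map (qdE1 α) ∪ T.map (qdE2 α)

theorem qdJ_disj (α : ℕ) (S : Finset (Fin α × Fin α)) (T : Finset (Fin α)) :
    Disjoint (S.map (qdE1 α)) (T.map (qdE2 α)) := by
  rw [Finset.disjoint_left]
  intro x hx hy
  simp only [Finset.mem_map] at hx hy
  obtain ⟨⟨a, b⟩, _, rfl⟩ := hx
  obtain ⟨c, _, h⟩ := hy
  exact (Fin.succ_ne_zero a) (congrArg Prod.fst h).symm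

theorem qdJ_card (α : ℕ) (S : Finset (Fin α × Fin α)) (T : Finset (Fin α)) :
    (qdJ α S T).card = S.card + T.card := by
  rw [qdJ, Finset.card_union_of_disjoint (qdJ_disj α S T), Finset.card_map, Finset.card_map]

theorem qdJ_mem1 (α : ℕ) (S : Finset (Fin α × Fin α)) (T : Finset (Fin α)) (a b : Fin α) :
    (a.succ, b.succ) ∈ qdJ α S T ↔ (a, b) ∈ S := by
  simp [qdJ, qdE1_apply, qdE2_apply, (Fin.succ_ne_zero _).symm]

theorem qdJ_mem2 (α : ℕ) (S : Finset (Fin α × Fin α)) (T : Finset (Fin α)) (b : Fin α) :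
    (0, b.succ) ∈ qdJ α S T ↔ b ∈ T := by
  simp [qdJ, qdE1_apply, qdE2_apply]

theorem qdJ_mem3 (α : ℕ) (S : Finset (Fin α × Fin α)) (T : Finset (Fin α)) (a : Fin (α+1)) :
    (a, 0) ∉ qdJ α S T := by
  simp [qdJ, qdE1_apply, qdE2_apply]

theorem qdJ_exp_zero (α : ℕ) (S : Finset (Fin α × Fin α)) (T : Finset (Fin α)) :
    qvExp (α+1) (qdJ α S T) 0 = - (T.card : ℤ) := by
  have h1 : ((qdJ α S T).filter fun p => p.2 = 0) = ∅ := by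
    ext ⟨a, b⟩
    simp only [Finset.mem_filter, Finset.notMem_empty, iff_false, not_and]
    rintro h rfl
    exact qdJ_mem3 _ _ _ _ h
  have h2 : ((qdJ α S T).filter fun p => p.1 = 0) = T.map (qdE2 α) := by
    rw [qdJ, Finset.filter_union, Finset.filter_eq_empty_iff.2, Finset.empty_union,
      Finset.filter_true_of_mem]
    · simp [qdE2_apply]
    · simp only [Finset.mem_map, forall_exists_index, and_imp]
      rintro _ x _ rfl
      simp [qdE1_apply]
  rw [qvExp, h1, h2, Finset.card_map]; simp

theorem qdJ_exp_succ (α : ℕ) (S : Finset (Fin α × Fin α)) (T : Finset (Fin α)) (i : Fin α) :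
    qvExp (α+1) (qdJ α S T) i.succ = qvExp α S i + if i ∈ T then 1 else 0 := by
  have h1 : ((qdJ α S T).filter fun p => p.2 = i.succ)
      = qdJ α (S.filter fun p => p.2 = i) (T.filter fun b => b = i) := by
    rw [qdJ, Finset.filter_union, Finset.filter_map, Finset.filter_map]
    simp [qdJ, qdE1_apply, qdE2_apply, Function.comp_def]
  have h2 : ((qdJ α S T).filter fun p => p.1 = i.succ)
      = qdJ α (S.filter fun p => p.1 = i) ∅ := by
    rw [qdJ, Finset.filter_union, Finset.filter_map, Finset.filter_map]
    simp [qdJ, qdE1_apply, qdE2_apply, Function.comp_def, (Fin.succ_ne_zero _).symm]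
  rw [qvExp, h1, h2, qdJ_card, qdJ_card, qvExp, Finset.filter_eq']
  split_ifs <;> simp <;> ring

theorem qd_sum_pairs {A : Type*} [AddCommMonoid A] (α : ℕ)
    (F : Finset (Fin (α+1) × Fin (α+1)) → A) :
    ∑ U ∈ (qvPairs (α+1)).powerset, F U
      = ∑ S ∈ (qvPairs α).powerset, ∑ T : Finset (Fin α), F (qdJ α S T) := by
  rw [← Finset.sum_product']
  symm
  refine Finset.sum_bij' (fun p _ => qdJ α p.1 p.2)
    (fun U _ => (Finset.univ.filter fun p => (p.1.succ, p.2.succ) ∈ U,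
      Finset.univ.filter fun b => (0, b.succ) ∈ U)) ?_ ?_ ?_ ?_ ?_
  · rintro ⟨S, T⟩ h
    simp only [Finset.mem_product, Finset.mem_powerset, Finset.mem_univ, and_true] at h
    rw [Finset.mem_powerset]
    rintro ⟨a, b⟩ hab
    simp only [qvPairs, Finset.mem_filter, Finset.mem_univ, true_and]
    induction b using Fin.cases with
    | zero => exact absurd hab (qdJ_mem3 _ _ _ _)
    | succ b =>
      induction a using Fin.cases with
      | zero => simp
      | succ a =>
        have := h ((qdJ_mem1 _ _ _ _ _).1 hab)
        simpa [qvPairs] using this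
  · intro U hU
    rw [Finset.mem_powerset] at hU
    simp only [Finset.mem_product, Finset.mem_powerset, Finset.mem_univ, and_true]
    rintro ⟨a, b⟩ hab
    simp only [Finset.mem_filter, Finset.mem_univ, true_and] at hab
    have := hU hab
    simpa [qvPairs] using this
  · rintro ⟨S, T⟩ _
    simp [qdJ_mem1, qdJ_mem2]
  · intro U hU
    rw [Finset.mem_powerset] at hU
    ext ⟨a, b⟩
    induction b using Fin.cases with
    | zero =>
      refine iff_of_false (qdJ_mem3 _ _ _ _) fun h => ?_
      have := hU h
      simp [qvPairs] at this
    | succ b =>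
      induction a using Fin.cases with
      | zero => simp [qdJ_mem2]
      | succ a => simp [qdJ_mem1]
  · intros; rfl

theorem qdL_qDet (q : R) (hq : ∀ x : R, q * x = x * q) (f : ℤ → R) (α : ℕ) (n : ℤ) :
    qdL q f n (α+1) (qDet (PowerSeries.C q)
      (fun m => PowerSeries.C (f m) - PowerSeries.X * PowerSeries.C (f (m-1))) α n)
      = qDet q f (α+1) n := by
  rw [qDet, qDet, qd_sum_pairs, qdL_sum]
  refine Finset.sum_congr rfl fun S _ => ?_
  rw [qdL_Cq q hq, qd_prod_expand, qdL_sum, Finset.mul_sum]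
  refine Finset.sum_congr rfl fun T _ => ?_
  have hT : T.card < α + 1 := by
    have := Finset.card_le_univ T
    simp at this; omega
  rw [qdL_C, qdL_Xpow q f _ _ _ hT, qdJ_card, pow_add, List.ofFn_succ, List.prod_cons,
    qdJ_exp_zero, sub_neg_eq_add]
  simp only [mul_assoc]
  congr 4
  apply congrArg
  funext i
  rw [qdJ_exp_succ]
  split_ifs
  · congr 1; ring
  · congr 1; ring

end Comb

section Main
universe u
variable {K R : Type u} [CommRing K] [Ring R] [Algebra K R]

/-- scalars as central power series -/
noncomputable def qdPhi (K R : Type u) [CommRing K] [Ring R] [Algebra K R] :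
    K →+* Subring.center (PowerSeries R) where
  toFun k := ⟨PowerSeries.C (algebraMap K R k), by
    rw [Subring.mem_center_iff]
    intro g
    ext i
    rw [PowerSeries.coeff_mul_C, PowerSeries.coeff_C_mul, Algebra.commutes]⟩
  map_one' := by ext1; simp
  map_mul' a b := by ext1; simp
  map_zero' := by ext1; simp
  map_add' a b := by ext1; simp

/-- the variable as a central element -/
noncomputable def qdX (R : Type u) [Ring R] : Subring.center (PowerSeries R) :=
  ⟨PowerSeries.X, by
    rw [Subring.mem_center_iff]
    intro g
    exact (PowerSeries.commute_X g).eq⟩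

theorem qdX_smul (P : PowerSeries R) : qdX R • P = PowerSeries.X * P := rfl

theorem qdPhi_smul (k : K) (x : R) :
    qdPhi K R k • (PowerSeries.C x : PowerSeries R) = PowerSeries.C (k • x) := by
  rw [Algebra.smul_def k x, map_mul]; rfl

theorem qd_inverse_C (x : R) (hx : IsUnit x) :
    Ring.inverse (PowerSeries.C x : PowerSeries R) = PowerSeries.C (Ring.inverse x) := by
  have h : IsUnit (PowerSeries.C x : PowerSeries R) := hx.map _
  calc Ring.inverse (PowerSeries.C x : PowerSeries R)
      = Ring.inverse (PowerSeries.C x) * (PowerSeries.C x * PowerSeries.C (Ring.inverse x)) := by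
        rw [← map_mul, Ring.mul_inverse_cancel _ hx, map_one, mul_one]
    _ = _ := by rw [← mul_assoc, Ring.inverse_mul_cancel _ h, one_mul]

variable {q : Kˣ} {N : ℕ} {M : ℕ → ℤ → R}

theorem QSys.toPS (H : QSys q N M) :
    QSys (Units.map (qdPhi K R : K →* Subring.center (PowerSeries R)) q) N
      (fun a n => (PowerSeries.C (M a n) : PowerSeries R)) where
  zero n := by rw [H.zero, map_one]
  unit a n h := (H.unit a n h).map _
  com a b m n hab hb h := by
    have := H.com a b m n hab hb h
    rw [QC] at *
    rw [← map_zpow, Units.coe_map, ← map_mul, ← map_mul]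
    rw [this]
    exact (qdPhi_smul _ _).symm
  sys a n h := by
    have := H.sys a n h
    rw [Units.coe_map, ← map_mul, ← map_mul, ← map_mul, ← map_sub, ← this, MonoidHom.coe_coe,
      ← map_pow]
    exact qdPhi_smul _ _

/-- the transform over power series -/
noncomputable abbrev qdD (M : ℕ → ℤ → R) : ℕ → ℤ → PowerSeries R :=
  dar (qdX R) (fun a n => (PowerSeries.C (M a n) : PowerSeries R))

theorem qdD_succ (H : QSys q N M) (a : ℕ) (n : ℤ) (ha : a ≤ N) :
    qdD M (a+1) n = qdD M a n * PowerSeries.C (Ring.inverse (M a n) * M (a+1) n)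
      - PowerSeries.X * (qdD M a (n+1) * PowerSeries.C (Ring.inverse (M a n) * M (a+1) (n-1))) := by
  rw [qdD, dar, qd_inverse_C _ (H.unit a n ha), qdX_smul, ← map_mul, ← map_mul]

theorem qdD_const (H : QSys q N M) : ∀ (a : ℕ) (n : ℤ), a ≤ N →
    PowerSeries.constantCoeff (qdD M a n) = M a n := by
  intro a
  induction a with
  | zero => intro n _; rw [H.zero]; simp [qdD, dar]
  | succ a ih =>
    intro n ha
    rw [qdD_succ H a n (by omega), map_sub, RingHom.map_mul _ (qdD M a n),
      RingHom.map_mul _ PowerSeries.X, ih n (by omega),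
      PowerSeries.constantCoeff_C, PowerSeries.constantCoeff_X, zero_mul, sub_zero, ← mul_assoc,
      Ring.mul_inverse_cancel _ (H.unit a n (by omega)), one_mul]

theorem qdL_dar (H : QSys q N M) : ∀ (a : ℕ) (k : ℕ) (n : ℤ), a + 1 ≤ N → a + 1 ≤ k →
    qdL (algebraMap K R q) (M 1) n k (qdD M a n) = M (a+1) n := by
  intro a
  induction a with
  | zero =>
    intro k n _ hk
    obtain ⟨k, rfl⟩ : ∃ k', k = k' + 1 := ⟨k - 1, by omega⟩
    exact qdL_one _ _ _ _
  | succ a ih =>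
    intro k n ha hk
    obtain ⟨k, rfl⟩ : ∃ k', k = k' + 1 := ⟨k - 1, by omega⟩
    rw [qdD_succ H a n (by omega), qdL_sub, qdL_C, qdL_X, qdL_C, ih _ _ (by omega) (by omega),
      ih _ _ (by omega) (by omega), ← Algebra.smul_def]
    have hu := H.unit a n (by omega)
    obtain ⟨w1, w2, w3, w4, w5, w6⟩ := H.words a n (by omega)
    have i1 := Ring.inverse_mul_cancel _ hu
    rw [← sub_eq_zero]
    apply qd_cancel hu
    have e1 : Ring.inverse (M a n) * (M (a+1) n * M a n) = M (a+1) n := by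
      rw [w1, ← mul_assoc, i1, one_mul]
    have e2 : Ring.inverse (M a n) * (M (a+1) (n-1) * M a n) = (q : K) ^ a • M (a+1) (n-1) := by
      rw [w2, mul_smul_comm, ← mul_assoc, i1, one_mul]
    have s := H.sys a n (by omega)
    have f1 := congrArg (M (a+1) n * ·) e1
    have f2 := congrArg (M (a+1) (n+1) * ·) e2
    rw [pow_succ'] at s
    simp only [mul_sub, sub_mul, smul_mul_assoc, mul_smul_comm, smul_sub, mul_assoc] at *
    linear_combination (norm := module) f1 - (q : K) • f2 - s

theorem qd_main (N : ℕ) : ∀ {K R : Type u} [CommRing K] [Ring R] [Algebra K R] (q : Kˣ)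
    (M : ℕ → ℤ → R), QSys q N M → ∀ (a : ℕ) (n : ℤ), a ≤ N →
      M a n = qDet (algebraMap K R q) (M 1) a n := by
  induction N with
  | zero =>
    intro K R _ _ _ q M H a n ha
    obtain rfl : a = 0 := by omega
    rw [H.zero]
    rw [qDet, show qvPairs 0 = ∅ from rfl]
    simp
  | succ N ih =>
    intro K R _ _ _ q M H a n ha
    rcases a with _ | a
    · rw [H.zero]
      rw [qDet, show qvPairs 0 = ∅ from rfl]
      simp
    have D := dar_sys H.toPS (qdX R) (fun a n ha =>
      PowerSeries.isUnit_iff_constantCoeff.2 (by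
        have := qdD_const H a n (by omega)
        rw [qdD] at this
        rw [this]
        exact H.unit a n (by omega)))
    have e := ih _ _ D a n (by omega)
    have e1 : dar (qdX R) (fun a n => (PowerSeries.C (M a n) : PowerSeries R)) 1
        = fun m => PowerSeries.C (M 1 m) - PowerSeries.X * PowerSeries.C (M 1 (m-1)) := by
      funext m
      have := qdD_succ H 0 m (by omega)
      rw [qdD] at this
      rw [this]
      simp [dar, H.zero]
    rw [e1] at e
    rw [← qdL_dar H a (a+1) n (by omega) le_rfl, qdD, e,
      ← qdL_qDet (algebraMap K R q) (Algebra.commutes _)]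
    rfl

end Main

theorem quantum_Q_determinant_formula
    {R : Type*} [Ring R] (q A Δ : Rˣ)
    (hq : ∀ x : R, (q : R) * x = x * (q : R))
    (r : ℕ) (hr : 1 ≤ r)
    (M Mi : ℕ → ℤ → R)
    (hM0 : ∀ n : ℤ, M 0 n = 1)
    (hMtop : ∀ n : ℤ, M (r + 2) n = 0)
    (hMiL : ∀ (α : ℕ) (n : ℤ), α ≤ r + 1 → M α n * Mi α n = 1)
    (hMiR : ∀ (α : ℕ) (n : ℤ), α ≤ r + 1 → Mi α n * M α n = 1)
    (hMsys : ∀ (α : ℕ) (n : ℤ), 1 ≤ α → α ≤ r + 1 →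
      (q : R) ^ α * M α (n + 1) * M α (n - 1) = M α n ^ 2 - M (α + 1) n * M (α - 1) n)
    (hcom : ∀ (α β ε : ℕ) (n : ℤ), ε ≤ 1 → α ≤ r + 1 → β ≤ r + 1 →
      M α n * M β (n + (ε : ℤ)) = (q : R) ^ (ε * min α β) * M β (n + (ε : ℤ)) * M α n)
    (hAΔ : ∀ n : ℤ, M (r + 1) n = ((A ^ n : Rˣ) : R) * (Δ : R))
    (hΔM : ∀ (α : ℕ) (n : ℤ), 1 ≤ α → α ≤ r + 1 →
      (Δ : R) * M α n = ((q ^ ((α : ℤ) * n) : Rˣ) : R) * M α n * (Δ : R))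
    (hAM : ∀ (α : ℕ) (n : ℤ), 1 ≤ α → α ≤ r + 1 →
      (A : R) * M α n = ((q ^ (-(α : ℤ)) : Rˣ) : R) * M α n * (A : R))
    (hΔA : (Δ : R) * (A : R) = (q : R) ^ (r + 1) * (A : R) * (Δ : R))
    (hext : ∀ (α β : ℕ) (n p : ℤ), α ≤ r + 1 → β ≤ r + 1 →
      |p| ≤ |(β : ℤ) - (α : ℤ)| + 1 →
      M α n * M β (n + p) = ((q ^ (p * ((min α β : ℕ) : ℤ)) : Rˣ) : R) * M β (n + p) * M α n) :
    ∀ (α : ℕ) (n : ℤ), 1 ≤ α → α ≤ r + 1 →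
      M α n = qDet (q : R) (M 1) α n := by
  have hmem : (q : R) ∈ Subring.center R := Subring.mem_center_iff.2 fun g => (hq g).symm
  have hmem' : ((q⁻¹ : Rˣ) : R) ∈ Subring.center R := Subring.mem_center_iff.2 fun g => by
    have : Commute (q : R) g := hq g
    exact (this.units_inv_left).eq.symm
  let Q : (Subring.center R)ˣ := ⟨⟨q, hmem⟩, ⟨((q⁻¹ : Rˣ) : R), hmem'⟩,
    Subtype.ext (by simp), Subtype.ext (by simp)⟩
  have hmap : Units.map ((Subring.center R).subtype : Subring.center R →* R) Q = q := by
    ext; rfl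
  have hz : ∀ (c : ℤ) (x : R), ((Q ^ c : (Subring.center R)ˣ) : Subring.center R) • x
      = ((q ^ c : Rˣ) : R) * x := by
    intro c x
    rw [← hmap, ← map_zpow]; rfl
  have H : QSys Q (r + 1) M :=
    { zero := hM0
      unit := fun a n ha => ⟨⟨M a n, Mi a n, hMiL a n ha, hMiR a n ha⟩, rfl⟩
      com := by
        intro a b m n hab hb h
        have := hext a b m (n - m) (by omega) hb (by have := abs_nonneg ((b : ℤ) - a); omega)
        rw [add_sub_cancel, min_eq_left hab] at this
        rw [QC, hz, this, mul_assoc]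
      sys := by
        intro a n ha
        have := hMsys (a + 1) n (by omega) (by omega)
        rw [pow_two, Nat.add_sub_cancel] at this
        rw [← this, mul_assoc]
        rfl }
  intro α n _ hα
  exact qd_main (r + 1) Q M H α n hα
end

section
/- Left M-system: under these hypotheses, q^{−α}·M_{α,n-1}·M_{α,n+1} = M_{α,n}² − q^{−1}·M_{α+1,n}·M_{α-1,n} for all 1 ≤ α ≤ r+1 and n ∈ ℤ. -/
theorem left_aux {R : Type*} [Ring R] (q c d : Rˣ) (X Xi Y Z P Q : R)
    (hc : ∀ x : R, (c : R) * x = x * (c : R))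
    (hd : ∀ x : R, (d : R) * x = x * (d : R))
    (hdq : d = q * c) (hX : Xi * X = 1)
    (h : (d : R) * X * Y = Z ^ 2 - P * Q)
    (hZ : Z * X = d * X * Z) (hP : P * X = d * X * P) (hQ : Q * X = c * X * Q) :
    ((d⁻¹ : Rˣ) : R) * Y * X = Z ^ 2 - ((q⁻¹ : Rˣ) : R) * P * Q := by
  have hZZ : Z ^ 2 * X = d * X * (d * Z ^ 2) := by
    calc Z ^ 2 * X = Z * (Z * X) := by noncomm_ring
      _ = (Z * d) * X * Z := by rw [hZ]; noncomm_ring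
      _ = d * (Z * X) * Z := by rw [← hd]; noncomm_ring
      _ = d * (d * X) * Z * Z := by rw [hZ]; noncomm_ring
      _ = d * X * (d * Z ^ 2) := by rw [hd (d * X)]; noncomm_ring
  have hPQ : P * Q * X = d * X * (c * (P * Q)) := by
    calc P * Q * X = P * (Q * X) := by noncomm_ring
      _ = (P * c) * X * Q := by rw [hQ]; noncomm_ring
      _ = c * (P * X) * Q := by rw [← hc]; noncomm_ring
      _ = (c * (d * X)) * P * Q := by rw [hP]; noncomm_ring
      _ = d * X * (c * (P * Q)) := by rw [hc (d * X)]; noncomm_ring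
  have h1 : (d : R) * (X * (Y * X)) = d * (X * (d * Z ^ 2 - c * (P * Q))) := by
    calc (d : R) * (X * (Y * X)) = (d * X * Y) * X := by noncomm_ring
      _ = Z ^ 2 * X - P * Q * X := by rw [h]; noncomm_ring
      _ = _ := by rw [hZZ, hPQ]; noncomm_ring
  have h2 := (Units.mul_right_inj d).1 h1
  have h3 : Y * X = d * Z ^ 2 - c * (P * Q) := by
    have := congrArg (fun t => Xi * t) h2
    simpa only [← mul_assoc, hX, one_mul] using this
  have h4 : ((d⁻¹ : Rˣ) : R) * c = ((q⁻¹ : Rˣ) : R) := by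
    rw [← Units.val_mul]; congr 1
    have hcd : c * d = d * c := Units.ext (by simpa using hc d)
    have : q = d * c⁻¹ := by rw [hdq]; group
    rw [this, mul_inv_rev, inv_inv, eq_mul_inv_iff_mul_eq, mul_assoc, hcd]; group
  rw [mul_assoc, h3, mul_sub, Units.inv_mul_cancel_left, ← mul_assoc, h4, mul_assoc _ P Q]

theorem quantum_Q_left_M_system
    {R : Type*} [Ring R] (q A Δ : Rˣ)
    (hq : ∀ x : R, (q : R) * x = x * (q : R))
    (r : ℕ) (hr : 1 ≤ r)
    (M Mi : ℕ → ℤ → R)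
    (hM0 : ∀ n : ℤ, M 0 n = 1)
    (hMtop : ∀ n : ℤ, M (r + 2) n = 0)
    (hMiL : ∀ (α : ℕ) (n : ℤ), α ≤ r + 1 → M α n * Mi α n = 1)
    (hMiR : ∀ (α : ℕ) (n : ℤ), α ≤ r + 1 → Mi α n * M α n = 1)
    (hMsys : ∀ (α : ℕ) (n : ℤ), 1 ≤ α → α ≤ r + 1 →
      (q : R) ^ α * M α (n + 1) * M α (n - 1) = M α n ^ 2 - M (α + 1) n * M (α - 1) n)
    (hcom : ∀ (α β ε : ℕ) (n : ℤ), ε ≤ 1 → α ≤ r + 1 → β ≤ r + 1 →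
      M α n * M β (n + (ε : ℤ)) = (q : R) ^ (ε * min α β) * M β (n + (ε : ℤ)) * M α n)
    (hAΔ : ∀ n : ℤ, M (r + 1) n = ((A ^ n : Rˣ) : R) * (Δ : R))
    (hΔM : ∀ (α : ℕ) (n : ℤ), 1 ≤ α → α ≤ r + 1 →
      (Δ : R) * M α n = ((q ^ ((α : ℤ) * n) : Rˣ) : R) * M α n * (Δ : R))
    (hAM : ∀ (α : ℕ) (n : ℤ), 1 ≤ α → α ≤ r + 1 →
      (A : R) * M α n = ((q ^ (-(α : ℤ)) : Rˣ) : R) * M α n * (A : R))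
    (hΔA : (Δ : R) * (A : R) = (q : R) ^ (r + 1) * (A : R) * (Δ : R)) :
    ∀ (α : ℕ) (n : ℤ), 1 ≤ α → α ≤ r + 1 →
      ((q ^ (-(α : ℤ)) : Rˣ) : R) * M α (n - 1) * M α (n + 1)
        = M α n ^ 2 - ((q⁻¹ : Rˣ) : R) * M (α + 1) n * M (α - 1) n := by
  intro α n h1 h2
  obtain ⟨k, rfl⟩ : ∃ k, α = k + 1 := ⟨α - 1, by omega⟩
  have hcen : ∀ (m : ℕ) (x : R), ((q ^ m : Rˣ) : R) * x = x * ((q ^ m : Rˣ) : R) := by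
    intro m x
    rw [Units.val_pow_eq_pow_val]
    exact (Commute.pow_left (hq x) m)
  have e : q ^ (-((k + 1 : ℕ) : ℤ)) = (q ^ (k + 1))⁻¹ := by
    rw [zpow_neg, zpow_natCast]
  rw [e]
  have hs := hMsys (k + 1) n h1 h2
  have hZ := hcom (k + 1) (k + 1) 1 n le_rfl h2 h2
  have hQ := hcom k (k + 1) 1 n le_rfl (by omega) h2
  simp only [Nat.cast_one, one_mul, min_self] at hZ
  rw [one_mul, min_eq_left (Nat.le_succ k), Nat.cast_one] at hQ
  have hP : M (k + 1 + 1) n * M (k + 1) (n + 1)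
      = (q : R) ^ (k + 1) * M (k + 1) (n + 1) * M (k + 1 + 1) n := by
    rcases Nat.lt_or_ge k r with hk | hk
    · have := hcom (k + 1 + 1) (k + 1) 1 n le_rfl (by omega) h2
      rwa [one_mul, min_eq_right (Nat.le_succ (k + 1)), Nat.cast_one] at this
    · obtain rfl : k = r := by omega
      rw [show k + 1 + 1 = k + 2 from rfl, hMtop]; simp
  exact left_aux q (q ^ k) (q ^ (k + 1)) _ (Mi (k + 1) (n + 1)) _ _ _ _ (hcen k) (hcen (k + 1))
    (pow_succ' q k) (hMiR _ _ h2) (by simpa using hs) (by simpa using hZ)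
    (by simpa using hP) (by simpa using hQ)
end

section
/- Zipper identity (coefficient form of the Miura factor exchange): under these hypotheses, for all 1 ≤ α ≤ r and n ∈ ℤ, ξ_{α+1,n}^{−1}·(ξ_{α,n} − ξ_{α,n-1}) = (ξ_{α,n}^{−1} − ξ_{α,n+1}^{−1})·ξ_{α-1,n}, which is the identity of the coefficients of D in the operator equation (D − x_{α+1,n})(D − ξ_{α,n}^{−1}ξ_{α-1,n-1}) = (D − ξ_{α+1,n}^{−1}ξ_{α,n-1})(D − x_{α,n-1}). -/
/-- ξ_{α,n} := M_{α,n} · M_{α,n+1}⁻¹ -/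
def xiv {R : Type*} [Ring R] (M Mi : ℕ → ℤ → R) (α : ℕ) (n : ℤ) : R :=
  M α n * Mi α (n + 1)

/-- ξ_{α,n}⁻¹ = M_{α,n+1} · M_{α,n}⁻¹ -/
def xivInv {R : Type*} [Ring R] (M Mi : ℕ → ℤ → R) (α : ℕ) (n : ℤ) : R :=
  M α (n + 1) * Mi α n

/-- x_{α,n} := ξ_{α,n}⁻¹ · ξ_{α-1,n} -/
def xv {R : Type*} [Ring R] (M Mi : ℕ → ℤ → R) (α : ℕ) (n : ℤ) : R :=
  xivInv M Mi α n * xiv M Mi (α - 1) n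

theorem zip_swap {G : Type*} [Group G] {Q u v : G} (hQ : ∀ x, Q * x = x * Q)
    (h : u * v = Q * v * u) : v⁻¹ * u = Q * (u * v⁻¹) := by
  rw [inv_mul_eq_iff_eq_mul, ← mul_assoc v, ← hQ v, ← mul_assoc, eq_mul_inv_iff_mul_eq]
  exact h

theorem zip_core {R : Type*} [Ring R] (Q P a a1 b b1 c c1 am a2 : Rˣ)
    (hQ : ∀ x, Q * x = x * Q) (hP : ∀ x, P * x = x * P)
    (haa : a * a1 = Q * a1 * a) (hba : b * a1 = Q * a1 * b)
    (hac : a * c1 = P * c1 * a) (hcc : c * c1 = P * c1 * c)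
    (h1 : a * c = c * a) (h2 : a1 * c1 = c1 * a1)
    (s1 : (Q : R) * a1 * am = (a : R) ^ 2 - b * c)
    (s2 : (Q : R) * a2 * a = (a1 : R) ^ 2 - b1 * c1) :
    (b1 : R) * ↑b⁻¹ * (a * ↑a1⁻¹ - am * ↑a⁻¹) =
      (a1 * ↑a⁻¹ - a2 * ↑a1⁻¹) * (c * ↑c1⁻¹) := by
  have e1 := zip_swap hQ haa
  have e2 := zip_swap hQ hba
  have e3 := zip_swap hP hac
  have e4 := zip_swap hP hcc
  have k1 : (am : R) = ↑(Q⁻¹ * a1⁻¹ * a * a) - ↑(Q⁻¹ * a1⁻¹ * b * c) := by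
    have : (am : R) = ↑(Q * a1)⁻¹ * (Q * a1 * am) := by
      rw [← Units.val_mul Q a1, Units.inv_mul_cancel_left]
    rw [this, s1, hQ a1, mul_inv_rev, mul_sub]
    push_cast
    simp only [sq, mul_assoc]
  have k2 : (a2 : R) = ↑(Q⁻¹ * a1 * a1 * a⁻¹) - ↑(Q⁻¹ * b1 * c1 * a⁻¹) := by
    have : (a2 : R) = ↑Q⁻¹ * (Q * a2 * a) * ↑a⁻¹ := by
      simp [mul_assoc]
    rw [this, s2]
    push_cast
    simp only [sq, mul_assoc, mul_sub, sub_mul]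
  have d1 : (a : R) * ↑a1⁻¹ - am * ↑a⁻¹ = ↑(b * a1⁻¹ * c * a⁻¹) := by
    have g1 : Q⁻¹ * a1⁻¹ * a * a * a⁻¹ = a * a1⁻¹ := by
      rw [mul_inv_cancel_right, mul_assoc, e1, inv_mul_cancel_left]
    have g2 : Q⁻¹ * a1⁻¹ * b * c * a⁻¹ = b * a1⁻¹ * c * a⁻¹ := by
      rw [mul_assoc Q⁻¹, e2, inv_mul_cancel_left]
    rw [k1, sub_mul, ← Units.val_mul _ a⁻¹, ← Units.val_mul _ a⁻¹, g1, g2, Units.val_mul a]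
    abel
  have e5 : a⁻¹ * a1⁻¹ = Q * (a1⁻¹ * a⁻¹) := by
    rw [← mul_inv_rev, ← mul_inv_rev, haa, mul_assoc Q, mul_inv_rev Q, ← mul_assoc, hQ, mul_inv_cancel_right]
  have hQ' : ∀ x, Q⁻¹ * x = x * Q⁻¹ := fun x => by
    rw [inv_mul_eq_iff_eq_mul, ← mul_assoc, hQ, mul_inv_cancel_right]
  have g0 : ∀ x, Q⁻¹ * x * a⁻¹ * a1⁻¹ = x * (a1⁻¹ * a⁻¹) := fun x => by
    rw [mul_assoc, e5, hQ', mul_assoc, inv_mul_cancel_left]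
  have d2 : (a1 : R) * ↑a⁻¹ - a2 * ↑a1⁻¹ = ↑(b1 * c1 * (a1⁻¹ * a⁻¹)) := by
    have g1 : Q⁻¹ * a1 * a1 * a⁻¹ * a1⁻¹ = a1 * a⁻¹ := by
      rw [mul_assoc Q⁻¹, g0]; group
    have g2 : Q⁻¹ * b1 * c1 * a⁻¹ * a1⁻¹ = b1 * c1 * (a1⁻¹ * a⁻¹) := by
      rw [mul_assoc Q⁻¹, g0]
    rw [k2, sub_mul, ← Units.val_mul _ a1⁻¹, ← Units.val_mul _ a1⁻¹, g1, g2, Units.val_mul a1]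
    abel
  rw [d1, d2]
  simp only [← Units.val_mul]
  congr 1
  have f1 : a⁻¹ * c = c * a⁻¹ := by
    rw [inv_mul_eq_iff_eq_mul, ← mul_assoc, h1, mul_inv_cancel_right]
  have f2 : c1 * a1⁻¹ = a1⁻¹ * c1 := by
    rw [eq_inv_mul_iff_mul_eq, ← mul_assoc, h2, mul_inv_cancel_right]
  -- c * a⁻¹ commutes with c1
  have f3 : c1 * (c * a⁻¹) = c * a⁻¹ * c1 := by
    have hh : c * a⁻¹ * c1 * a = c1 * c * a⁻¹ * a := by
      rw [inv_mul_cancel_right, ← f1]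
      have : c1 * a = P⁻¹ * (a * c1) := by rw [hac]; group
      rw [mul_assoc, this, ← mul_assoc (a⁻¹ * c), mul_assoc a⁻¹ c, mul_assoc, mul_assoc c]
      have hP' : ∀ x, P⁻¹ * x = x * P⁻¹ := fun x => by
        rw [inv_mul_eq_iff_eq_mul, ← mul_assoc, hP, mul_inv_cancel_right]
      rw [hP', mul_assoc a c1, ← mul_assoc c, ← h1, mul_assoc a c, inv_mul_cancel_left,
        ← mul_assoc, hcc, ← hP', mul_assoc P, inv_mul_cancel_left]
    rw [← mul_assoc]; exact (mul_right_cancel hh).symm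
  calc b1 * b⁻¹ * (b * a1⁻¹ * c * a⁻¹) = b1 * a1⁻¹ * (c * a⁻¹ * c1) * c1⁻¹ := by group
    _ = b1 * (a1⁻¹ * c1) * (c * a⁻¹) * c1⁻¹ := by rw [← f3]; group
    _ = b1 * (c1 * a1⁻¹) * (a⁻¹ * c) * c1⁻¹ := by rw [f1, f2]
    _ = _ := by group

theorem quantum_Q_zipper_identity
    {R : Type*} [Ring R] (q A Δ : Rˣ)
    (hq : ∀ x : R, (q : R) * x = x * (q : R))
    (r : ℕ) (hr : 1 ≤ r)
    (M Mi : ℕ → ℤ → R)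
    (hM0 : ∀ n : ℤ, M 0 n = 1)
    (hMtop : ∀ n : ℤ, M (r + 2) n = 0)
    (hMiL : ∀ (α : ℕ) (n : ℤ), α ≤ r + 1 → M α n * Mi α n = 1)
    (hMiR : ∀ (α : ℕ) (n : ℤ), α ≤ r + 1 → Mi α n * M α n = 1)
    (hMsys : ∀ (α : ℕ) (n : ℤ), 1 ≤ α → α ≤ r + 1 →
      (q : R) ^ α * M α (n + 1) * M α (n - 1) = M α n ^ 2 - M (α + 1) n * M (α - 1) n)
    (hcom : ∀ (α β ε : ℕ) (n : ℤ), ε ≤ 1 → α ≤ r + 1 → β ≤ r + 1 →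
      M α n * M β (n + (ε : ℤ)) = (q : R) ^ (ε * min α β) * M β (n + (ε : ℤ)) * M α n)
    (hAΔ : ∀ n : ℤ, M (r + 1) n = ((A ^ n : Rˣ) : R) * (Δ : R))
    (hΔM : ∀ (α : ℕ) (n : ℤ), 1 ≤ α → α ≤ r + 1 →
      (Δ : R) * M α n = ((q ^ ((α : ℤ) * n) : Rˣ) : R) * M α n * (Δ : R))
    (hAM : ∀ (α : ℕ) (n : ℤ), 1 ≤ α → α ≤ r + 1 →
      (A : R) * M α n = ((q ^ (-(α : ℤ)) : Rˣ) : R) * M α n * (A : R))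
    (hΔA : (Δ : R) * (A : R) = (q : R) ^ (r + 1) * (A : R) * (Δ : R)) :
    ∀ (α : ℕ) (n : ℤ), 1 ≤ α → α ≤ r →
      xivInv M Mi (α + 1) n * (xiv M Mi α n - xiv M Mi α (n - 1))
        = (xivInv M Mi α n - xivInv M Mi α (n + 1)) * xiv M Mi (α - 1) n := by
  intro α n h1 h2
  obtain ⟨k, rfl⟩ : ∃ k, α = k + 1 := ⟨α - 1, by omega⟩
  let U : ∀ (β : ℕ) (m : ℤ), β ≤ r + 1 → Rˣ := fun β m h => ⟨M β m, Mi β m, hMiL β m h, hMiR β m h⟩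
  have hc : ∀ x : Rˣ, q * x = x * q := fun x => Units.ext (hq x)
  have hcp : ∀ (j : ℕ) (x : Rˣ), q ^ j * x = x * q ^ j := fun j x =>
    (show Commute q x from hc x).pow_left j
  have c0 : ∀ β γ m, β ≤ r + 1 → γ ≤ r + 1 → M β m * M γ m = M γ m * M β m := by
    intro β γ m hβ hγ
    simpa using hcom β γ 0 m (by omega) hβ hγ
  have c1 : ∀ β γ m, β ≤ r + 1 → γ ≤ r + 1 →
      M β m * M γ (m + 1) = (q : R) ^ (min β γ) * M γ (m + 1) * M β m := by
    intro β γ m hβ hγ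
    simpa using hcom β γ 1 m (by omega) hβ hγ
  have s1 := hMsys (k + 1) n (by omega) (by omega)
  have s2 := hMsys (k + 1) (n + 1) (by omega) (by omega)
  simp only [Nat.add_sub_cancel, add_sub_cancel_right] at s1 s2
  have key := zip_core (q ^ (k + 1)) (q ^ k) (U (k + 1) n (by omega)) (U (k + 1) (n + 1) (by omega))
    (U (k + 2) n (by omega)) (U (k + 2) (n + 1) (by omega)) (U k n (by omega))
    (U k (n + 1) (by omega)) (U (k + 1) (n - 1) (by omega)) (U (k + 1) (n + 1 + 1) (by omega))
    (hcp _) (hcp _)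
    (Units.ext (by simpa [U] using c1 (k + 1) (k + 1) n (by omega) (by omega)))
    (Units.ext (by simpa [U] using c1 (k + 2) (k + 1) n (by omega) (by omega)))
    (Units.ext (by simpa [U] using c1 (k + 1) k n (by omega) (by omega)))
    (Units.ext (by simpa [U] using c1 k k n (by omega) (by omega)))
    (Units.ext (by simpa [U] using c0 (k + 1) k n (by omega) (by omega)))
    (Units.ext (by simpa [U] using c0 (k + 1) k (n + 1) (by omega) (by omega)))
    (by simpa [U] using s1) (by simpa [U] using s2)
  simp only [xiv, xivInv, Nat.add_sub_cancel, sub_add_cancel]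
  exact key
end
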